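/- Solvability of the semilinear Dirichlet problem (intermediate claim in the proof of Theorem 3.1, classical-solution rendering): Let B ⊂ ℝ^d be an open Euclidean ball, let G be the semilinear operator defined in the context, and assume in addition that r(x,u) ≤ 0 for all x ∈ B̄, u ∈ U. Then for every Lipschitz function f : B̄ → ℝ there exists a unique φ that is C² on B and continuous on B̄ satisfying Gφ = f in B and φ = 0 on ∂B. -/

import Mathlib

open Metric Set MeasureTheory

noncomputable def sdv {d : ℕ} (φ : EuclideanSpace ℝ (Fin d) → ℝ)
    (x : EuclideanSpace ℝ (Fin d)) (i j : Fin d) : ℝ :=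
  fderiv ℝ (fun y => fderiv ℝ φ y (EuclideanSpace.single j 1)) x (EuclideanSpace.single i 1)

/-- The semilinear operator
`Gφ(x) = Σ_{i,j} a_{ij}(x) ∂²φ/∂x_i∂x_j(x) + inf_{u∈U} (b(x,u)·∇φ(x) + r(x,u) φ(x))`. -/
noncomputable def Gop {d : ℕ} {U : Type*}
    (a : EuclideanSpace ℝ (Fin d) → Matrix (Fin d) (Fin d) ℝ)
    (b : EuclideanSpace ℝ (Fin d) → U → EuclideanSpace ℝ (Fin d))
    (r : EuclideanSpace ℝ (Fin d) → U → ℝ)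
    (φ : EuclideanSpace ℝ (Fin d) → ℝ) (x : EuclideanSpace ℝ (Fin d)) : ℝ :=
  (∑ i, ∑ j, a x i j * sdv φ x i j)
    + ⨅ u : U, ((inner ℝ (b x u) (gradient φ x) : ℝ) + r x u * φ x)

/-- The quadratic form `zᵀ A z`. -/
noncomputable def quadForm {d : ℕ}
    (A : Matrix (Fin d) (Fin d) ℝ) (z : EuclideanSpace ℝ (Fin d)) : ℝ :=
  ∑ i, ∑ j, z i * A i j * z j

namespace SL

abbrev EE (d : ℕ) := EuclideanSpace ℝ (Fin d)
abbrev QQ (d : ℕ) := EE d →L[ℝ] EE d →L[ℝ] ℝ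

structure Jet (d : ℕ) where
  u : EE d → ℝ
  p : EE d → (EE d →L[ℝ] ℝ)
  q : EE d → QQ d
  hu : ∀ x, HasFDerivAt u (p x) x
  hp : ∀ x, HasFDerivAt p (q x) x

variable {d : ℕ}

noncomputable def LL (A : Matrix (Fin d) (Fin d) ℝ) (Q : QQ d) : ℝ :=
  ∑ i, ∑ j, A i j * Q (EuclideanSpace.single i 1) (EuclideanSpace.single j 1)

theorem Jet.symm (J : Jet d) (x v w : EE d) : J.q x v w = J.q x w v :=
  second_derivative_symmetric J.hu (J.hp x) v w

theorem Jet.cont (J : Jet d) : Continuous J.u :=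
  continuous_iff_continuousAt.2 fun x => (J.hu x).continuousAt

theorem taylor_p (J : Jet d) {x : EE d} {h w : ℝ}
    (hw : ∀ y, ‖y - x‖ ≤ h → ‖J.q y - J.q x‖ ≤ w) {y : EE d} (hy : ‖y - x‖ ≤ h) :
    ‖J.p y - J.p x - J.q x (y - x)‖ ≤ w * ‖y - x‖ := by
  have hh : 0 ≤ h := (norm_nonneg _).trans hy
  refine Convex.norm_image_sub_le_of_norm_hasFDerivWithin_le' (𝕜 := ℝ) (s := closedBall x h)
    (fun z _ => (J.hp z).hasFDerivWithinAt) (fun z hz => hw z ?_) (convex_closedBall x h)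
    (mem_closedBall_self hh) ?_
  · simpa [mem_closedBall, dist_eq_norm] using hz
  · simpa [mem_closedBall, dist_eq_norm] using hy

theorem hasFDerivAt_quad (Q : QQ d) (hs : ∀ v w, Q v w = Q w v) (x y : EE d) :
    HasFDerivAt (fun y => (1 / 2 : ℝ) * Q (y - x) (y - x)) (Q (y - x)) y := by
  have h1 : HasFDerivAt (fun y : EE d => y - x) (ContinuousLinearMap.id ℝ (EE d)) y :=
    (hasFDerivAt_id y).sub_const x
  have h2 : HasFDerivAt (fun y : EE d => Q (y - x)) (Q.comp (ContinuousLinearMap.id ℝ (EE d))) y :=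
    Q.hasFDerivAt.comp y h1
  have h3 := (h2.clm_apply h1).const_mul (1 / 2 : ℝ)
  refine h3.congr_fderiv ?_
  ext v
  simp
  rw [hs v y, hs v x]; ring

theorem taylor_u (J : Jet d) {x : EE d} {h w : ℝ}
    (hw : ∀ y, ‖y - x‖ ≤ h → ‖J.q y - J.q x‖ ≤ w) {y : EE d} (hy : ‖y - x‖ ≤ h) :
    |J.u y - J.u x - J.p x (y - x) - 1 / 2 * J.q x (y - x) (y - x)| ≤ w * ‖y - x‖ ^ 2 := by
  have w0 : 0 ≤ w := le_trans (norm_nonneg (J.q y - J.q x)) (hw y hy)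
  have key := Convex.norm_image_sub_le_of_norm_hasFDerivWithin_le' (𝕜 := ℝ)
    (s := closedBall x ‖y - x‖) (x := x) (y := y) (C := w * ‖y - x‖) (φ := J.p x)
    (f := fun z => J.u z - (1 / 2 : ℝ) * J.q x (z - x) (z - x))
    (f' := fun z => J.p z - J.q x (z - x))
    (fun z _ => ((J.hu z).sub (hasFDerivAt_quad (J.q x) (J.symm x) x z)).hasFDerivWithinAt)
    (fun z hz => ?_) (convex_closedBall x _)
    (mem_closedBall_self (norm_nonneg _)) (by simp [mem_closedBall, dist_eq_norm])
  · simp only [sub_self, map_zero, mul_zero, sub_zero, Real.norm_eq_abs] at key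
    calc _ = |J.u y - 1 / 2 * J.q x (y - x) (y - x) - J.u x - J.p x (y - x)| := by ring_nf
      _ ≤ _ := key
      _ = _ := by ring
  · have hz' : ‖z - x‖ ≤ ‖y - x‖ := by simpa [mem_closedBall, dist_eq_norm] using hz
    have := taylor_p J hw (hz'.trans hy)
    calc _ = ‖J.p z - J.p x - J.q x (z - x)‖ := by congr 1; abel
      _ ≤ _ := this
      _ ≤ _ := by gcongr

theorem sym_opNorm_le (Q : QQ d) (hs : ∀ v w, Q v w = Q w v) {S : ℝ} (hS : 0 ≤ S)
    (h : ∀ v, |Q v v| ≤ S * ‖v‖ ^ 2) : ‖Q‖ ≤ S := by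
  have hunit : ∀ v w : EE d, ‖v‖ = 1 → ‖w‖ = 1 → |Q v w| ≤ S := by
    intro v w hv hw
    have e1 : Q v w = 1 / 4 * (Q (v + w) (v + w) - Q (v - w) (v - w)) := by
      simp [hs w v]; ring
    have e2 := parallelogram_law_with_norm ℝ v w
    have a1 := abs_le.1 (h (v + w))
    have a2 := abs_le.1 (h (v - w))
    rw [hv, hw] at e2
    rw [e1, abs_le]
    constructor <;> nlinarith
  refine ContinuousLinearMap.opNorm_le_bound₂ Q hS fun v w => ?_
  rcases eq_or_ne v 0 with rfl | hv
  · simp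
  rcases eq_or_ne w 0 with rfl | hw
  · simp
  have := hunit (‖v‖⁻¹ • v) (‖w‖⁻¹ • w) (by simp [norm_smul, hv]) (by simp [norm_smul, hw])
  have pv := norm_pos_iff.2 hv
  have pw := norm_pos_iff.2 hw
  simp only [map_smul, smul_apply, smul_eq_mul, abs_mul, abs_inv, abs_norm] at this
  rw [Real.norm_eq_abs]
  have e : |Q v w| = ‖v‖ * ‖w‖ * (‖w‖⁻¹ * (‖v‖⁻¹ * |Q v w|)) := by field_simp
  rw [e]
  calc _ ≤ ‖v‖ * ‖w‖ * S := by gcongr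
    _ = _ := by ring

theorem interp_q (J : Jet d) {x : EE d} {h w U : ℝ} (hh : 0 < h)
    (hU : ∀ y, ‖y - x‖ ≤ h → |J.u y| ≤ U)
    (hw : ∀ y, ‖y - x‖ ≤ h → ‖J.q y - J.q x‖ ≤ w) :
    ‖J.q x‖ ≤ 4 * U / h ^ 2 + 2 * w := by
  have U0 : 0 ≤ U := (abs_nonneg _).trans (hU x (by simp [hh.le]))
  have w0 : 0 ≤ w := le_trans (norm_nonneg (J.q x - J.q x)) (hw x (by simp [hh.le]))
  refine sym_opNorm_le _ (J.symm x) (by positivity) fun v => ?_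
  rcases eq_or_ne v 0 with rfl | hv
  · simp
  have pv := norm_pos_iff.2 hv
  set e : EE d := (h / ‖v‖) • v with he
  have ne : ‖e‖ = h := by rw [he, norm_smul]; simp [abs_of_pos hh]; field_simp
  have t1 := taylor_u J hw (y := x + e) (by simp [ne])
  have t2 := taylor_u J hw (y := x - e) (by simp [ne])
  have u1 := abs_le.1 (hU (x + e) (by simp [ne]))
  have u2 := abs_le.1 (hU (x - e) (by simp [ne]))
  have u3 := abs_le.1 (hU x (by simp [hh.le]))
  have e2 : x - e - x = -e := by abel
  rw [add_sub_cancel_left, ne, abs_le] at t1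
  rw [e2, norm_neg, ne, abs_le] at t2
  simp only [map_neg, ContinuousLinearMap.neg_apply, neg_neg] at t2
  have hq : |J.q x e e| ≤ 4 * U + 2 * w * h ^ 2 := by
    rw [abs_le]; constructor <;> linarith
  have hve : J.q x e e = (h / ‖v‖) ^ 2 * J.q x v v := by
    simp [he]; ring
  rw [hve, abs_mul, abs_of_nonneg (by positivity)] at hq
  have : |J.q x v v| = (‖v‖ / h) ^ 2 * ((h / ‖v‖) ^ 2 * |J.q x v v|) := by field_simp
  rw [this]
  calc _ ≤ (‖v‖ / h) ^ 2 * (4 * U + 2 * w * h ^ 2) := by gcongr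
    _ = _ := by field_simp

theorem interp_p (J : Jet d) {x : EE d} {h w U : ℝ} (hh : 0 < h)
    (hU : ∀ y, ‖y - x‖ ≤ h → |J.u y| ≤ U)
    (hw : ∀ y, ‖y - x‖ ≤ h → ‖J.q y - J.q x‖ ≤ w) :
    ‖J.p x‖ ≤ U / h + w * h := by
  have U0 : 0 ≤ U := (abs_nonneg _).trans (hU x (by simp [hh.le]))
  have w0 : 0 ≤ w := le_trans (norm_nonneg (J.q x - J.q x)) (hw x (by simp [hh.le]))
  refine ContinuousLinearMap.opNorm_le_bound _ (by positivity) fun v => ?_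
  rcases eq_or_ne v 0 with rfl | hv
  · simp
  have pv := norm_pos_iff.2 hv
  set e : EE d := (h / ‖v‖) • v with he
  have ne : ‖e‖ = h := by rw [he, norm_smul]; simp [abs_of_pos hh]; field_simp
  have t1 := taylor_u J hw (y := x + e) (by simp [ne])
  have t2 := taylor_u J hw (y := x - e) (by simp [ne])
  have u1 := abs_le.1 (hU (x + e) (by simp [ne]))
  have u2 := abs_le.1 (hU (x - e) (by simp [ne]))
  have e2 : x - e - x = -e := by abel
  rw [add_sub_cancel_left, ne, abs_le] at t1
  rw [e2, norm_neg, ne, abs_le] at t2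
  simp only [map_neg, ContinuousLinearMap.neg_apply, neg_neg] at t2
  have hq : |J.p x e| ≤ U + w * h ^ 2 := by
    rw [abs_le]; constructor <;> linarith
  have hve : J.p x e = (h / ‖v‖) * J.p x v := by simp [he]
  rw [hve, abs_mul, abs_of_nonneg (by positivity)] at hq
  rw [Real.norm_eq_abs]
  have : |J.p x v| = (‖v‖ / h) * ((h / ‖v‖) * |J.p x v|) := by field_simp
  rw [this]
  calc _ ≤ (‖v‖ / h) * (U + w * h ^ 2) := by gcongr
    _ = _ := by field_simp

/-- second order necessary conditions at a local maximum -/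
theorem localmax {u : EE d → ℝ} {p : EE d → (EE d →L[ℝ] ℝ)} {Q : QQ d} {x : EE d}
    (hu : ∀ᶠ y in nhds x, HasFDerivAt u (p y) y) (hp : HasFDerivAt p Q x)
    (hm : IsLocalMax u x) : p x = 0 ∧ ∀ e, Q e e ≤ 0 := by
  have hp0 : p x = 0 := hm.hasFDerivAt_eq_zero hu.self_of_nhds
  refine ⟨hp0, fun e => ?_⟩
  by_contra! hc
  set l : ℝ → EE d := fun t => x + t • e with hl
  have l0 : l 0 = x := by simp [hl]
  have dl : ∀ t, HasDerivAt l e t := fun t => by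
    have := ((hasDerivAt_id t).smul_const e).const_add x
    simp only [one_smul] at this; exact this
  have cl : Filter.Tendsto l (nhds 0) (nhds x) := by
    have := (dl 0).continuousAt.tendsto; rwa [l0] at this
  have hd : ∀ᶠ t in nhds (0 : ℝ), HasDerivAt (u ∘ l) (p (l t) e) t := by
    filter_upwards [cl.eventually hu] with t ht
    exact ht.comp_hasDerivAt t (dl t)
  have hde : deriv (u ∘ l) =ᶠ[nhds 0] fun t => p (l t) e := hd.mono fun t ht => ht.deriv
  have hd2 : HasDerivAt (fun t => p (l t) e) (Q e e) 0 := by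
    have h1 : HasDerivAt (fun t => p (l t)) (Q e) 0 := by
      have hp' : HasFDerivAt p Q (l 0) := by rwa [l0]
      exact hp'.comp_hasDerivAt (0 : ℝ) (dl 0)
    simpa using h1.clm_apply (hasDerivAt_const (0 : ℝ) e)
  have hdd : deriv (deriv (u ∘ l)) 0 = Q e e := by
    rw [hde.deriv_eq]; exact hd2.deriv
  have hmin : IsLocalMin (u ∘ l) 0 := isLocalMin_of_deriv_deriv_pos (by rw [hdd]; exact hc)
    (by rw [hde.self_of_nhds]; simp [l0, hp0]) hd.self_of_nhds.continuousAt
  have hmax : IsLocalMax (u ∘ l) 0 := by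
    have : ∀ᶠ y in nhds x, u y ≤ u x := hm
    filter_upwards [cl.eventually this] with t ht
    simpa [l0] using ht
  have hconst : (u ∘ l) =ᶠ[nhds 0] fun _ => (u ∘ l) 0 := by
    filter_upwards [hmin, hmax] with t h1 h2 using le_antisymm h2 h1
  have : deriv (u ∘ l) =ᶠ[nhds 0] fun _ => 0 := by
    have := hconst.deriv
    simpa using this
  rw [this.deriv_eq] at hdd
  simp at hdd
  linarith

structure EllM (C : ℝ) (A : Matrix (Fin d) (Fin d) ℝ) : Prop where
  symm : A.IsSymm
  lo : ∀ z : EE d, C⁻¹ * ‖z‖ ^ 2 ≤ quadForm A z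
  hi : ∀ z : EE d, quadForm A z ≤ C * ‖z‖ ^ 2

theorem LL_sub (A : Matrix (Fin d) (Fin d) ℝ) (Q Q' : QQ d) : LL A (Q - Q') = LL A Q - LL A Q' := by
  simp [LL, mul_sub, Finset.sum_sub_distrib]

theorem LL_add (A : Matrix (Fin d) (Fin d) ℝ) (Q Q' : QQ d) : LL A (Q + Q') = LL A Q + LL A Q' := by
  simp [LL, mul_add, Finset.sum_add_distrib]

theorem LL_smul (A : Matrix (Fin d) (Fin d) ℝ) (c : ℝ) (Q : QQ d) : LL A (c • Q) = c * LL A Q := by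
  simp [LL, Finset.mul_sum]; congr! 2; ring

theorem LL_nonpos {C : ℝ} (hC : 0 < C) {A : Matrix (Fin d) (Fin d) ℝ} (hA : EllM C A) {Q : QQ d}
    (hQ : ∀ e, Q e e ≤ 0) : LL A Q ≤ 0 := by
  have hps : A.PosSemidef := by
    refine Matrix.PosSemidef.of_dotProduct_mulVec_nonneg ?_ fun x => ?_
    · ext i j; simpa using congrFun (congrFun hA.symm i) j
    · have := (mul_nonneg (inv_nonneg.2 hC.le) (sq_nonneg ‖WithLp.toLp 2 x‖)).trans (hA.lo (WithLp.toLp 2 x))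
      simpa [quadForm, dotProduct, Matrix.mulVec, Finset.mul_sum, mul_assoc] using this
  obtain ⟨B, hB⟩ : ∃ B : Matrix (Fin d) (Fin d) ℝ, A = star B * B := by
    open scoped MatrixOrder in
    exact CStarAlgebra.nonneg_iff_eq_star_mul_self.1 hps.nonneg
  have e : LL A Q = ∑ k, Q (∑ i, B k i • EuclideanSpace.single i 1) (∑ j, B k j • EuclideanSpace.single j 1) := by
    simp only [LL, hB, map_sum, map_smul, sum_apply,
      smul_apply, smul_eq_mul, Matrix.mul_apply, Matrix.star_apply, star_trivial,
      Finset.sum_mul, Finset.mul_sum]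
    calc _ = ∑ i, ∑ k, ∑ j, B k i * B k j * Q (EuclideanSpace.single i 1) (EuclideanSpace.single j 1) :=
          Finset.sum_congr rfl fun i _ => Finset.sum_comm
      _ = ∑ k, ∑ i, ∑ j, B k i * B k j * Q (EuclideanSpace.single i 1) (EuclideanSpace.single j 1) :=
          Finset.sum_comm
      _ = ∑ k, ∑ j, ∑ i, B k i * B k j * Q (EuclideanSpace.single i 1) (EuclideanSpace.single j 1) :=
          Finset.sum_congr rfl fun i _ => Finset.sum_comm
      _ = _ := by congr! 3; ring
  rw [e]
  exact Finset.sum_nonpos fun k _ => hQ _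

theorem EllM.entry {C : ℝ} (hC : 0 < C) {A : Matrix (Fin d) (Fin d) ℝ} (hA : EllM C A) (i j : Fin d) :
    |A i j| ≤ C := by
  have hq : ∀ z : EE d, 0 ≤ quadForm A z := fun z =>
    (mul_nonneg (inv_nonneg.2 hC.le) (sq_nonneg _)).trans (hA.lo z)
  have hd : ∀ k, A k k ≤ C := fun k => by
    have := hA.hi (EuclideanSpace.single k 1)
    simpa [quadForm] using this
  have hs : A j i = A i j := congrFun (congrFun hA.symm i) j
  rcases eq_or_ne i j with rfl | hij
  · have := hq (EuclideanSpace.single i 1)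
    rw [abs_le]
    have h2 : 0 ≤ A i i := by simpa [quadForm] using this
    exact ⟨by linarith, hd i⟩
  have exp : ∀ s : ℝ, quadForm A (EuclideanSpace.single i 1 + s • EuclideanSpace.single j 1)
      = A i i + 2 * s * A i j + s ^ 2 * A j j := by
    intro s
    simp only [quadForm, PiLp.add_apply, PiLp.smul_apply, EuclideanSpace.single_apply, smul_eq_mul,
      add_mul, mul_add, Finset.sum_add_distrib]
    simp [hs]
    ring
  have h1 := hq (EuclideanSpace.single i 1 + (1 : ℝ) • EuclideanSpace.single j 1)
  have h2 := hq (EuclideanSpace.single i 1 + (-1 : ℝ) • EuclideanSpace.single j 1)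
  rw [exp] at h1 h2
  rw [abs_le]
  constructor <;> nlinarith [hd i, hd j]

theorem LL_abs_le {c : ℝ} {A : Matrix (Fin d) (Fin d) ℝ} (hA : ∀ i j, |A i j| ≤ c) (Q : QQ d) :
    |LL A Q| ≤ (d : ℝ) ^ 2 * c * ‖Q‖ := by
  have : ∀ i j, |A i j * Q (EuclideanSpace.single i 1) (EuclideanSpace.single j 1)| ≤ c * ‖Q‖ := by
    intro i j
    rw [abs_mul]
    have h1 := Q.le_opNorm₂ (EuclideanSpace.single i 1) (EuclideanSpace.single j 1)
    simp at h1
    exact mul_le_mul (hA i j) h1 (abs_nonneg _) ((abs_nonneg _).trans (hA i j))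
  calc |LL A Q| ≤ ∑ i, |∑ j, A i j * Q (EuclideanSpace.single i 1) (EuclideanSpace.single j 1)| :=
        Finset.abs_sum_le_sum_abs _ _
    _ ≤ ∑ i : Fin d, ∑ j : Fin d, c * ‖Q‖ := Finset.sum_le_sum fun i _ =>
        (Finset.abs_sum_le_sum_abs _ _).trans (Finset.sum_le_sum fun j _ => this i j)
    _ = _ := by simp; ring

theorem LL_matsub (A B : Matrix (Fin d) (Fin d) ℝ) (Q : QQ d) :
    LL (A - B) Q = LL A Q - LL B Q := by
  simp [LL, sub_mul, Finset.sum_sub_distrib]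

end SL


namespace SL
variable {d : ℕ}

noncomputable instance QQ.i1 : NormedAddCommGroup (QQ d) := inferInstance
noncomputable instance QQ.i2 : NormedSpace ℝ (QQ d) := inferInstance
noncomputable instance QQ.i0 : SeminormedAddGroup (QQ d) := inferInstance
noncomputable instance QQ.i3 : AddCommGroup (QQ d) := inferInstance
noncomputable instance QQ.i4 : AddCommMonoid (QQ d) := inferInstance
noncomputable instance QQ.i5 : AddGroup (QQ d) := inferInstance
noncomputable instance QQ.i6 : AddMonoid (QQ d) := inferInstance
noncomputable instance QQ.i7 : AddZeroClass (QQ d) := inferInstance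
noncomputable instance QQ.i8 : AddCommMagma (QQ d) := inferInstance
noncomputable instance QQ.i9 : Module ℝ (QQ d) := inferInstance
noncomputable instance QQ.i10 : SubtractionMonoid (QQ d) := inferInstance

theorem ball_max {u : EE d → ℝ} {p : EE d → (EE d →L[ℝ] ℝ)} {q : EE d → QQ d} {c x0 : EE d} {ρ : ℝ}
    (hc : ContinuousOn u (closedBall c ρ))
    (hu : ∀ x ∈ ball c ρ, HasFDerivAt u (p x) x) (hp : ∀ x ∈ ball c ρ, HasFDerivAt p (q x) x)
    (hx0 : x0 ∈ ball c ρ) (hb : ∀ x ∈ sphere c ρ, u x < u x0) :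
    ∃ y ∈ ball c ρ, u x0 ≤ u y ∧ p y = 0 ∧ ∀ e, q y e e ≤ 0 := by
  obtain ⟨y, hy, hmax⟩ := (isCompact_closedBall c ρ).exists_isMaxOn
    ⟨x0, ball_subset_closedBall hx0⟩ hc
  have h0 : u x0 ≤ u y := hmax (ball_subset_closedBall hx0)
  have hyb : y ∈ ball c ρ := by
    rcases (mem_closedBall.1 hy).lt_or_eq with h | h
    · exact h
    · exact absurd (hb y h) (not_lt.2 h0)
  have hlm : IsLocalMax u y := by
    filter_upwards [isOpen_ball.mem_nhds hyb] with z hz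
    exact hmax (ball_subset_closedBall hz)
  have := localmax (Filter.eventually_of_mem (isOpen_ball.mem_nhds hyb) hu) (hp y hyb) hlm
  exact ⟨y, hyb, h0, this⟩

theorem Jet.ball_max (J : Jet d) {c x0 : EE d} {ρ : ℝ}
    (hx0 : x0 ∈ ball c ρ) (hb : ∀ x ∈ sphere c ρ, J.u x < J.u x0) :
    ∃ y ∈ ball c ρ, J.u x0 ≤ J.u y ∧ J.p y = 0 ∧ ∀ e, J.q y e e ≤ 0 :=
  SL.ball_max J.cont.continuousOn (fun x _ => J.hu x) (fun x _ => J.hp x) hx0 hb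

/-- linear combination -/
noncomputable def Jet.lin (a : ℝ) (J : Jet d) (b : ℝ) (J' : Jet d) : Jet d where
  u x := a * J.u x + b * J'.u x
  p x := a • J.p x + b • J'.p x
  q x := a • J.q x + b • J'.q x
  hu x := ((J.hu x).const_mul a).add ((J'.hu x).const_mul b)
  hp x := ((J.hp x).const_smul a).add ((J'.hp x).const_smul b)

noncomputable def Jet.sub (J J' : Jet d) : Jet d where
  u x := J.u x - J'.u x
  p x := J.p x - J'.p x
  q x := J.q x - J'.q x
  hu x := (J.hu x).sub (J'.hu x)
  hp x := (J.hp x).sub (J'.hp x)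

noncomputable def Jet.smul (a : ℝ) (J : Jet d) : Jet d where
  u x := a * J.u x
  p x := a • J.p x
  q x := a • J.q x
  hu x := (J.hu x).const_mul a
  hp x := (J.hp x).const_smul a

noncomputable def Jet.shift (J : Jet d) (k : EE d) : Jet d where
  u x := J.u (x + k)
  p x := J.p (x + k)
  q x := J.q (x + k)
  hu x := ((J.hu (x + k)).comp x ((hasFDerivAt_id x).add_const k)).congr_fderiv (by ext; simp)
  hp x := ((J.hp (x + k)).comp x ((hasFDerivAt_id x).add_const k)).congr_fderiv (by ext; simp)

/-- affine rescaling `s * u (x + ρ z)` -/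
noncomputable def Jet.aff (J : Jet d) (s ρ : ℝ) (x : EE d) : Jet d where
  u z := s * J.u (x + ρ • z)
  p z := (s * ρ) • J.p (x + ρ • z)
  q z := (s * ρ ^ 2) • J.q (x + ρ • z)
  hu z := by
    have h1 : HasFDerivAt (fun z : EE d => x + ρ • z) (ρ • ContinuousLinearMap.id ℝ (EE d)) z :=
      ((hasFDerivAt_id z).const_smul ρ).const_add x
    refine (((J.hu (x + ρ • z)).comp z h1).const_mul s).congr_fderiv ?_
    ext v; simp; ring
  hp z := by
    have h1 : HasFDerivAt (fun z : EE d => x + ρ • z) (ρ • ContinuousLinearMap.id ℝ (EE d)) z :=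
      ((hasFDerivAt_id z).const_smul ρ).const_add x
    refine (((J.hp (x + ρ • z)).comp z h1).const_smul (s * ρ)).congr_fderiv ?_
    ext v w; simp; ring

/-- square -/
noncomputable def Jet.sq (J : Jet d) (c : ℝ) : Jet d where
  u x := (J.u x - c) ^ 2
  p x := (2 * (J.u x - c)) • J.p x
  q x := (2 * (J.u x - c)) • J.q x + ((2 : ℝ) • J.p x).smulRight (J.p x)
  hu x := by
    refine (((J.hu x).sub_const c).pow 2).congr_fderiv ?_
    ext v; simp
  hp x := (((J.hu x).sub_const c).const_mul 2).smul (J.hp x)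

/-- quadratic polynomial -/
noncomputable def Jet.quad (x : EE d) (c : ℝ) (P : EE d →L[ℝ] ℝ) (Q : QQ d)
    (hs : ∀ v w, Q v w = Q w v) : Jet d where
  u y := c + P (y - x) + (1 / 2 : ℝ) * Q (y - x) (y - x)
  p y := P + Q (y - x)
  q _ := Q
  hu y := by
    refine HasFDerivAt.add ?_ (hasFDerivAt_quad Q hs x y)
    have h1 : HasFDerivAt (fun y : EE d => y - x) (ContinuousLinearMap.id ℝ (EE d)) y :=
      (hasFDerivAt_id y).sub_const x
    exact (P.hasFDerivAt.comp y h1).const_add c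
  hp y := by
    have h1 : HasFDerivAt (fun y : EE d => y - x) (ContinuousLinearMap.id ℝ (EE d)) y :=
      (hasFDerivAt_id y).sub_const x
    exact (Q.hasFDerivAt.comp y h1).const_add P

noncomputable def In (d : ℕ) : QQ d := innerSL ℝ

theorem In_symm (v w : EE d) : In d v w = In d w v := by
  simp only [In]; rw [innerSL_apply_apply, innerSL_apply_apply, real_inner_comm]

theorem In_self (v : EE d) : In d v v = ‖v‖ ^ 2 := by
  simp only [In]; rw [innerSL_apply_apply, real_inner_self_eq_norm_sq]

theorem LL_In (A : Matrix (Fin d) (Fin d) ℝ) : LL A (In d) = ∑ i, A i i := by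
  have : ∀ v w : EE d, In d v w = inner ℝ v w := fun v w => by
    simp only [In]; rw [innerSL_apply_apply]
  simp [LL, this, EuclideanSpace.inner_single_left, Pi.single_apply]

theorem LL_In_le {C : ℝ} (hC : 0 < C) {A : Matrix (Fin d) (Fin d) ℝ} (hA : EllM C A) :
    LL A (In d) ≤ d * C := by
  rw [LL_In]
  calc _ ≤ ∑ i : Fin d, C := Finset.sum_le_sum fun i _ => (le_abs_self _).trans (hA.entry hC i i)
    _ = _ := by simp

theorem LL_In_nonneg {C : ℝ} (hC : 0 < C) {A : Matrix (Fin d) (Fin d) ℝ} (hA : EllM C A) :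
    0 ≤ LL A (In d) := by
  have := LL_nonpos hC hA (Q := (-1 : ℝ) • In d) (fun e => by simp [In_self])
  rw [LL_smul] at this; linarith

theorem LL_rank1 {C : ℝ} (hC : 0 < C) {A : Matrix (Fin d) (Fin d) ℝ} (hA : EllM C A)
    (P : EE d →L[ℝ] ℝ) : C⁻¹ * ‖P‖ ^ 2 ≤ LL A (P.smulRight P) := by
  set z : EE d := WithLp.toLp 2 fun i => P (EuclideanSpace.single i 1) with hz
  have h1 : LL A (P.smulRight P) = quadForm A z := by
    simp only [LL, quadForm, hz, ContinuousLinearMap.smulRight_apply, smul_apply, smul_eq_mul]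
    congr! 2; ring
  have h2 : ‖P‖ ≤ ‖z‖ := by
    refine ContinuousLinearMap.opNorm_le_bound _ (norm_nonneg _) fun w => ?_
    have : P w = inner ℝ z w := by
      have hw : w = ∑ i, w i • EuclideanSpace.single i (1 : ℝ) := by
        ext j; simp [Pi.single_apply]
      conv_lhs => rw [hw]
      simp [PiLp.inner_apply, hz]
    rw [this]
    exact norm_inner_le_norm _ _
  rw [h1]
  refine le_trans ?_ (hA.lo z)
  have := inv_pos.2 hC
  gcongr

/-- Lipschitz bound -/
theorem Jet.lip (J : Jet d) {G : ℝ} (hG : ∀ x, ‖J.p x‖ ≤ G) (x y : EE d) :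
    |J.u y - J.u x| ≤ G * ‖y - x‖ :=
  Convex.norm_image_sub_le_of_norm_hasFDerivWithin_le (𝕜 := ℝ) (s := univ)
    (fun z _ => (J.hu z).hasFDerivWithinAt) (fun z _ => hG z) convex_univ (mem_univ _) (mem_univ _)

theorem Jet.lip_p (J : Jet d) {G : ℝ} (hG : ∀ x, ‖J.q x‖ ≤ G) (x y : EE d) :
    ‖J.p y - J.p x‖ ≤ G * ‖y - x‖ :=
  Convex.norm_image_sub_le_of_norm_hasFDerivWithin_le (𝕜 := ℝ) (s := univ)
    (fun z _ => (J.hp z).hasFDerivWithinAt) (fun z _ => hG z) convex_univ (mem_univ _) (mem_univ _)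

theorem Jet.taylor1 (J : Jet d) {Q : ℝ} (hQ : ∀ x, ‖J.q x‖ ≤ Q) (x y : EE d) :
    |J.u y - J.u x - J.p x (y - x)| ≤ Q * ‖y - x‖ ^ 2 := by
  have Q0 : 0 ≤ Q := le_trans (norm_nonneg (J.q x)) (hQ x)
  have := Convex.norm_image_sub_le_of_norm_hasFDerivWithin_le' (𝕜 := ℝ)
    (s := closedBall x ‖y - x‖) (x := x) (y := y) (C := Q * ‖y - x‖) (φ := J.p x)
    (f := J.u) (f' := J.p)
    (fun z _ => (J.hu z).hasFDerivWithinAt)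
    (fun z hz => (J.lip_p hQ x z).trans (by
      have hz' : ‖z - x‖ ≤ ‖y - x‖ := by simpa [mem_closedBall, dist_eq_norm] using hz
      gcongr)) (convex_closedBall x _)
    (mem_closedBall_self (norm_nonneg _)) (by simp [mem_closedBall, dist_eq_norm])
  calc _ ≤ _ := this
    _ = _ := by ring

set_option maxHeartbeats 1000000 in
theorem liouville_aux (D : Jet d) {C : ℝ} (hC : 0 < C) {A : Matrix (Fin d) (Fin d) ℝ}
    (hA : EllM C A) (hL : ∀ x, LL A (D.q x) = 0) {G0 Q c : ℝ}
    (hG0 : ∀ x, ‖D.p x‖ ≤ G0) (hQ : ∀ x, ‖D.q x‖ ≤ Q)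
    (hc : ∀ x y, |D.u x - D.u y| ≤ c * √‖x - y‖) : ∀ x, D.p x = 0 := by
  set G := ⨆ x, ‖D.p x‖ with hGdef
  have bdd : BddAbove (range fun x => ‖D.p x‖) := ⟨G0, by rintro _ ⟨x, rfl⟩; exact hG0 x⟩
  have hG : ∀ x, ‖D.p x‖ ≤ G := fun x => le_ciSup bdd x
  by_cases hG1 : G ≤ 0
  · intro x; exact norm_le_zero_iff.1 ((hG x).trans hG1)
  push Not at hG1
  exfalso
  have Q0 : 0 ≤ Q := le_trans (norm_nonneg (D.q 0)) (hQ 0)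
  obtain ⟨x0, e, he, hpe⟩ : ∃ x0 e, ‖e‖ = 1 ∧ 3 / 4 * G < D.p x0 e := by
    by_contra! hcon
    have : ∀ x, ‖D.p x‖ ≤ 3 / 4 * G := fun x => by
      refine ContinuousLinearMap.opNorm_le_of_unit_norm (by positivity) fun z hz => ?_
      rw [Real.norm_eq_abs, abs_le]
      have h1 := hcon x z hz
      have h2 := hcon x (-z) (by simpa using hz)
      simp only [map_neg] at h2
      constructor <;> linarith
    have := ciSup_le this
    linarith
  obtain ⟨t, ht, htQ⟩ : ∃ t : ℝ, 0 < t ∧ Q * t ≤ G / 4 := by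
    refine ⟨G / (4 * (Q + 1)), by positivity, ?_⟩
    rw [mul_div_assoc', div_le_div_iff₀ (by positivity) (by positivity)]
    nlinarith
  set T : Jet d := ((D.shift (t • e)).sub D).smul (1 / t) with hT
  have Tu : ∀ x, T.u x = (D.u (x + t • e) - D.u x) / t := fun x => by
    simp only [hT, Jet.sub, Jet.smul, Jet.shift]; ring
  have nte : ‖t • e‖ = t := by simp [norm_smul, he, abs_of_pos ht]
  have Tb : ∀ x, |T.u x| ≤ G := fun x => by
    rw [Tu, abs_div, abs_of_pos ht, div_le_iff₀ ht]
    simpa [nte] using D.lip hG x (x + t • e)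
  have Tp : ∀ x, |T.u x - D.p x e| ≤ G / 4 := fun x => by
    have h1 := D.taylor1 hQ x (x + t • e)
    simp only [add_sub_cancel_left, nte, map_smul, smul_eq_mul] at h1
    have : T.u x - D.p x e = (D.u (x + t • e) - D.u x - t * D.p x e) / t := by
      rw [Tu]; field_simp
    rw [this, abs_div, abs_of_pos ht, div_le_iff₀ ht]
    calc _ ≤ _ := h1
      _ = Q * t * t := by ring
      _ ≤ _ := by gcongr
  have TL : ∀ x, LL A (T.q x) = 0 := fun x => by
    simp only [hT, Jet.sub, Jet.smul, Jet.shift, LL_sub, LL_smul, hL]; ring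
  set κ := G / (32 * (c ^ 2 + 1)) with hκ
  have κ0 : 0 < κ := by positivity
  have κc : κ * c ^ 2 ≤ G / 32 := by
    rw [hκ, div_mul_eq_mul_div, div_le_div_iff₀ (by positivity) (by positivity)]
    nlinarith
  set θ := κ * C⁻¹ * G ^ 2 / (64 * (d * C + 1)) with hθ
  have θ0 : 0 < θ := by positivity
  set ℓ := 2 * G / θ with hℓ
  have ℓ0 : 0 < ℓ := by positivity
  set Φ : Jet d := Jet.lin 1 (Jet.lin 1 (T.sq 0) (κ * θ) (D.sq (D.u x0))) (-(2 * θ ^ 2))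
    (Jet.quad x0 0 0 (In d) In_symm) with hΦ
  have Φu : ∀ x, Φ.u x = T.u x ^ 2 + κ * θ * (D.u x - D.u x0) ^ 2 - θ ^ 2 * ‖x - x0‖ ^ 2 := by
    intro x
    simp only [hΦ, Jet.lin, Jet.sq, Jet.quad, In_self, zero_apply]; ring
  have Dsq : ∀ x, ‖x - x0‖ ≤ ℓ → κ * θ * (D.u x - D.u x0) ^ 2 ≤ G ^ 2 / 16 := by
    intro x hx
    have h1 : (D.u x - D.u x0) ^ 2 ≤ c ^ 2 * ‖x - x0‖ := by
      have := hc x x0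
      calc _ = |D.u x - D.u x0| ^ 2 := (sq_abs _).symm
        _ ≤ (c * √‖x - x0‖) ^ 2 := by gcongr
        _ = _ := by rw [mul_pow, Real.sq_sqrt (norm_nonneg _)]
    calc _ ≤ κ * θ * (c ^ 2 * ℓ) := by
          gcongr; exact h1.trans (by gcongr)
      _ = (κ * c ^ 2) * (2 * G) := by rw [hℓ]; field_simp
      _ ≤ G / 32 * (2 * G) := by gcongr
      _ = _ := by ring
  have T0 : G / 2 ≤ T.u x0 := by
    have := abs_le.1 (Tp x0); linarith [this.1]
  have Φ0 : G ^ 2 / 4 ≤ Φ.u x0 := by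
    rw [Φu]; simp
    nlinarith
  obtain ⟨y, hy, hy0, -, hyq⟩ := Φ.ball_max (c := x0) (x0 := x0) (ρ := ℓ) (mem_ball_self ℓ0) (by
    intro x hx
    refine lt_of_lt_of_le ?_ Φ0
    have hx' : ‖x - x0‖ = ℓ := by simpa [dist_eq_norm] using hx
    rw [Φu, hx']
    have h1 := Dsq x hx'.le
    have h2 : T.u x ^ 2 ≤ G ^ 2 := by
      rw [← sq_abs]; have := Tb x; gcongr
    have h3 : θ ^ 2 * ℓ ^ 2 = 4 * G ^ 2 := by rw [hℓ]; field_simp; ring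
    nlinarith)
  have hy' : ‖y - x0‖ ≤ ℓ := by
    have := (mem_ball.1 hy).le; rwa [dist_eq_norm] at this
  have hq := LL_nonpos hC hA hyq
  have hq2 : LL A (Φ.q y) = 2 * LL A ((T.p y).smulRight (T.p y)) + κ * θ * (2 * LL A ((D.p y).smulRight (D.p y)))
      - 2 * θ ^ 2 * LL A (In d) := by
    have e1 : ∀ P : EE d →L[ℝ] ℝ, ((2 : ℝ) • P).smulRight P = (2 : ℝ) • P.smulRight P := by
      intro P; ext v w; simp; ring
    simp only [hΦ, Jet.lin, Jet.sq, Jet.quad, LL_add, LL_smul, e1, TL, hL]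
    ring
  have r1 := (mul_nonneg (inv_nonneg.2 hC.le) (sq_nonneg _)).trans (LL_rank1 hC hA (T.p y))
  have r2 := LL_rank1 hC hA (D.p y)
  have r3 := LL_In_le hC hA
  have ph : G / 8 ≤ ‖D.p y‖ := by
    have h1 := Dsq y hy'
    rw [Φu y] at hy0
    have h2 : 3 * G ^ 2 / 16 ≤ T.u y ^ 2 := by nlinarith [sq_nonneg (θ * ‖y - x0‖)]
    have h3 : 3 / 8 * G ≤ |T.u y| := by
      by_contra! hcon
      have : |T.u y| ^ 2 < (3 / 8 * G) ^ 2 := by gcongr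
      rw [sq_abs] at this; nlinarith
    have h4 : |D.p y e| ≤ ‖D.p y‖ := by simpa [he] using (D.p y).le_opNorm e
    have h5 := Tp y
    have h6 := abs_sub_abs_le_abs_sub (T.u y) (D.p y e)
    linarith
  have r4 : C⁻¹ * (G / 8) ^ 2 ≤ C⁻¹ * ‖D.p y‖ ^ 2 := by gcongr
  have fin : κ * θ * (2 * (C⁻¹ * (G / 8) ^ 2)) ≤ 2 * θ ^ 2 * (d * C) := by
    have h1 : κ * θ * (2 * (C⁻¹ * (G / 8) ^ 2)) ≤ κ * θ * (2 * LL A ((D.p y).smulRight (D.p y))) := by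
      have := r4.trans r2; gcongr
    have h2 : 2 * θ ^ 2 * LL A (In d) ≤ 2 * θ ^ 2 * (d * C) := by gcongr
    rw [hq2] at hq
    linarith
  have e2 : κ * θ * (2 * (C⁻¹ * (G / 8) ^ 2)) = 2 * θ ^ 2 * (d * C + 1) := by
    have : θ * (64 * (d * C + 1)) = κ * C⁻¹ * G ^ 2 := by rw [hθ]; field_simp
    linear_combination (-(2 / 64) * θ) * this
  rw [e2] at fin
  nlinarith [sq_pos_of_pos θ0]

theorem liouville (J : Jet d) {C : ℝ} (hC : 0 < C) {A : Matrix (Fin d) (Fin d) ℝ}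
    (hA : EllM C A) (hL : ∀ x, LL A (J.q x) = 0)
    (hq : ∀ x y, ‖J.q x - J.q y‖ ≤ 8 * √‖x - y‖) (x : EE d) : J.q x = J.q 0 := by
  -- first differences
  have hpk : ∀ k y z : EE d, ‖(J.p (y + k) - J.p y) - (J.p (z + k) - J.p z)‖
      ≤ 8 * √‖k‖ * ‖y - z‖ := by
    intro k y z
    exact ((J.shift k).sub J).lip_p (G := 8 * √‖k‖) (fun x => by
      have := hq (x + k) x
      rwa [add_sub_cancel_left] at this) z y
  have key : ∀ k h z : EE d, J.p (z + h + k) - J.p (z + h) - (J.p (z + k) - J.p z) = 0 := by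
    intro k h
    set w : Jet d := (J.shift k).sub J with hw
    set D : Jet d := (w.shift h).sub w with hD
    have Dp : ∀ z, D.p z = (J.p (z + h + k) - J.p (z + h)) - (J.p (z + k) - J.p z) := fun z => rfl
    have := liouville_aux D hC hA (fun x => by
      simp only [hD, hw, Jet.sub, Jet.shift, LL_sub, hL]; ring) (G0 := 8 * √‖k‖ * ‖h‖)
      (Q := 16 * √‖k‖) (c := 8 * ‖k‖ * ‖h‖) (fun x => by
        rw [Dp]; have := hpk k (x + h) x; rwa [add_sub_cancel_left] at this) (fun x => by
        have e : D.q x = (J.q (x + h + k) - J.q (x + h)) - (J.q (x + k) - J.q x) := rfl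
        rw [e]
        have h1 := hq (x + h + k) (x + h)
        have h2 := hq (x + k) x
        rw [add_sub_cancel_left] at h1 h2
        have h3 := norm_sub_le (J.q (x + h + k) - J.q (x + h)) (J.q (x + k) - J.q x)
        linarith) (fun x y => by
        set E : Jet d := (w.shift (x - y)).sub w with hE
        have := E.lip (G := 8 * √‖x - y‖ * ‖k‖) (fun z => by
          have h1 := hpk (x - y) (z + k) z
          rw [add_sub_cancel_left] at h1
          have e : E.p z = J.p (z + k + (x - y)) - J.p (z + k) - (J.p (z + (x - y)) - J.p z) := by
            simp only [hE, hw, Jet.sub, Jet.shift]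
            rw [show z + (x - y) + k = z + k + (x - y) by abel]
            abel
          rw [e]; exact h1) y (y + h)
        have e : E.u (y + h) - E.u y = D.u x - D.u y := by
          simp only [hE, hD, hw, Jet.sub, Jet.shift]
          rw [show y + h + (x - y) = x + h by abel, show y + (x - y) = x by abel]
          ring
        rw [e, add_sub_cancel_left] at this
        calc _ ≤ _ := this
          _ = _ := by ring)
    intro z
    have := this z
    rwa [Dp] at this
  -- derivative in h at zero
  have h1 : HasFDerivAt (fun y => J.p (y + x)) (J.q x) 0 := by
    have : HasFDerivAt J.p (J.q x) ((fun y : EE d => y + x) 0) := by simpa using J.hp x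
    exact (this.comp (0 : EE d) ((hasFDerivAt_id (0 : EE d)).add_const x)).congr_fderiv (by ext; simp)
  have h2 : HasFDerivAt (fun y => J.p (y + x)) (J.q 0) 0 := by
    have e : (fun y => J.p (y + x)) = fun y => J.p y + (J.p x - J.p 0) := by
      funext y
      have := key x y 0
      simp only [zero_add] at this
      rw [← sub_eq_zero, ← this]; abel
    rw [e]; exact (J.hp 0).add_const _
  exact h1.unique h2

end SL


namespace SL
variable {d : ℕ}
open Filter Topology

theorem ultra_lim {ι F : Type*} [NormedAddCommGroup F] [NormedSpace ℝ F] [FiniteDimensional ℝ F]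
    (𝒰 : Ultrafilter ι) (g : ι → F) {A : ℝ} (h : ∀ᶠ i in (𝒰 : Filter ι), ‖g i‖ ≤ A) :
    ∃ l, Tendsto g 𝒰 (𝓝 l) := by
  haveI : ProperSpace F := FiniteDimensional.proper ℝ F
  obtain ⟨x, -, hx⟩ := (isCompact_closedBall (0 : F) A).ultrafilter_le_nhds (𝒰.map g) (by
    rw [le_principal_iff]
    change ∀ᶠ i in (𝒰 : Filter ι), g i ∈ closedBall (0 : F) A
    filter_upwards [h] with i hi
    simpa using hi)
  exact ⟨x, hx⟩

theorem hasFDerivAt_of_bound {F : Type*} [NormedAddCommGroup F] [NormedSpace ℝ F]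
    {f : EE d → F} {L : EE d →L[ℝ] F} {x : EE d} {r A : ℝ} (hr : 0 < r)
    (h : ∀ y, ‖y - x‖ ≤ r → ‖f y - f x - L (y - x)‖ ≤ A * √‖y - x‖ * ‖y - x‖) :
    HasFDerivAt f L x := by
  rw [hasFDerivAt_iff_isLittleO]
  have h1 : (fun y => f y - f x - L (y - x)) =O[𝓝 x] fun y => √‖y - x‖ * ‖y - x‖ := by
    refine Asymptotics.IsBigO.of_bound A ?_
    filter_upwards [closedBall_mem_nhds x hr] with y hy
    have hy' : ‖y - x‖ ≤ r := by simpa [dist_eq_norm] using hy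
    have := h y hy'
    rw [Real.norm_of_nonneg (by positivity), ← mul_assoc]
    exact this
  refine h1.trans_isLittleO ?_
  have h2 : (fun y : EE d => √‖y - x‖) =o[𝓝 x] fun _ => (1 : ℝ) := by
    rw [Asymptotics.isLittleO_one_iff]
    have : Continuous fun y : EE d => √‖y - x‖ := by fun_prop
    have := this.tendsto x
    simpa using this
  have h3 := h2.mul_isBigO (Asymptotics.isBigO_refl (fun y : EE d => ‖y - x‖) (𝓝 x))
  simp only [one_mul] at h3
  exact h3.of_norm_right

theorem compact_lim {ι : Type*} (𝒰 : Ultrafilter ι) (Js : ι → Jet d) (Ω : Set (EE d)) (hΩ : IsOpen Ω)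
    (H : ∀ x ∈ Ω, ∃ r > 0, ∃ A, ∀ᶠ i in (𝒰 : Filter ι), |(Js i).u x| ≤ A ∧ ‖(Js i).p x‖ ≤ A ∧
      ‖(Js i).q x‖ ≤ A ∧ ∀ y, ‖y - x‖ ≤ r → ‖(Js i).q y - (Js i).q x‖ ≤ A * √‖y - x‖) :
    ∃ (u : EE d → ℝ) (p : EE d → (EE d →L[ℝ] ℝ)) (q : EE d → QQ d), ∀ x ∈ Ω,
      HasFDerivAt u (p x) x ∧ HasFDerivAt p (q x) x ∧
      Tendsto (fun i => (Js i).u x) 𝒰 (𝓝 (u x)) ∧ Tendsto (fun i => (Js i).p x) 𝒰 (𝓝 (p x)) ∧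
      Tendsto (fun i => (Js i).q x) 𝒰 (𝓝 (q x)) := by
  have hu : ∀ x, ∃ l, x ∈ Ω → Tendsto (fun i => (Js i).u x) 𝒰 (𝓝 l) := fun x => by
    by_cases hx : x ∈ Ω
    · obtain ⟨r, -, A, hA⟩ := H x hx
      obtain ⟨l, hl⟩ := ultra_lim 𝒰 (fun i => (Js i).u x) (hA.mono fun i hi => hi.1)
      exact ⟨l, fun _ => hl⟩
    · exact ⟨0, fun h => absurd h hx⟩
  have hp : ∀ x, ∃ l, x ∈ Ω → Tendsto (fun i => (Js i).p x) 𝒰 (𝓝 l) := fun x => by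
    by_cases hx : x ∈ Ω
    · obtain ⟨r, -, A, hA⟩ := H x hx
      obtain ⟨l, hl⟩ := ultra_lim 𝒰 (fun i => (Js i).p x) (hA.mono fun i hi => hi.2.1)
      exact ⟨l, fun _ => hl⟩
    · exact ⟨0, fun h => absurd h hx⟩
  have hq : ∀ x, ∃ l, x ∈ Ω → Tendsto (fun i => (Js i).q x) 𝒰 (𝓝 l) := fun x => by
    by_cases hx : x ∈ Ω
    · obtain ⟨r, -, A, hA⟩ := H x hx
      obtain ⟨l, hl⟩ := ultra_lim 𝒰 (fun i => (Js i).q x) (hA.mono fun i hi => hi.2.2.1)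
      exact ⟨l, fun _ => hl⟩
    · exact ⟨0, fun h => absurd h hx⟩
  choose u hu using hu
  choose p hp using hp
  choose q hq using hq
  refine ⟨u, p, q, fun x hx => ⟨?_, ?_, hu x hx, hp x hx, hq x hx⟩⟩
  all_goals
    obtain ⟨r, hr, A, hA⟩ := H x hx
    obtain ⟨s, hs, hsΩ⟩ := Metric.isOpen_iff.1 hΩ x hx
    have A0 : 0 ≤ A := by
      obtain ⟨i, hi⟩ := hA.exists
      exact (abs_nonneg _).trans hi.1
    have hmem : ∀ y, ‖y - x‖ ≤ min (min r (s / 2)) 1 → y ∈ Ω := fun y hy => hsΩ (by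
      rw [mem_ball, dist_eq_norm]
      have := hy.trans ((min_le_left _ _).trans (min_le_right _ _))
      linarith)
  · refine hasFDerivAt_of_bound (r := min (min r (s / 2)) 1) (A := 2 * A) (by positivity) fun y hy => ?_
    have hlim : Tendsto (fun i => (Js i).u y - (Js i).u x - (Js i).p x (y - x)) 𝒰
        (𝓝 (u y - u x - p x (y - x))) := by
      have h3 : Tendsto (fun i => (Js i).p x (y - x)) 𝒰 (𝓝 (p x (y - x))) :=
        (((ContinuousLinearMap.apply ℝ ℝ (y - x)).continuous.tendsto _).comp (hp x hx))
      exact ((hu y (hmem y hy)).sub (hu x hx)).sub h3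
    refine le_of_tendsto hlim.norm ?_
    filter_upwards [hA] with i hi
    have hy1 : ‖y - x‖ ≤ 1 := hy.trans (min_le_right _ _)
    have hyr : ‖y - x‖ ≤ r := hy.trans ((min_le_left _ _).trans (min_le_left _ _))
    have t := taylor_u (Js i) (x := x) (h := ‖y - x‖) (w := A * √‖y - x‖) (fun z hz =>
      (hi.2.2.2 z (hz.trans hyr)).trans (by gcongr)) le_rfl
    have t2 : |(Js i).q x (y - x) (y - x)| ≤ A * ‖y - x‖ ^ 2 := by
      have := ((Js i).q x).le_opNorm₂ (y - x) (y - x)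
      rw [Real.norm_eq_abs] at this
      refine this.trans ?_
      rw [mul_assoc, ← sq]
      have := hi.2.2.1
      gcongr
    have sq1 : √‖y - x‖ ≤ 1 := Real.sqrt_le_one.2 hy1
    have sq2 : ‖y - x‖ ≤ √‖y - x‖ := by
      calc ‖y - x‖ = √‖y - x‖ * √‖y - x‖ := (Real.mul_self_sqrt (norm_nonneg _)).symm
        _ ≤ √‖y - x‖ * 1 := by gcongr
        _ = _ := mul_one _
    rw [Real.norm_eq_abs]
    set n := ‖y - x‖ with hn
    have n0 : 0 ≤ n := norm_nonneg _
    have b1 : A * n ^ 2 ≤ A * √n * n := by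
      rw [sq, ← mul_assoc]; gcongr
    have b2 : A * √n * n ^ 2 ≤ A * √n * n := by
      have : n ^ 2 ≤ n := by nlinarith
      gcongr
    have t' := abs_le.1 t
    have t2' := abs_le.1 t2
    rw [abs_le]
    have : 0 ≤ A * √n * n := by positivity
    constructor <;> linarith
  · refine hasFDerivAt_of_bound (r := min (min r (s / 2)) 1) (A := A) (by positivity) fun y hy => ?_
    have hlim : Tendsto (fun i => (Js i).p y - (Js i).p x - (Js i).q x (y - x)) 𝒰
        (𝓝 (p y - p x - q x (y - x))) := by
      have h3 : Tendsto (fun i => (Js i).q x (y - x)) 𝒰 (𝓝 (q x (y - x))) :=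
        (((ContinuousLinearMap.apply ℝ (EE d →L[ℝ] ℝ) (y - x)).continuous.tendsto _).comp (hq x hx))
      exact ((hp y (hmem y hy)).sub (hp x hx)).sub h3
    refine le_of_tendsto hlim.norm ?_
    filter_upwards [hA] with i hi
    have hyr : ‖y - x‖ ≤ r := hy.trans ((min_le_left _ _).trans (min_le_left _ _))
    exact taylor_p (Js i) (x := x) (h := ‖y - x‖) (w := A * √‖y - x‖) (fun z hz =>
      (hi.2.2.2 z (hz.trans hyr)).trans (by gcongr)) le_rfl

theorem compact_jet {ι : Type*} (𝒰 : Ultrafilter ι) (Js : ι → Jet d)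
    (H : ∀ x, ∃ r > 0, ∃ A, ∀ᶠ i in (𝒰 : Filter ι), |(Js i).u x| ≤ A ∧ ‖(Js i).p x‖ ≤ A ∧
      ‖(Js i).q x‖ ≤ A ∧ ∀ y, ‖y - x‖ ≤ r → ‖(Js i).q y - (Js i).q x‖ ≤ A * √‖y - x‖) :
    ∃ J : Jet d, ∀ x,
      Tendsto (fun i => (Js i).u x) 𝒰 (𝓝 (J.u x)) ∧ Tendsto (fun i => (Js i).p x) 𝒰 (𝓝 (J.p x)) ∧
      Tendsto (fun i => (Js i).q x) 𝒰 (𝓝 (J.q x)) := by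
  obtain ⟨u, p, q, h⟩ := compact_lim 𝒰 Js univ isOpen_univ (fun x _ => H x)
  exact ⟨⟨u, p, q, fun x => (h x trivial).1, fun x => (h x trivial).2.1⟩,
    fun x => (h x trivial).2.2⟩

theorem LL_tendsto {ι : Type*} {l : Filter ι} {A : ι → Matrix (Fin d) (Fin d) ℝ}
    {A0 : Matrix (Fin d) (Fin d) ℝ} {Q : ι → QQ d} {Q0 : QQ d}
    (hA : ∀ i j, Tendsto (fun k => A k i j) l (𝓝 (A0 i j))) (hQ : Tendsto Q l (𝓝 Q0)) :
    Tendsto (fun k => LL (A k) (Q k)) l (𝓝 (LL A0 Q0)) := by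
  unfold LL
  refine tendsto_finsetSum _ fun i _ => tendsto_finsetSum _ fun j _ => (hA i j).mul ?_
  have h1 : Tendsto (fun k => Q k (EuclideanSpace.single i 1)) l (𝓝 (Q0 (EuclideanSpace.single i 1))) :=
    (((ContinuousLinearMap.apply ℝ (EE d →L[ℝ] ℝ) _).continuous.tendsto _).comp hQ)
  exact (((ContinuousLinearMap.apply ℝ ℝ _).continuous.tendsto _).comp h1)

end SL


namespace SL
variable {d : ℕ}
open Filter Topology

structure Ell (C K : ℝ) (a : EE d → Matrix (Fin d) (Fin d) ℝ) : Prop where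
  ell : ∀ x, EllM C (a x)
  lip : ∀ x y i j, |a x i j - a y i j| ≤ K * ‖x - y‖

structure Wt (δ : EE d → ℝ) : Prop where
  lip : ∀ x y, |δ x - δ y| ≤ ‖x - y‖
  nn : ∀ x, 0 ≤ δ x
  le : ∀ x, δ x ≤ 1

structure W (δ : EE d → ℝ) (A : ℝ) (J : Jet d) : Prop where
  u : ∀ x, 0 < δ x → |J.u x| ≤ A
  p : ∀ x, 0 < δ x → δ x * ‖J.p x‖ ≤ A
  q : ∀ x, 0 < δ x → δ x ^ 2 * ‖J.q x‖ ≤ A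
  h : ∀ x y, 0 < δ x → ‖y - x‖ ≤ δ x / 2 → δ x ^ 2 * √(δ x) * ‖J.q y - J.q x‖ ≤ A * √‖y - x‖

theorem Wt.half {δ : EE d → ℝ} (hδ : Wt δ) {x y : EE d} (h : ‖y - x‖ ≤ δ x / 2) : δ x / 2 ≤ δ y := by
  have := abs_le.1 (hδ.lip y x); linarith [this.1]

theorem interpW {δ : EE d → ℝ} (hδ : Wt δ) {A U0 : ℝ} (A0 : 0 ≤ A) {J : Jet d}
    (hh : ∀ x y, 0 < δ x → ‖y - x‖ ≤ δ x / 2 → δ x ^ 2 * √(δ x) * ‖J.q y - J.q x‖ ≤ A * √‖y - x‖)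
    (hU : ∀ x, 0 < δ x → |J.u x| ≤ U0) {σ : ℝ} (σ0 : 0 < σ) (σ1 : σ ≤ 1 / 2) {x : EE d} (hx : 0 < δ x) :
    δ x ^ 2 * ‖J.q x‖ ≤ 4 * U0 / σ ^ 4 + 2 * A * σ ∧ δ x * ‖J.p x‖ ≤ 4 * U0 / σ ^ 4 + 2 * A * σ := by
  set D := δ x with hD
  have U00 : 0 ≤ U0 := (abs_nonneg _).trans (hU x hx)
  have hs2 : σ ^ 2 ≤ 1 / 2 := by nlinarith
  have hs : σ ^ 2 * D ≤ D / 2 := by nlinarith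
  have h1 : ∀ y, ‖y - x‖ ≤ σ ^ 2 * D → |J.u y| ≤ U0 := fun y hy =>
    hU y (lt_of_lt_of_le (by linarith) (hδ.half (hy.trans hs)))
  have sD : 0 < √D := Real.sqrt_pos.2 hx
  have h2 : ∀ y, ‖y - x‖ ≤ σ ^ 2 * D → ‖J.q y - J.q x‖ ≤ A * σ / D ^ 2 := fun y hy => by
    have := hh x y hx (hy.trans hs)
    have e : √‖y - x‖ ≤ σ * √D := by
      calc _ ≤ √(σ ^ 2 * D) := Real.sqrt_le_sqrt hy
        _ = _ := by rw [Real.sqrt_mul (by positivity), Real.sqrt_sq σ0.le]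
    rw [le_div_iff₀ (by positivity)]
    have h3 : D ^ 2 * √D * ‖J.q y - J.q x‖ ≤ A * (σ * √D) := this.trans (by gcongr)
    have : (‖J.q y - J.q x‖ * D ^ 2) * √D ≤ (A * σ) * √D := by linarith
    exact le_of_mul_le_mul_right this sD
  have hh0 : 0 < σ ^ 2 * D := by positivity
  have r1 := interp_q J hh0 h1 h2
  have r2 := interp_p J hh0 h1 h2
  constructor
  · calc D ^ 2 * ‖J.q x‖ ≤ D ^ 2 * (4 * U0 / (σ ^ 2 * D) ^ 2 + 2 * (A * σ / D ^ 2)) := by gcongr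
      _ = _ := by field_simp
  · have e1 : D * (U0 / (σ ^ 2 * D) + A * σ / D ^ 2 * (σ ^ 2 * D)) = U0 / σ ^ 2 + A * σ ^ 3 := by
      field_simp
    have h4 : D * ‖J.p x‖ ≤ U0 / σ ^ 2 + A * σ ^ 3 := by rw [← e1]; gcongr
    have h5 : U0 / σ ^ 2 ≤ 4 * U0 / σ ^ 4 := by
      rw [div_le_div_iff₀ (by positivity) (by positivity)]
      have : σ ^ 4 ≤ σ ^ 2 := by nlinarith [sq_nonneg σ]
      nlinarith [sq_nonneg σ]
    have h6 : A * σ ^ 3 ≤ 2 * A * σ := by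
      have : σ ^ 3 ≤ 2 * σ := by nlinarith [sq_nonneg σ]
      nlinarith
    linarith

theorem Ell.diff {C K : ℝ} {a : EE d → Matrix (Fin d) (Fin d) ℝ} (ha : Ell C K a)
    (x y : EE d) (Q : QQ d) : |LL (a x) Q - LL (a y) Q| ≤ (d : ℝ) ^ 2 * K * ‖x - y‖ * ‖Q‖ := by
  rw [← LL_matsub, mul_assoc _ K]
  exact LL_abs_le (fun i j => by simpa using ha.lip x y i j) Q

set_option maxHeartbeats 1000000 in
theorem rescale {C K η A : ℝ} (K0 : 0 ≤ K) {a : EE d → Matrix (Fin d) (Fin d) ℝ}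
    (ha : Ell C K a) {δ : EE d → ℝ} (hδ : Wt δ) {J : Jet d} (A0 : 0 < A) (hW : W δ A J)
    (hU : ∀ x, 0 < δ x → |J.u x| ≤ η * A)
    (hg : ∀ x y, 0 < δ x → ‖y - x‖ ≤ δ x / 2 →
      δ x ^ 2 * √(δ x) * |LL (a y) (J.q y) - LL (a x) (J.q x)| ≤ η * A * √‖y - x‖)
    {x y : EE d} (hx : 0 < δ x) (hxy : ‖y - x‖ ≤ δ x / 2)
    (hbad : A / 2 * √‖y - x‖ < δ x ^ 2 * √(δ x) * ‖J.q y - J.q x‖) :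
    ∃ (v : Jet d) (m : ℝ) (ζ : EE d), 0 < m ∧ ‖ζ‖ = 1 ∧ v.u 0 = 0 ∧ v.p 0 = 0 ∧ v.q 0 = 0 ∧
      (∀ z z', m * ‖z‖ ≤ 1 / 4 → m * ‖z' - z‖ ≤ 1 / 4 → ‖v.q z' - v.q z‖ ≤ 8 * √‖z' - z‖) ∧
      1 / 2 ≤ ‖v.q ζ‖ ∧
      (∀ z, m * ‖z‖ ≤ 1 / 4 → |LL (a x) (v.q z)| ≤ η * √‖z‖ + 4 * d ^ 2 * K * ‖z‖ * √m) ∧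
      ∀ σ, 0 < σ → σ ≤ 1 / 2 → 4 * η / σ ^ 4 ≤ σ → m ≤ 900 * σ ^ 2 := by
  set D := δ x with hD
  set ρ := ‖y - x‖ with hρ
  have D1 : D ≤ 1 := hδ.le x
  have ρ0 : 0 < ρ := by
    rcases (norm_nonneg (y - x)).lt_or_eq with h | h
    · exact h
    · exfalso
      have : y = x := sub_eq_zero.1 (norm_eq_zero.1 h.symm)
      subst this
      rw [sub_self, norm_zero, mul_zero] at hbad
      simp [hρ] at hbad
  have sD : 0 < √D := Real.sqrt_pos.2 hx
  have sρ : 0 < √ρ := Real.sqrt_pos.2 ρ0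
  have sDD : √D ^ 2 = D := Real.sq_sqrt hx.le
  have sρρ : √ρ ^ 2 = ρ := Real.sq_sqrt ρ0.le
  set N := D ^ 2 * √D / (A * √ρ) with hN
  have N0 : 0 < N := by positivity
  set s := N / ρ ^ 2 with hs
  have sN : s * ρ ^ 2 = N := by rw [hs]; field_simp
  have symQ : ∀ v w, (N • J.q x) v w = (N • J.q x) w v := fun v w => by
    have := J.symm x v w
    simp only [smul_apply, this]
  set v : Jet d := (J.aff s ρ x).sub (Jet.quad 0 (s * J.u x) ((s * ρ) • J.p x) (N • J.q x) symQ) with hv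
  have vq : ∀ z, v.q z = N • (J.q (x + ρ • z) - J.q x) := fun z => by
    simp only [hv, Jet.sub, Jet.aff, Jet.quad, sN, smul_sub]
  set m := ρ / D with hm
  have m0 : 0 < m := by positivity
  have mD : ρ = m * D := by rw [hm]; field_simp
  have near : ∀ z : EE d, m * ‖z‖ ≤ 1 / 4 → ‖(x + ρ • z) - x‖ ≤ D / 4 := fun z hz => by
    rw [add_sub_cancel_left, norm_smul, Real.norm_of_nonneg ρ0.le, mD]
    nlinarith
  have near2 : ∀ z : EE d, m * ‖z‖ ≤ 1 / 4 → 3 / 4 * D ≤ δ (x + ρ • z) := fun z hz => by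
    have := abs_le.1 (hδ.lip (x + ρ • z) x)
    linarith [near z hz, this.1]
  refine ⟨v, m, ρ⁻¹ • (y - x), m0, ?_, ?_, ?_, ?_, ?_, ?_, ?_, ?_⟩
  · rw [norm_smul, norm_inv, Real.norm_of_nonneg ρ0.le, ← hρ]; field_simp
  · simp [hv, Jet.sub, Jet.aff, Jet.quad]
  · simp [hv, Jet.sub, Jet.aff, Jet.quad]
  · rw [vq]; simp
  · intro z z' hz hz'
    set x' := x + ρ • z with hx'
    have hd' := near2 z hz
    have e0 : x + ρ • z' - x' = ρ • (z' - z) := by rw [hx', smul_sub]; abel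
    have e0n : ‖x + ρ • z' - x'‖ = ρ * ‖z' - z‖ := by
      rw [e0, norm_smul, Real.norm_of_nonneg ρ0.le]
    have h1 := hW.h x' (x + ρ • z') (by linarith) (by rw [e0n, mD]; nlinarith)
    rw [e0n, Real.sqrt_mul ρ0.le] at h1
    have h2 : v.q z' - v.q z = N • (J.q (x + ρ • z') - J.q x') := by
      rw [vq, vq, ← smul_sub]; congr 1; abel
    rw [h2, norm_smul, Real.norm_of_nonneg N0.le]
    set X := ‖J.q (x + ρ • z') - J.q x'‖ with hX
    have X0 : 0 ≤ X := norm_nonneg _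
    have h3 : (D / 2) ^ 2 * (√D / 2) * X ≤ A * (√ρ * √‖z' - z‖) := by
      refine le_trans ?_ h1
      have : √D / 2 ≤ √(δ x') := by
        rw [show √D / 2 = √(D / 4) by
          rw [Real.sqrt_div hx.le, show (4 : ℝ) = 2 ^ 2 by norm_num, Real.sqrt_sq (by norm_num)]]
        exact Real.sqrt_le_sqrt (by linarith)
      have : D / 2 ≤ δ x' := by linarith
      gcongr
    rw [hN, div_mul_eq_mul_div, div_le_iff₀ (by positivity)]
    linarith
  · rw [vq, smul_inv_smul₀ ρ0.ne', add_sub_cancel, norm_smul, Real.norm_of_nonneg N0.le, hN,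
      div_mul_eq_mul_div, le_div_iff₀ (by positivity)]
    linarith
  · intro z hz
    set x' := x + ρ • z with hx'
    have hn := near z hz
    have hd' := near2 z hz
    have e0n : ‖x' - x‖ = ρ * ‖z‖ := by
      rw [hx', add_sub_cancel_left, norm_smul, Real.norm_of_nonneg ρ0.le]
    have h1 := hg x x' hx (by linarith)
    rw [e0n, Real.sqrt_mul ρ0.le] at h1
    have h2 := ha.diff x x' (J.q x')
    rw [norm_sub_rev, e0n] at h2
    have h3 := hW.q x' (by linarith)
    have h4 : D ^ 2 * ‖J.q x'‖ ≤ 4 * A := by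
      have : (D / 2) ^ 2 * ‖J.q x'‖ ≤ δ x' ^ 2 * ‖J.q x'‖ := by
        have : D / 2 ≤ δ x' := by linarith
        gcongr
      linarith
    rw [vq, LL_smul, LL_sub, abs_mul, abs_of_pos N0]
    have h5 : |LL (a x) (J.q x') - LL (a x) (J.q x)| ≤
        |LL (a x) (J.q x') - LL (a x') (J.q x')| + |LL (a x') (J.q x') - LL (a x) (J.q x)| :=
      abs_sub_le _ _ _
    have h6 : N * |LL (a x') (J.q x') - LL (a x) (J.q x)| ≤ η * √‖z‖ := by
      rw [hN, div_mul_eq_mul_div, div_le_iff₀ (by positivity)]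
      linarith
    have h7 : N * ((d : ℝ) ^ 2 * K * (ρ * ‖z‖) * ‖J.q x'‖) ≤ 4 * d ^ 2 * K * ‖z‖ * √m := by
      have e1 : N * ((d : ℝ) ^ 2 * K * (ρ * ‖z‖) * ‖J.q x'‖) =
          (√D * √ρ / A) * ((d : ℝ) ^ 2 * K * ‖z‖) * (D ^ 2 * ‖J.q x'‖) := by
        rw [hN]; field_simp; rw [sρρ]; ring
      have e2 : √D * √ρ ≤ √m := by
        rw [← Real.sqrt_mul hx.le]
        refine Real.sqrt_le_sqrt ?_
        rw [mD]; nlinarith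
      rw [e1]
      calc _ ≤ (√m / A) * ((d : ℝ) ^ 2 * K * ‖z‖) * (4 * A) := by gcongr
        _ = _ := by field_simp
    calc _ ≤ N * ((d : ℝ) ^ 2 * K * (ρ * ‖z‖) * ‖J.q x'‖ + |LL (a x') (J.q x') - LL (a x) (J.q x)|) := by
          gcongr; linarith
      _ = N * ((d : ℝ) ^ 2 * K * (ρ * ‖z‖) * ‖J.q x'‖) + N * |LL (a x') (J.q x') - LL (a x) (J.q x)| := by ring
      _ ≤ _ := by linarith
  · intro σ σ0 σ1 hσ
    have e1 : 4 * (η * A) / σ ^ 4 + 2 * A * σ ≤ 3 * σ * A := by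
      have : 4 * (η * A) / σ ^ 4 = (4 * η / σ ^ 4) * A := by ring
      rw [this]; nlinarith
    have i1 := (interpW hδ A0.le hW.h hU σ0 σ1 hx).1.trans e1
    have hy := hδ.half hxy
    have i2 := (interpW hδ A0.le hW.h hU σ0 σ1 (x := y) (by linarith)).1.trans e1
    have i3 : (D / 2) ^ 2 * ‖J.q y‖ ≤ 3 * σ * A := le_trans (by gcongr) i2
    have i4 : D ^ 2 * ‖J.q y - J.q x‖ ≤ 15 * σ * A := by
      have := norm_sub_le (J.q y) (J.q x)
      have : D ^ 2 * ‖J.q y - J.q x‖ ≤ D ^ 2 * (‖J.q y‖ + ‖J.q x‖) := by gcongr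
      linarith
    have i5 : A / 2 * √ρ < √D * (15 * σ * A) := by
      calc _ < _ := hbad
        _ = √D * (D ^ 2 * ‖J.q y - J.q x‖) := by ring
        _ ≤ _ := by gcongr
    have i6 : √ρ ≤ 30 * σ * √D := by
      have : A * √ρ ≤ A * (30 * σ * √D) := by linarith
      exact le_of_mul_le_mul_left this A0
    rw [hm, div_le_iff₀ hx]
    calc ρ = √ρ ^ 2 := sρρ.symm
      _ ≤ (30 * σ * √D) ^ 2 := by gcongr
      _ = 900 * σ ^ 2 * √D ^ 2 := by ring
      _ = _ := by rw [sDD]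

end SL


namespace SL
variable {d : ℕ}
open Filter Topology

set_option maxHeartbeats 1000000 in
theorem schauder_h {C K : ℝ} (hC : 0 < C) (K0 : 0 ≤ K) : ∃ η > 0, ∀ a : EE d → Matrix (Fin d) (Fin d) ℝ,
    Ell C K a → ∀ δ : EE d → ℝ, Wt δ → ∀ (J : Jet d) (A : ℝ), 0 < A → W δ A J →
    (∀ x, 0 < δ x → |J.u x| ≤ η * A) →
    (∀ x y, 0 < δ x → ‖y - x‖ ≤ δ x / 2 →
      δ x ^ 2 * √(δ x) * |LL (a y) (J.q y) - LL (a x) (J.q x)| ≤ η * A * √‖y - x‖) →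
    ∀ x y, 0 < δ x → ‖y - x‖ ≤ δ x / 2 → δ x ^ 2 * √(δ x) * ‖J.q y - J.q x‖ ≤ A / 2 * √‖y - x‖ := by
  by_contra! hcon
  have hcon' := fun k : ℕ => hcon (1 / ((k : ℝ) + 1)) (by positivity)
  choose a ha δ hδ J A A0 hW hU hg x y hx hxy hbad using hcon'
  have res := fun k => rescale K0 (ha k) (hδ k) (A0 k) (hW k) (hU k) (hg k) (hx k) (hxy k) (hbad k)
  choose v m ζ m0 hζ vu vp vq vh vb vL vm using res
  have η0 : Tendsto (fun k : ℕ => 1 / ((k : ℝ) + 1)) atTop (𝓝 0) := tendsto_one_div_add_atTop_nhds_zero_nat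
  have mlim : Tendsto m atTop (𝓝 0) := by
    rw [Metric.tendsto_atTop']
    intro ε hε
    set σ := min (1 / 2 : ℝ) (ε / 900) with hσ
    have σ0 : 0 < σ := by positivity
    have h1 : Tendsto (fun k : ℕ => 4 * (1 / ((k : ℝ) + 1)) / σ ^ 4) atTop (𝓝 0) := by
      simpa using (η0.const_mul 4).div_const (σ ^ 4)
    obtain ⟨n, hn⟩ := eventually_atTop.1 (h1.eventually_le_const σ0)
    refine ⟨n, fun k hk => ?_⟩
    have := vm k σ σ0 (min_le_left _ _) (hn k hk.le)
    rw [Real.dist_eq, sub_zero, abs_of_pos (m0 k)]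
    have a1 : σ ≤ 1 / 2 := min_le_left _ _
    have a2 : σ ≤ ε / 900 := min_le_right _ _
    nlinarith
  set 𝒰 : Ultrafilter ℕ := hyperfilter ℕ with h𝒰
  have hle : (𝒰 : Filter ℕ) ≤ atTop := Nat.hyperfilter_le_atTop
  have msmall : ∀ t : ℝ, 0 ≤ t → ∀ᶠ k in (𝒰 : Filter ℕ), m k * t ≤ 1 / 4 := fun t ht => by
    have : Tendsto (fun k => m k * t) 𝒰 (𝓝 0) := by
      simpa using (mlim.mono_left hle).mul_const t
    exact this.eventually_le_const (by norm_num)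
  obtain ⟨V, hV⟩ := compact_jet 𝒰 v (fun z => by
    refine ⟨1, one_pos, 8 + 8 * √‖z‖ * (1 + ‖z‖ + ‖z‖ ^ 2), ?_⟩
    filter_upwards [msmall ‖z‖ (norm_nonneg _), msmall 1 zero_le_one] with k hk hk1
    have h0 : ∀ w, ‖w - 0‖ ≤ ‖z‖ → ‖(v k).q w - (v k).q 0‖ ≤ 8 * √‖z‖ := fun w hw => by
      refine (vh k 0 w (by simp) ?_).trans ?_
      · exact (mul_le_mul_of_nonneg_left hw (m0 k).le).trans hk
      · gcongr
    have b1 := h0 z (by simp)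
    rw [vq, sub_zero] at b1
    have b2 := taylor_p (v k) h0 (y := z) (by simp)
    have b3 := taylor_u (v k) h0 (y := z) (by simp)
    rw [vq, vp] at b2 b3
    simp only [vu, sub_zero, zero_apply, mul_zero] at b2 b3
    have c1 : 0 ≤ 8 * √‖z‖ * ‖z‖ := by positivity
    have c2 : 0 ≤ 8 * √‖z‖ * ‖z‖ ^ 2 := by positivity
    have c3 : 0 ≤ 8 * √‖z‖ := by positivity
    refine ⟨by linarith, by linarith, by linarith, fun w hw => ?_⟩
    refine (vh k z w hk ((mul_le_mul_of_nonneg_left hw (m0 k).le).trans hk1)).trans ?_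
    have : 0 ≤ 8 * √‖z‖ * (1 + ‖z‖ + ‖z‖ ^ 2) := by positivity
    gcongr
    linarith)
  obtain ⟨ζ0, hζ0⟩ := ultra_lim 𝒰 ζ (A := 1) (Eventually.of_forall fun k => (hζ k).le)
  have hlimA : ∀ i j, ∃ l, Tendsto (fun k => a k (x k) i j) 𝒰 (𝓝 l) := fun i j =>
    ultra_lim 𝒰 _ (A := C) (Eventually.of_forall fun k => ((ha k).ell (x k)).entry hC i j)
  choose A1 hA1 using hlimA
  have qlim : ∀ z : EE d, Tendsto (fun k => quadForm (a k (x k)) z) 𝒰 (𝓝 (quadForm A1 z)) := fun z => by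
    unfold quadForm
    exact tendsto_finsetSum _ fun i _ => tendsto_finsetSum _ fun j _ =>
      ((hA1 i j).const_mul (z i)).mul_const (z j)
  have hA : EllM C A1 := by
    refine ⟨?_, fun z => ge_of_tendsto' (qlim z) fun k => ((ha k).ell (x k)).lo z,
      fun z => le_of_tendsto' (qlim z) fun k => ((ha k).ell (x k)).hi z⟩
    ext i j
    refine tendsto_nhds_unique (hA1 j i) ((hA1 i j).congr fun k => ?_)
    exact (congrFun (congrFun ((ha k).ell (x k)).symm i) j).symm
  have hLV : ∀ z, LL A1 (V.q z) = 0 := fun z => by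
    have l1 := LL_tendsto hA1 (hV z).2.2
    have l2 : Tendsto (fun k : ℕ => 1 / ((k : ℝ) + 1) * √‖z‖ + 4 * d ^ 2 * K * ‖z‖ * √(m k)) 𝒰 (𝓝 0) := by
      have h1 := (η0.mono_left hle).mul_const √‖z‖
      have h2 := ((Real.continuous_sqrt.tendsto 0).comp (mlim.mono_left hle)).const_mul (4 * d ^ 2 * K * ‖z‖)
      simpa using h1.add h2
    have l3 : Tendsto (fun k => LL (a k (x k)) ((v k).q z)) 𝒰 (𝓝 0) := by
      refine squeeze_zero_norm' ?_ l2
      filter_upwards [msmall ‖z‖ (norm_nonneg _)] with k hk using vL k z hk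
    exact tendsto_nhds_unique l1 l3
  have hVh : ∀ z z', ‖V.q z - V.q z'‖ ≤ 8 * √‖z - z'‖ := fun z z' => by
    refine le_of_tendsto ((hV z).2.2.sub (hV z').2.2).norm ?_
    filter_upwards [msmall ‖z'‖ (norm_nonneg _), msmall ‖z - z'‖ (norm_nonneg _)] with k h1 h2
    exact vh k z' z h1 h2
  have hV0 : V.q 0 = 0 := tendsto_nhds_unique (hV 0).2.2 (by simp [vq])
  have hVζ : V.q ζ0 = 0 := (liouville V hC hA hLV hVh ζ0).trans hV0
  have l1 : Tendsto (fun k => ‖(v k).q ζ0‖ + 8 * √‖ζ k - ζ0‖) 𝒰 (𝓝 0) := by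
    have h1 := (hV ζ0).2.2.norm
    have h2 := ((hζ0.sub_const ζ0).norm.sqrt).const_mul 8
    rw [hVζ] at h1
    simpa using h1.add h2
  have l2 : ∀ᶠ k in (𝒰 : Filter ℕ), 1 / 2 ≤ ‖(v k).q ζ0‖ + 8 * √‖ζ k - ζ0‖ := by
    have hζ0n : ‖ζ0‖ ≤ 1 := le_of_tendsto' hζ0.norm fun k => (hζ k).le
    filter_upwards [msmall 2 (by norm_num)] with k hk
    have n1 : m k * ‖ζ0‖ ≤ 1 / 4 := by nlinarith [m0 k]
    have n2 : m k * ‖ζ k - ζ0‖ ≤ 1 / 4 := by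
      have := norm_sub_le (ζ k) ζ0
      rw [hζ] at this
      nlinarith [m0 k]
    have := vh k ζ0 (ζ k) n1 n2
    have t := norm_sub_norm_le ((v k).q (ζ k)) ((v k).q ζ0)
    linarith [vb k]
  have := ge_of_tendsto l1 l2
  norm_num at this

theorem schauder_S {C K : ℝ} (hC : 0 < C) (K0 : 0 ≤ K) : ∃ η > 0, ∀ a : EE d → Matrix (Fin d) (Fin d) ℝ,
    Ell C K a → ∀ δ : EE d → ℝ, Wt δ → ∀ (J : Jet d) (A : ℝ), 0 < A → W δ A J →
    (∀ x, 0 < δ x → |J.u x| ≤ η * A) →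
    (∀ x y, 0 < δ x → ‖y - x‖ ≤ δ x / 2 →
      δ x ^ 2 * √(δ x) * |LL (a y) (J.q y) - LL (a x) (J.q x)| ≤ η * A * √‖y - x‖) →
    W δ (A / 2) J := by
  obtain ⟨η, η0, H⟩ := schauder_h (d := d) hC K0
  refine ⟨min η (1 / 16 ^ 5), by positivity, fun a ha δ hδ J A A0 hW hU hg => ?_⟩
  have l1 : min η (1 / 16 ^ 5) * A ≤ η * A := by gcongr; exact min_le_left _ _
  have l2 : min η (1 / 16 ^ 5) * A ≤ 1 / 16 ^ 5 * A := by gcongr; exact min_le_right _ _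
  have hi := fun x (hx : 0 < δ x) => interpW hδ A0.le hW.h (fun x hx => (hU x hx).trans l2)
    (σ := 1 / 16) (by norm_num) (by norm_num) hx
  have e : 4 * (1 / 16 ^ 5 * A) / (1 / 16) ^ 4 + 2 * A * (1 / 16) ≤ A / 2 := by norm_num; linarith
  refine ⟨fun x hx => ?_, fun x hx => (hi x hx).2.trans e, fun x hx => (hi x hx).1.trans e, ?_⟩
  · refine ((hU x hx).trans l2).trans ?_
    linarith
  · refine H a ha δ hδ J A A0 hW (fun x hx => (hU x hx).trans l1) fun x y hx hxy => ?_
    exact (hg x y hx hxy).trans (by gcongr)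

/-- a priori estimate -/
theorem lemmaG {C K B : ℝ} (hC : 0 < C) (K0 : 0 ≤ K) (B0 : 0 ≤ B) :
    ∃ C0 > 0, ∀ a : EE d → Matrix (Fin d) (Fin d) ℝ,
    Ell C K a → ∀ δ : EE d → ℝ, Wt δ → ∀ (J : Jet d) (A U0 F : ℝ), 0 ≤ F → 0 ≤ U0 → W δ A J →
    (∀ x, 0 < δ x → |J.u x| ≤ U0) →
    (∀ m, (∀ x, 0 < δ x → |J.u x| ≤ m ∧ δ x * ‖J.p x‖ ≤ m ∧ δ x ^ 2 * ‖J.q x‖ ≤ m) →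
      ∀ x y, 0 < δ x → ‖y - x‖ ≤ δ x / 2 →
      δ x ^ 2 * √(δ x) * |LL (a y) (J.q y) - LL (a x) (J.q x)| ≤ B * (m + F) * √‖y - x‖) →
    W δ (C0 * (U0 + F)) J := by
  obtain ⟨η, η0, H⟩ := schauder_S (d := d) hC K0
  -- choose σ so that 2 B σ ≤ η / 2
  set σ := min (1 / 2 : ℝ) (η / (8 * (B + 1))) with hσ
  have σ0 : 0 < σ := by positivity
  have σB : B * (2 * σ) ≤ η / 4 := by
    have : σ ≤ η / (8 * (B + 1)) := min_le_right _ _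
    rw [le_div_iff₀ (by positivity)] at this
    nlinarith
  set C0 := 1 / η + (4 * B * (4 / σ ^ 4 + 2 + 1)) / η with hC0
  have C00 : 0 < C0 := by positivity
  have C0a : 1 ≤ C0 * η := by
    have : C0 * η = 1 + 4 * B * (4 / σ ^ 4 + 2 + 1) := by rw [hC0]; field_simp
    rw [this]
    have : 0 ≤ 4 * B * (4 / σ ^ 4 + 2 + 1) := by positivity
    linarith
  have C0b : 4 * B * (4 / σ ^ 4 + 2 + 1) ≤ C0 * η := by
    have : C0 * η = 1 + 4 * B * (4 / σ ^ 4 + 2 + 1) := by rw [hC0]; field_simp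
    rw [this]; linarith
  refine ⟨C0, C00, fun a ha δ hδ J A U0 F F0 U00 hW hU hg => ?_⟩
  set T := C0 * (U0 + F) with hT
  have T0 : 0 ≤ T := by positivity
  have desc : ∀ A, 0 < A → T ≤ A → W δ A J → W δ (A / 2) J := fun A A0 hA hW => by
    refine H a ha δ hδ J A A0 hW (fun x hx => (hU x hx).trans ?_) fun x y hx hxy => ?_
    · calc U0 ≤ U0 + F := by linarith
        _ ≤ (C0 * η) * (U0 + F) := le_mul_of_one_le_left (by positivity) C0a
        _ = η * T := by rw [hT]; ring
        _ ≤ _ := by gcongr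
    · set m := 4 * U0 / σ ^ 4 + 2 * A * σ + U0 with hm
      have hi := fun x (hx : 0 < δ x) => interpW hδ A0.le hW.h hU σ0 (min_le_left _ _) hx
      have h3 : 0 ≤ 4 * U0 / σ ^ 4 + 2 * A * σ := by positivity
      refine (hg m (fun x hx => ⟨?_, ?_, ?_⟩) x y hx hxy).trans ?_
      · have := hU x hx; linarith
      · have := (hi x hx).2; linarith
      · have := (hi x hx).1; linarith
      · refine mul_le_mul_of_nonneg_right ?_ (Real.sqrt_nonneg _)
        have e1 : B * (m + F) = B * (2 * σ) * A + B * (4 / σ ^ 4 + 1) * U0 + B * F := by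
          rw [hm]; ring
        have e2 : B * (4 / σ ^ 4 + 1) * U0 + B * F ≤ (B * (4 / σ ^ 4 + 2 + 1)) * (U0 + F) := by
          have p1 : 0 ≤ B * U0 := by positivity
          have p2 : 0 ≤ B * F := by positivity
          have p3 : 0 ≤ B * (4 / σ ^ 4) * F := by positivity
          nlinarith
        have e3 : (4 * B * (4 / σ ^ 4 + 2 + 1)) * (U0 + F) ≤ (C0 * η) * (U0 + F) := by gcongr
        have e4 : (C0 * η) * (U0 + F) = η * T := by rw [hT]; ring
        have e5 : η * T ≤ η * A := by gcongr
        have e6 : B * (2 * σ) * A ≤ η / 4 * A := by gcongr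
        rw [e1]
        have : 0 ≤ η * A := by positivity
        linarith
  have mono : ∀ A A', A ≤ A' → W δ A J → W δ A' J := fun A A' hA h =>
    ⟨fun x hx => (h.u x hx).trans hA, fun x hx => (h.p x hx).trans hA,
      fun x hx => (h.q x hx).trans hA, fun x y hx hxy => (h.h x y hx hxy).trans (by gcongr)⟩
  have W1 : ∃ A1 > 0, W δ A1 J := ⟨max A 1, by positivity, mono A _ (le_max_left _ _) hW⟩
  obtain ⟨A1, A10, hW1⟩ := W1
  -- for every ε > 0, W (T + ε)
  have key : ∀ ε > 0, W δ (T + ε) J := fun ε hε => by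
    have : ∀ n : ℕ, W δ (max (T + ε) (A1 / 2 ^ n)) J := fun n => by
      induction n with
      | zero => exact mono A1 _ (by simp) hW1
      | succ n ih =>
        rcases le_total (A1 / 2 ^ n) (T + ε) with h | h
        · rw [max_eq_left h] at ih
          exact mono _ _ (le_max_left _ _) ih
        · rw [max_eq_right h] at ih
          refine mono _ _ ?_ (desc _ (by positivity) (by linarith) ih)
          rw [pow_succ, ← div_div]; exact le_max_right _ _
    have hl : Tendsto (fun n : ℕ => A1 * (1 / 2 : ℝ) ^ n) atTop (𝓝 0) := by
      simpa using (tendsto_pow_atTop_nhds_zero_of_lt_one (by norm_num : (0:ℝ) ≤ 1 / 2) (by norm_num)).const_mul A1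
    obtain ⟨n, hn⟩ := (hl.eventually_le_const hε).exists
    refine mono _ _ (max_le le_rfl ?_) (this n)
    have : A1 / 2 ^ n = A1 * (1 / 2 : ℝ) ^ n := by simp [div_eq_mul_inv]
    rw [this]; linarith
  refine ⟨fun x hx => le_of_forall_pos_le_add fun ε hε => (key ε hε).u x hx,
    fun x hx => le_of_forall_pos_le_add fun ε hε => (key ε hε).p x hx,
    fun x hx => le_of_forall_pos_le_add fun ε hε => (key ε hε).q x hx,
    fun x y hx hxy => le_of_forall_pos_le_add fun ε hε => ?_⟩
  have s0 : 0 ≤ √‖y - x‖ := Real.sqrt_nonneg _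
  have := (key (ε / (√‖y - x‖ + 1)) (by positivity)).h x y hx hxy
  refine this.trans ?_
  rw [add_mul]
  gcongr
  rw [div_mul_eq_mul_div, div_le_iff₀ (by positivity)]
  nlinarith

end SL


namespace SL
variable {d : ℕ}
open Filter Topology

theorem maxp {C : ℝ} (hC : 0 < C) {a : EE d → Matrix (Fin d) (Fin d) ℝ} (ha : ∀ x, EllM C (a x))
    (J : Jet d) {A : ℝ} (hA : ∀ x, J.u x ≤ A) {Λ F : ℝ} (Λ0 : 0 < Λ)
    (h : ∀ x, Λ * J.u x ≤ LL (a x) (J.q x) + F) (x : EE d) : Λ * J.u x ≤ F := by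
  set M := ⨆ x, J.u x with hM
  have bdd : BddAbove (range J.u) := ⟨A, by rintro _ ⟨x, rfl⟩; exact hA x⟩
  have hM1 : ∀ x, J.u x ≤ M := fun x => le_ciSup bdd x
  have key : ∀ η > 0, Λ * M ≤ F + η * (2 * (d * C) + Λ) := fun η hη => by
    obtain ⟨x1, hx1⟩ := exists_lt_of_lt_ciSup (show M - η < ⨆ x, J.u x by linarith)
    set Φ : Jet d := Jet.lin 1 J (-(2 * η)) (Jet.quad x1 0 0 (In d) In_symm) with hΦ
    have Φu : ∀ x, Φ.u x = J.u x - η * ‖x - x1‖ ^ 2 := fun x => by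
      simp only [hΦ, Jet.lin, Jet.quad, In_self, zero_apply]; ring
    obtain ⟨y, hy, hy0, -, hyq⟩ := Φ.ball_max (c := x1) (x0 := x1) (ρ := 1) (mem_ball_self one_pos) (by
      intro x hx
      have hx' : ‖x - x1‖ = 1 := by simpa [dist_eq_norm] using hx
      rw [Φu, Φu, hx']
      simp
      linarith [hM1 x])
    have hq := LL_nonpos hC (ha y) hyq
    simp only [hΦ, Jet.lin, Jet.quad, LL_add, LL_smul] at hq
    rw [Φu, Φu] at hy0
    simp at hy0
    have := LL_In_le hC (ha y)
    have h1 := h y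
    have h2 : M - η ≤ J.u y := by nlinarith [mul_nonneg hη.le (sq_nonneg ‖y - x1‖)]
    nlinarith
  have h0 : Λ * M ≤ F := by
    refine le_of_forall_pos_le_add fun ε hε => ?_
    have hp : 0 < 2 * (d * C) + Λ := by positivity
    have := key (ε / (2 * (d * C) + Λ)) (by positivity)
    rwa [div_mul_cancel₀ _ hp.ne'] at this
  exact le_trans (by gcongr; exact hM1 x) h0

structure GB (A : ℝ) (J : Jet d) : Prop where
  u : ∀ x, |J.u x| ≤ A
  p : ∀ x, ‖J.p x‖ ≤ A
  q : ∀ x, ‖J.q x‖ ≤ A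
  h : ∀ x y, ‖J.q y - J.q x‖ ≤ A * √‖y - x‖

structure HB (F : ℝ) (g : EE d → ℝ) : Prop where
  b : ∀ x, |g x| ≤ F
  h : ∀ x y, |g y - g x| ≤ F * √‖y - x‖

theorem GB.nn {A : ℝ} {J : Jet d} (h : GB A J) : 0 ≤ A := (abs_nonneg _).trans (h.u 0)
theorem HB.nn {A : ℝ} {g : EE d → ℝ} (h : HB A g) : 0 ≤ A := (abs_nonneg _).trans (h.b 0)

theorem GB.mono {A A' : ℝ} {J : Jet d} (h : GB A J) (hA : A ≤ A') : GB A' J :=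
  ⟨fun x => (h.u x).trans hA, fun x => (h.p x).trans hA, fun x => (h.q x).trans hA,
    fun x y => (h.h x y).trans (by gcongr)⟩

theorem HB.mono {A A' : ℝ} {g : EE d → ℝ} (h : HB A g) (hA : A ≤ A') : HB A' g :=
  ⟨fun x => (h.b x).trans hA, fun x y => (h.h x y).trans (by gcongr)⟩

theorem wt_one : Wt (fun _ : EE d => (1 : ℝ)) := ⟨by simp, by simp, by simp⟩

theorem GB.W {A : ℝ} {J : Jet d} (h : GB A J) : W (fun _ => 1) A J :=
  ⟨fun x _ => h.u x, fun x _ => by simpa using h.p x, fun x _ => by simpa using h.q x,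
    fun x y _ _ => by simpa using h.h x y⟩

theorem sqrt_ge_of_ge {t : ℝ} (ht : 1 / 2 ≤ t) : 2 / 3 ≤ √t := by
  rw [show (2 / 3 : ℝ) = √((2 / 3) ^ 2) by rw [Real.sqrt_sq (by norm_num)]]
  exact Real.sqrt_le_sqrt (by norm_num; linarith)

theorem le_sqrt_self' {t : ℝ} (h0 : 0 ≤ t) (h1 : t ≤ 1) : t ≤ √t := by
  calc t = √t * √t := (Real.mul_self_sqrt h0).symm
    _ ≤ √t * 1 := by gcongr; exact Real.sqrt_le_one.2 h1
    _ = _ := mul_one _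

theorem W.GB {A : ℝ} {J : Jet d} (h : W (fun _ => 1) A J) : GB (3 * A) J := by
  have A0 : 0 ≤ A := (abs_nonneg _).trans (h.u 0 one_pos)
  have hq : ∀ x, ‖J.q x‖ ≤ A := fun x => by simpa using h.q x one_pos
  refine ⟨fun x => (h.u x one_pos).trans (by linarith), fun x => ?_, fun x => ?_, fun x y => ?_⟩
  · have := h.p x one_pos
    simp only [one_mul] at this; linarith
  · have := hq x
    linarith
  · have s0 := Real.sqrt_nonneg ‖y - x‖
    rcases le_total ‖y - x‖ (1 / 2) with hl | hl
    · have := h.h x y one_pos hl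
      simp only [one_pow, Real.sqrt_one, one_mul] at this
      nlinarith
    · have h1 := sqrt_ge_of_ge hl
      have h2 := norm_sub_le (J.q y) (J.q x)
      have h3 := hq x
      have h4 := hq y
      nlinarith

/-- Hölder from Lipschitz and bounded -/
theorem holder_of_lip {F : Type*} [NormedAddCommGroup F] {g : EE d → F} {A B : ℝ}
    (hA : ∀ x, ‖g x‖ ≤ A) (hB : ∀ x y, ‖y - x‖ ≤ 1 → ‖g y - g x‖ ≤ B * √‖y - x‖) (x y : EE d) :
    ‖g y - g x‖ ≤ (B + 2 * A) * √‖y - x‖ := by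
  have A0 : 0 ≤ A := (norm_nonneg _).trans (hA 0)
  have s0 := Real.sqrt_nonneg ‖y - x‖
  rcases le_total ‖y - x‖ 1 with hl | hl
  · have := hB x y hl
    nlinarith
  · have h1 : 1 ≤ √‖y - x‖ := Real.one_le_sqrt.2 hl
    have h2 := norm_sub_le (g y) (g x)
    have h3 := hA x
    have h4 := hA y
    have B0 : 0 ≤ B ∨ B < 0 := le_or_gt 0 B
    rcases B0 with B0 | B0
    · nlinarith
    · -- use the bound at a nearby point to contradict
      by_cases hyx : y = x
      · subst hyx; simp
      have hn : 0 < ‖y - x‖ := norm_pos_iff.2 (sub_ne_zero.2 hyx)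
      have := hB x (x + (1 / ‖y - x‖) • (y - x)) (by
        rw [add_sub_cancel_left, norm_smul, norm_div, norm_one, norm_norm]
        field_simp; exact le_rfl)
      rw [add_sub_cancel_left, norm_smul, norm_div, norm_one, norm_norm,
        one_div_mul_cancel hn.ne', Real.sqrt_one] at this
      have h5 := norm_nonneg (g (x + (1 / ‖y - x‖) • (y - x)) - g x)
      linarith

theorem GB_lim {ι : Type*} (𝒰 : Ultrafilter ι) (Js : ι → Jet d) {A : ℝ} (h : ∀ᶠ i in (𝒰 : Filter ι), GB A (Js i)) :
    ∃ J : Jet d, GB A J ∧ ∀ x,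
      Tendsto (fun i => (Js i).u x) 𝒰 (𝓝 (J.u x)) ∧ Tendsto (fun i => (Js i).p x) 𝒰 (𝓝 (J.p x)) ∧
      Tendsto (fun i => (Js i).q x) 𝒰 (𝓝 (J.q x)) := by
  obtain ⟨J, hJ⟩ := compact_jet 𝒰 Js (fun x => ⟨1, one_pos, A, by
    filter_upwards [h] with i hi
    exact ⟨hi.u x, hi.p x, hi.q x, fun y _ => hi.h x y⟩⟩)
  refine ⟨J, ⟨fun x => le_of_tendsto (hJ x).1.norm (h.mono fun i hi => hi.u x),
    fun x => le_of_tendsto (hJ x).2.1.norm (h.mono fun i hi => hi.p x),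
    fun x => le_of_tendsto (hJ x).2.2.norm (h.mono fun i hi => hi.q x),
    fun x y => le_of_tendsto ((hJ y).2.2.sub (hJ x).2.2).norm (h.mono fun i hi => hi.h x y)⟩, hJ⟩

theorem lin_sup {C : ℝ} (hC : 0 < C) {a : EE d → Matrix (Fin d) (Fin d) ℝ} (ha : ∀ x, EllM C (a x))
    {J : Jet d} {A : ℝ} (hA : GB A J) {Λ F : ℝ} (Λ0 : 0 < Λ) {g : EE d → ℝ} (hg : ∀ x, |g x| ≤ F)
    (he : ∀ x, LL (a x) (J.q x) - Λ * J.u x = g x) (x : EE d) : |J.u x| ≤ F / Λ := by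
  rw [le_div_iff₀ Λ0]
  have h1 := maxp hC ha J (fun x => (le_abs_self _).trans (hA.u x)) Λ0 (F := F) (fun x => by
    have := (abs_le.1 (hg x)).1; linarith [he x]) x
  have h2 := maxp hC ha (J.smul (-1)) (A := A) (fun x => by
    have := (abs_le.1 (hA.u x)).1; simp only [Jet.smul]; linarith) Λ0 (F := F) (fun x => by
    have := (abs_le.1 (hg x)).2; simp only [Jet.smul, LL_smul]; linarith [he x]) x
  simp only [Jet.smul] at h2
  have e3 : |J.u x| * Λ = |J.u x * Λ| := by rw [abs_mul, abs_of_pos Λ0]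
  rw [e3, abs_le]
  constructor <;> linarith

theorem apriori {C K Λ : ℝ} (hC : 0 < C) (K0 : 0 ≤ K) (Λ0 : 0 < Λ) :
    ∃ C0 > 0, ∀ a : EE d → Matrix (Fin d) (Fin d) ℝ, Ell C K a → ∀ (J : Jet d) (A F : ℝ) (g : EE d → ℝ),
      GB A J → HB F g → (∀ x, LL (a x) (J.q x) - Λ * J.u x = g x) → GB (C0 * F) J := by
  obtain ⟨C0, C00, H⟩ := lemmaG (d := d) (C := C) (K := K) (B := 1 + Λ) hC K0 (by positivity)
  refine ⟨3 * (C0 * (1 / Λ + 1)), by positivity, fun a ha J A F g hJ hg he => ?_⟩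
  have hs := lin_sup hC ha.ell hJ Λ0 hg.b he
  have F0 := hg.nn
  have := H a ha (fun _ => 1) wt_one J A (F / Λ) F F0 (by positivity) hJ.W (fun x _ => hs x) (by
    intro m hm x y _ hxy
    have m0 : 0 ≤ m := (abs_nonneg _).trans (hm x one_pos).1
    have hp : ∀ x, ‖J.p x‖ ≤ m := fun x => by simpa using (hm x one_pos).2.1
    have h1 := J.lip hp x y
    have h2 := hg.h x y
    have h3 : ‖y - x‖ ≤ √‖y - x‖ := le_sqrt_self' (norm_nonneg _) (by linarith)
    have e : LL (a y) (J.q y) - LL (a x) (J.q x) = (g y - g x) + Λ * (J.u y - J.u x) := by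
      rw [← he, ← he]; ring
    simp only [one_pow, Real.sqrt_one, one_mul]
    rw [e]
    calc _ ≤ |g y - g x| + |Λ * (J.u y - J.u x)| := abs_add_le _ _
      _ = |g y - g x| + Λ * |J.u y - J.u x| := by rw [abs_mul, abs_of_pos Λ0]
      _ ≤ F * √‖y - x‖ + Λ * (m * √‖y - x‖) := by
          gcongr
          exact h1.trans (by gcongr)
      _ ≤ (1 + Λ) * (m + F) * √‖y - x‖ := by
          have p1 : 0 ≤ m * √‖y - x‖ := by positivity
          have p2 : 0 ≤ Λ * F * √‖y - x‖ := by positivity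
          linarith)
  refine this.GB.mono (le_of_eq ?_)
  ring

/-! base operator -/

noncomputable def Jet.sum (s : Finset (Fin d)) (J : Fin d → Jet d) : Jet d where
  u x := ∑ i ∈ s, (J i).u x
  p x := ∑ i ∈ s, (J i).p x
  q x := ∑ i ∈ s, (J i).q x
  hu x := HasFDerivAt.fun_sum fun i _ => (J i).hu x
  hp x := HasFDerivAt.fun_sum fun i _ => (J i).hp x

noncomputable def Jet.add (J J' : Jet d) : Jet d where
  u x := J.u x + J'.u x
  p x := J.p x + J'.p x
  q x := J.q x + J'.q x
  hu x := (J.hu x).add (J'.hu x)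
  hp x := (J.hp x).add (J'.hp x)

theorem GB.add {A A' : ℝ} {J J' : Jet d} (h : GB A J) (h' : GB A' J') : GB (A + A') (J.add J') := by
  refine ⟨fun x => (abs_add_le _ _).trans (add_le_add (h.u x) (h'.u x)),
    fun x => (norm_add_le _ _).trans (add_le_add (h.p x) (h'.p x)),
    fun x => (norm_add_le _ _).trans (add_le_add (h.q x) (h'.q x)), fun x y => ?_⟩
  have e : (J.add J').q y - (J.add J').q x = (J.q y - J.q x) + (J'.q y - J'.q x) := by
    simp only [Jet.add]; abel
  rw [e, add_mul]
  exact (norm_add_le _ _).trans (add_le_add (h.h x y) (h'.h x y))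

theorem GB.smul {A : ℝ} {J : Jet d} (h : GB A J) (c : ℝ) : GB (|c| * A) (J.smul c) := by
  refine ⟨fun x => ?_, fun x => ?_, fun x => ?_, fun x y => ?_⟩
  · simp only [Jet.smul]; rw [abs_mul]; have := h.u x; gcongr
  · simp only [Jet.smul]; rw [norm_smul, Real.norm_eq_abs]; have := h.p x; gcongr
  · simp only [Jet.smul]; rw [norm_smul, Real.norm_eq_abs]; have := h.q x; gcongr
  · simp only [Jet.smul]; rw [← smul_sub, norm_smul, Real.norm_eq_abs, mul_assoc]; have := h.h x y; gcongr

theorem GB.shift {A : ℝ} {J : Jet d} (h : GB A J) (k : EE d) : GB A (J.shift k) :=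
  ⟨fun x => h.u _, fun x => h.p _, fun x => h.q _, fun x y => by
    have := h.h (x + k) (y + k)
    rwa [add_sub_add_right_eq_sub] at this⟩

theorem GB.sum {A : ℝ} {J : Fin d → Jet d} (s : Finset (Fin d)) (h : ∀ i, GB A (J i)) :
    GB (s.card * A) (Jet.sum s J) := by
  refine ⟨fun x => ?_, fun x => ?_, fun x => ?_, fun x y => ?_⟩
  · calc _ ≤ ∑ i ∈ s, |(J i).u x| := Finset.abs_sum_le_sum_abs _ _
      _ ≤ ∑ i ∈ s, A := Finset.sum_le_sum fun i _ => (h i).u x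
      _ = _ := by simp
  · calc _ ≤ ∑ i ∈ s, ‖(J i).p x‖ := norm_sum_le _ _
      _ ≤ ∑ i ∈ s, A := Finset.sum_le_sum fun i _ => (h i).p x
      _ = _ := by simp
  · calc _ ≤ ∑ i ∈ s, ‖(J i).q x‖ := norm_sum_le _ _
      _ ≤ ∑ i ∈ s, A := Finset.sum_le_sum fun i _ => (h i).q x
      _ = _ := by simp
  · have e : (Jet.sum s J).q y - (Jet.sum s J).q x = ∑ i ∈ s, ((J i).q y - (J i).q x) := by
      simp only [Jet.sum]; rw [Finset.sum_sub_distrib]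
    rw [e]
    calc _ ≤ ∑ i ∈ s, ‖(J i).q y - (J i).q x‖ := norm_sum_le _ _
      _ ≤ ∑ i ∈ s, A * √‖y - x‖ := Finset.sum_le_sum fun i _ => (h i).h x y
      _ = _ := by simp; ring

noncomputable def ev (i : Fin d) : EE d := EuclideanSpace.single i 1

noncomputable def stepJ (f : Jet d) (Λ ε : ℝ) (w : Jet d) : Jet d :=
  ((((Jet.sum Finset.univ fun i => (w.shift (ε • ev i)).add (w.shift (-(ε • ev i)))).smul (1 / ε ^ 2)).add
    (f.smul (-1)))).smul (1 / (2 * d / ε ^ 2 + Λ))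

theorem stepJ_GB {f w : Jet d} {Λ ε A : ℝ} (Λ0 : 0 < Λ) (hf : GB A f)
    (hw : GB (A / Λ) w) : GB (A / Λ) (stepJ f Λ ε w) := by
  have h1 := (((GB.sum Finset.univ fun i => (hw.shift (ε • ev i)).add (hw.shift (-(ε • ev i)))).smul (1 / ε ^ 2)).add
    (hf.smul (-1))).smul (1 / (2 * d / ε ^ 2 + Λ))
  refine h1.mono (le_of_eq ?_)
  have : 0 < 2 * d / ε ^ 2 + Λ := by positivity
  rw [abs_of_pos (by positivity), abs_of_nonneg (by positivity)]
  simp only [Finset.card_univ, Fintype.card_fin, abs_neg, abs_one]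
  rw [one_div_mul_eq_div, div_eq_div_iff this.ne' Λ0.ne']
  field_simp
  ring

theorem base_disc {f : Jet d} {Λ ε A : ℝ} (Λ0 : 0 < Λ) (hε : 0 < ε) (hf : GB A f) :
    ∃ w : Jet d, GB (A / Λ) w ∧ ∀ x,
      (∑ i, (w.u (x + ε • ev i) + w.u (x - ε • ev i) - 2 * w.u x)) / ε ^ 2 - Λ * w.u x = f.u x := by
  have A0 := hf.nn
  set w : ℕ → Jet d := fun n => (stepJ f Λ ε)^[n] (f.smul 0) with hw
  have ws : ∀ n, w (n + 1) = stepJ f Λ ε (w n) := fun n => Function.iterate_succ_apply' _ _ _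
  have wB : ∀ n, GB (A / Λ) (w n) := fun n => by
    induction n with
    | zero => exact (hf.smul 0).mono (by simp; positivity)
    | succ n ih => rw [ws]; exact stepJ_GB Λ0 hf ih
  have den : 0 < 2 * d / ε ^ 2 + Λ := by positivity
  set θ := (2 * d / ε ^ 2) / (2 * d / ε ^ 2 + Λ) with hθ
  have θ0 : 0 ≤ θ := by positivity
  have θ1 : θ < 1 := by rw [hθ, div_lt_one den]; linarith
  have wu : ∀ n x, (w (n + 1)).u x = (1 / (2 * d / ε ^ 2 + Λ)) *
      ((1 / ε ^ 2) * (∑ i, ((w n).u (x + ε • ev i) + (w n).u (x - ε • ev i))) - f.u x) := fun n x => by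
    rw [ws]
    simp only [stepJ, Jet.smul, Jet.add, Jet.sum, Jet.shift, ← sub_eq_add_neg]
    ring
  have contr : ∀ n x, |(w (n + 1)).u x - (w n).u x| ≤ θ ^ n * (2 * (A / Λ)) := fun n => by
    induction n with
    | zero =>
      intro x
      have h1 := (wB 1).u x
      have h2 := (wB 0).u x
      simp only [zero_add, pow_zero, one_mul]
      exact (abs_sub _ _).trans (by linarith)
    | succ n ih =>
      intro x
      rw [wu (n + 1), wu n]
      have e : (1 / (2 * d / ε ^ 2 + Λ)) *
          ((1 / ε ^ 2) * (∑ i, ((w (n + 1)).u (x + ε • ev i) + (w (n + 1)).u (x - ε • ev i))) - f.u x) -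
          (1 / (2 * d / ε ^ 2 + Λ)) *
          ((1 / ε ^ 2) * (∑ i, ((w n).u (x + ε • ev i) + (w n).u (x - ε • ev i))) - f.u x)
          = (1 / (2 * d / ε ^ 2 + Λ)) * (1 / ε ^ 2) * ∑ i, (((w (n + 1)).u (x + ε • ev i) - (w n).u (x + ε • ev i))
            + ((w (n + 1)).u (x - ε • ev i) - (w n).u (x - ε • ev i))) := by
        have : ∑ i, (((w (n + 1)).u (x + ε • ev i) - (w n).u (x + ε • ev i))
            + ((w (n + 1)).u (x - ε • ev i) - (w n).u (x - ε • ev i)))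
            = (∑ i, ((w (n + 1)).u (x + ε • ev i) + (w (n + 1)).u (x - ε • ev i))) -
              ∑ i, ((w n).u (x + ε • ev i) + (w n).u (x - ε • ev i)) := by
          rw [← Finset.sum_sub_distrib]; exact Finset.sum_congr rfl fun i _ => by ring
        rw [this]; ring
      rw [e, abs_mul, abs_of_pos (by positivity)]
      calc _ ≤ (1 / (2 * d / ε ^ 2 + Λ)) * (1 / ε ^ 2) * ∑ i : Fin d, (2 * (θ ^ n * (2 * (A / Λ)))) := by
            gcongr
            refine (Finset.abs_sum_le_sum_abs _ _).trans (Finset.sum_le_sum fun i _ => ?_)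
            refine (abs_add_le _ _).trans ?_
            linarith [ih (x + ε • ev i), ih (x - ε • ev i)]
        _ = _ := by
            simp only [Finset.sum_const, Finset.card_univ, Fintype.card_fin, nsmul_eq_mul]
            have hθ' : (1 / (2 * d / ε ^ 2 + Λ)) * (1 / ε ^ 2) * (2 * d) = θ := by
              rw [hθ]; field_simp
            rw [pow_succ]
            linear_combination (θ ^ n * (2 * (A / Λ))) * hθ'
  set 𝒰 : Ultrafilter ℕ := hyperfilter ℕ
  have hle : (𝒰 : Filter ℕ) ≤ atTop := Nat.hyperfilter_le_atTop
  obtain ⟨V, hV, hlim⟩ := GB_lim 𝒰 w (Eventually.of_forall wB)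
  refine ⟨V, hV, fun x => ?_⟩
  have l1 : Tendsto (fun n => (w (n + 1)).u x) 𝒰 (𝓝 (V.u x)) := by
    have h0 : Tendsto (fun n => (w (n + 1)).u x - (w n).u x) 𝒰 (𝓝 0) := by
      have : Tendsto (fun n : ℕ => θ ^ n * (2 * (A / Λ))) 𝒰 (𝓝 0) := by
        simpa using ((tendsto_pow_atTop_nhds_zero_of_lt_one θ0 θ1).mono_left hle).mul_const (2 * (A / Λ))
      exact squeeze_zero_norm (fun n => contr n x) this
    simpa using h0.add (hlim x).1
  have l2 : Tendsto (fun n => (w (n + 1)).u x) 𝒰 (𝓝 ((1 / (2 * d / ε ^ 2 + Λ)) *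
      ((1 / ε ^ 2) * (∑ i, (V.u (x + ε • ev i) + V.u (x - ε • ev i))) - f.u x))) := by
    simp only [wu]
    refine Tendsto.const_mul _ (Tendsto.sub_const (Tendsto.const_mul _ ?_) _)
    exact tendsto_finsetSum _ fun i _ => (hlim _).1.add (hlim _).1
  have e := tendsto_nhds_unique l1 l2
  rw [one_div_mul_eq_div, eq_div_iff den.ne'] at e
  rw [Finset.sum_sub_distrib]
  simp only [Finset.sum_const, Finset.card_univ, Fintype.card_fin, nsmul_eq_mul]
  have e2 : (∑ i, (V.u (x + ε • ev i) + V.u (x - ε • ev i)) - d * (2 * V.u x)) / ε ^ 2 =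
      (1 / ε ^ 2) * (∑ i, (V.u (x + ε • ev i) + V.u (x - ε • ev i))) - V.u x * (2 * d / ε ^ 2) := by ring
  rw [e2]
  linarith

end SL


namespace SL
variable {d : ℕ}
open Filter Topology

theorem LL_one (Q : QQ d) : LL 1 Q = ∑ i, Q (ev i) (ev i) := by
  unfold LL ev
  refine Finset.sum_congr rfl fun i _ => ?_
  rw [Finset.sum_eq_single i]
  · simp
  · intro j _ hj; simp [Matrix.one_apply_ne hj.symm]
  · simp

theorem ev_norm (i : Fin d) : ‖ev i‖ = 1 := by simp [ev]

theorem taylor_sym {J : Jet d} {A ε : ℝ} (hJ : GB A J) (hε : 0 < ε) (x e : EE d) (he : ‖e‖ = 1) :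
    |J.u (x + ε • e) + J.u (x - ε • e) - 2 * J.u x - ε ^ 2 * J.q x e e| ≤ 2 * (A * √ε) * ε ^ 2 := by
  have hw : ∀ y, ‖y - x‖ ≤ ε → ‖J.q y - J.q x‖ ≤ A * √ε := fun y hy =>
    (hJ.h x y).trans (by have := hJ.nn; gcongr)
  have n1 : ‖ε • e‖ = ε := by rw [norm_smul, he, Real.norm_eq_abs, abs_of_pos hε, mul_one]
  have h1 := taylor_u J hw (y := x + ε • e) (by rw [add_sub_cancel_left, n1])
  have h2 := taylor_u J hw (y := x - ε • e) (by rw [sub_sub_cancel_left, norm_neg, n1])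
  rw [add_sub_cancel_left, n1] at h1
  rw [sub_sub_cancel_left, norm_neg, n1] at h2
  simp only [map_neg, map_smul, ContinuousLinearMap.neg_apply, ContinuousLinearMap.smul_apply, smul_eq_mul] at h1 h2
  rw [abs_le] at *
  constructor <;> nlinarith [h1.1, h1.2, h2.1, h2.2]

theorem LL_tendsto1 {ι : Type*} {l : Filter ι} {A : Matrix (Fin d) (Fin d) ℝ} {q : ι → QQ d} {q0 : QQ d}
    (h : Tendsto q l (𝓝 q0)) : Tendsto (fun i => LL A (q i)) l (𝓝 (LL A q0)) :=
  LL_tendsto (A := fun _ => A) (fun i j => tendsto_const_nhds (x := A i j)) h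

theorem base_jet {f : Jet d} {Λ A : ℝ} (Λ0 : 0 < Λ) (hf : GB A f) :
    ∃ J : Jet d, GB (A / Λ) J ∧ ∀ x, LL 1 (J.q x) - Λ * J.u x = f.u x := by
  have hk : ∀ k : ℕ, (0 : ℝ) < 1 / (k + 1) := fun k => by positivity
  choose w hw he using fun k : ℕ => base_disc (ε := 1 / ((k : ℝ) + 1)) Λ0 (hk k) hf
  set 𝒰 : Ultrafilter ℕ := hyperfilter ℕ
  have hle : (𝒰 : Filter ℕ) ≤ atTop := Nat.hyperfilter_le_atTop
  obtain ⟨V, hV, hlim⟩ := GB_lim 𝒰 w (Eventually.of_forall hw)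
  refine ⟨V, hV, fun x => ?_⟩
  have e0 : Tendsto (fun k : ℕ => (1 : ℝ) / (k + 1)) 𝒰 (𝓝 0) :=
    tendsto_one_div_add_atTop_nhds_zero_nat.mono_left hle
  have l1 : Tendsto (fun k => LL 1 ((w k).q x) - Λ * (w k).u x) 𝒰 (𝓝 (LL 1 (V.q x) - Λ * V.u x)) :=
    (LL_tendsto1 (hlim x).2.2).sub ((hlim x).1.const_mul _)
  have l2 : Tendsto (fun k => LL 1 ((w k).q x) - Λ * (w k).u x) 𝒰 (𝓝 (f.u x)) := by
    have : Tendsto (fun k : ℕ => d * (2 * (A / Λ * √(1 / ((k : ℝ) + 1))))) 𝒰 (𝓝 0) := by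
      have := (((Real.continuous_sqrt.tendsto 0).comp e0).const_mul (A / Λ)).const_mul 2 |>.const_mul (d : ℝ)
      simpa using this
    rw [tendsto_iff_norm_sub_tendsto_zero]
    refine squeeze_zero (fun _ => norm_nonneg _) (fun k => ?_) this
    set ε : ℝ := 1 / ((k : ℝ) + 1) with hε
    have ε0 : 0 < ε := hk k
    rw [← he k x, LL_one]
    have e1 : ∑ i, (w k).q x (ev i) (ev i) - Λ * (w k).u x -
        ((∑ i, ((w k).u (x + ε • ev i) + (w k).u (x - ε • ev i) - 2 * (w k).u x)) / ε ^ 2 - Λ * (w k).u x)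
        = - ((∑ i, ((w k).u (x + ε • ev i) + (w k).u (x - ε • ev i) - 2 * (w k).u x - ε ^ 2 * (w k).q x (ev i) (ev i))) / ε ^ 2) := by
      rw [Finset.sum_sub_distrib (f := fun i => (w k).u (x + ε • ev i) + (w k).u (x - ε • ev i) - 2 * (w k).u x), ← Finset.mul_sum]
      field_simp; ring
    rw [e1, norm_neg, Real.norm_eq_abs, abs_div, abs_of_pos (pow_pos ε0 2), div_le_iff₀ (pow_pos ε0 2)]
    refine (Finset.abs_sum_le_sum_abs _ _).trans ((Finset.sum_le_sum fun i _ => taylor_sym (hw k) ε0 x (ev i) (ev_norm i)).trans ?_)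
    simp only [Finset.sum_const, Finset.card_univ, Fintype.card_fin, nsmul_eq_mul]
    exact le_of_eq (by ring)
  exact tendsto_nhds_unique l1 l2

theorem HB.cont {F : ℝ} {g : EE d → ℝ} (hg : HB F g) : Continuous g := by
  rw [continuous_iff_continuousAt]
  intro x
  unfold ContinuousAt
  rw [tendsto_iff_norm_sub_tendsto_zero]
  refine squeeze_zero (fun _ => norm_nonneg _) (fun y => hg.h x y) ?_
  have : Continuous fun y : EE d => F * √‖y - x‖ := by fun_prop
  simpa using this.tendsto x

open scoped Convolution in
theorem conv_bd {V G : Type*} [NormedAddCommGroup V] [NormedSpace ℝ V] [NormedAddCommGroup G] [NormedSpace ℝ G]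
    {ψ : EE d → V} (hψ : Continuous ψ) (hc : HasCompactSupport ψ) (L : V →L[ℝ] ℝ →L[ℝ] G) {F : ℝ} {g : EE d → ℝ}
    (hg : HB F g) : (∀ x, ‖(ψ ⋆[L, volume] g) x‖ ≤ (‖L‖ * ∫ t, ‖ψ t‖) * F) ∧
      ∀ x y, ‖(ψ ⋆[L, volume] g) y - (ψ ⋆[L, volume] g) x‖ ≤ (‖L‖ * ∫ t, ‖ψ t‖) * F * √‖y - x‖ := by
  have hi : Integrable (fun t => ‖ψ t‖) volume := (hψ.integrable_of_hasCompactSupport hc).norm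
  have key : ∀ (h : EE d → ℝ) (M : ℝ), (∀ t, |h t| ≤ M) → ‖∫ t, L (ψ t) (h t)‖ ≤ (‖L‖ * ∫ t, ‖ψ t‖) * M := by
    intro h M hM
    have : ∫ t, ‖L‖ * ‖ψ t‖ * M = (‖L‖ * ∫ t, ‖ψ t‖) * M := by
      rw [integral_mul_const, integral_const_mul]
    rw [← this]
    refine norm_integral_le_of_norm_le ((hi.const_mul _).mul_const _) (Eventually.of_forall fun t => ?_)
    refine (L.le_opNorm₂ _ _).trans ?_
    have := hM t
    rw [Real.norm_eq_abs]
    gcongr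
  refine ⟨fun x => key _ F fun t => hg.b _, fun x y => ?_⟩
  have ex := hc.convolutionExists_left L hψ (μ := volume) (hg.cont.locallyIntegrable)
  rw [convolution_def, convolution_def, ← integral_sub (ex y) (ex x)]
  simp only [← map_sub]
  rw [mul_assoc]
  refine key _ _ fun t => ?_
  have := hg.h (x - t) (y - t)
  rwa [sub_sub_sub_cancel_right] at this

open scoped Convolution in
theorem mollify {F : ℝ} {g : EE d → ℝ} (hg : HB F g) (k : ℕ) : ∃ f : Jet d, (∃ A, GB A f) ∧ HB F f.u ∧
    ∀ x, |f.u x - g x| ≤ F * √(1 / ((k : ℝ) + 1)) := by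
  have hk : (0 : ℝ) < 1 / (k + 1) := by positivity
  let φ : ContDiffBump (0 : EE d) := ⟨1 / (k + 1) / 2, 1 / (k + 1), by positivity, by linarith⟩
  set ψ : EE d → ℝ := φ.normed volume with hψ
  have c0 : HasCompactSupport ψ := φ.hasCompactSupport_normed
  have d0 : ContDiff ℝ 2 ψ := φ.contDiff_normed (n := 2)
  have d1 : ContDiff ℝ 1 (fderiv ℝ ψ) := d0.fderiv_right (by norm_num)
  have c1 := c0.fderiv (𝕜 := ℝ)
  have c2 := c1.fderiv (𝕜 := ℝ)
  have hl : LocallyIntegrable g volume := hg.cont.locallyIntegrable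
  let L := ContinuousLinearMap.lsmul ℝ ℝ (E := ℝ)
  let f : Jet d :=
    { u := ψ ⋆[L, volume] g
      p := fderiv ℝ ψ ⋆[L.precompL (EE d), volume] g
      q := fderiv ℝ (fderiv ℝ ψ) ⋆[(L.precompL (EE d)).precompL (EE d), volume] g
      hu := fun x => c0.hasFDerivAt_convolution_left L (d0.of_le (by norm_num)) hl x
      hp := fun x => c1.hasFDerivAt_convolution_left (L.precompL (EE d)) d1 hl x }
  have b0 := conv_bd d0.continuous c0 L hg
  have b1 := conv_bd d1.continuous c1 (L.precompL (EE d)) hg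
  have b2 := conv_bd (d1.continuous_fderiv (by norm_num)) c2 ((L.precompL (EE d)).precompL (EE d)) hg
  have F0 := hg.nn
  refine ⟨f, ?_, ?_, fun x => ?_⟩
  · obtain ⟨D0, D00, h0⟩ : ∃ D : ℝ, 0 ≤ D ∧ ∀ x, ‖f.u x‖ ≤ D := ⟨_, (norm_nonneg _).trans (b0.1 0), b0.1⟩
    obtain ⟨D1, D10, h1⟩ : ∃ D : ℝ, 0 ≤ D ∧ ∀ x, ‖f.p x‖ ≤ D := ⟨_, (norm_nonneg _).trans (b1.1 0), b1.1⟩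
    obtain ⟨D2, D20, h2, h3⟩ : ∃ D : ℝ, 0 ≤ D ∧ (∀ x, ‖f.q x‖ ≤ D) ∧ ∀ x y, ‖f.q y - f.q x‖ ≤ D * √‖y - x‖ :=
      ⟨_, (norm_nonneg _).trans (b2.1 0), b2.1, b2.2⟩
    exact ⟨D0 + D1 + D2, fun x => (h0 x).trans (by linarith), fun x => (h1 x).trans (by linarith),
      fun x => (h2 x).trans (by linarith), fun x y => (h3 x y).trans (by gcongr; linarith)⟩
  · have hi : ∫ t, ‖ψ t‖ = 1 := by
      rw [← φ.integral_normed (μ := volume)]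
      refine integral_congr_ae (Eventually.of_forall fun t => ?_)
      exact (Real.norm_eq_abs _).trans (abs_of_nonneg (φ.nonneg_normed t))
    have hL : ‖L‖ ≤ 1 := ContinuousLinearMap.opNorm_lsmul_le
    rw [hi, mul_one] at b0
    exact ⟨fun x => (b0.1 x).trans (by nlinarith), fun x y => (b0.2 x y).trans (by
      gcongr; nlinarith)⟩
  · have := φ.dist_normed_convolution_le (μ := volume) (g := g) (x₀ := x) (ε := F * √(1 / ((k : ℝ) + 1)))
      hg.cont.aestronglyMeasurable (fun y hy => by
        rw [Real.dist_eq]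
        refine (hg.h x y).trans ?_
        have : ‖y - x‖ < 1 / ((k : ℝ) + 1) := by simpa [dist_eq_norm, φ] using hy
        gcongr)
    exact this

theorem quadForm_one (z : EE d) : quadForm 1 z = ‖z‖ ^ 2 := by
  unfold quadForm
  rw [EuclideanSpace.norm_sq_eq]
  refine Finset.sum_congr rfl fun i _ => ?_
  rw [Finset.sum_eq_single i]
  · simp; ring
  · intro j _ hj; simp [Matrix.one_apply_ne hj.symm]
  · simp

theorem EllM_one {C : ℝ} (hC : 1 ≤ C) : EllM C (1 : Matrix (Fin d) (Fin d) ℝ) :=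
  ⟨Matrix.isSymm_one, fun z => by
    rw [quadForm_one]; exact mul_le_of_le_one_left (sq_nonneg _) (inv_le_one_of_one_le₀ hC), fun z => by
    rw [quadForm_one]; exact le_mul_of_one_le_left (sq_nonneg _) hC⟩

def Solv (Λ : ℝ) (a : EE d → Matrix (Fin d) (Fin d) ℝ) : Prop :=
  ∀ (F : ℝ) (g : EE d → ℝ), HB F g → ∃ J : Jet d, (∃ A, GB A J) ∧ ∀ x, LL (a x) (J.q x) - Λ * J.u x = g x

theorem base_solv {Λ : ℝ} (Λ0 : 0 < Λ) : Solv (d := d) Λ (fun _ => 1) := by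
  intro F g hg
  obtain ⟨C0, C00, H⟩ := apriori (d := d) (C := 1) (K := 0) one_pos le_rfl Λ0
  have hE : Ell 1 0 (fun _ : EE d => (1 : Matrix (Fin d) (Fin d) ℝ)) := ⟨fun _ => EllM_one le_rfl, by simp⟩
  choose f hfA hfF hfg using fun k : ℕ => mollify hg k
  choose A hA using hfA
  choose J hJ hJe using fun k => base_jet Λ0 (hA k)
  set 𝒰 : Ultrafilter ℕ := hyperfilter ℕ
  have hle : (𝒰 : Filter ℕ) ≤ atTop := Nat.hyperfilter_le_atTop
  obtain ⟨V, hV, hlim⟩ := GB_lim 𝒰 J (A := C0 * F) (Eventually.of_forall fun k => H _ hE (J k) _ F _ (hJ k) (hfF k) (hJe k))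
  refine ⟨V, ⟨_, hV⟩, fun x => ?_⟩
  have e0 : Tendsto (fun k : ℕ => (1 : ℝ) / (k + 1)) 𝒰 (𝓝 0) :=
    tendsto_one_div_add_atTop_nhds_zero_nat.mono_left hle
  have l1 : Tendsto (fun k => LL 1 ((J k).q x) - Λ * (J k).u x) 𝒰 (𝓝 (LL 1 (V.q x) - Λ * V.u x)) :=
    (LL_tendsto1 (hlim x).2.2).sub ((hlim x).1.const_mul _)
  simp only [hJe] at l1
  refine tendsto_nhds_unique l1 ?_
  rw [tendsto_iff_norm_sub_tendsto_zero]
  refine squeeze_zero (fun _ => norm_nonneg _) (fun k => hfg k x) ?_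
  simpa using ((Real.continuous_sqrt.tendsto 0).comp e0).const_mul F

end SL


namespace SL
variable {d : ℕ}
open Filter Topology

noncomputable def mix (s : ℝ) (a : EE d → Matrix (Fin d) (Fin d) ℝ) (x : EE d) : Matrix (Fin d) (Fin d) ℝ :=
  (1 - s) • (1 : Matrix (Fin d) (Fin d) ℝ) + s • a x

theorem quadForm_mix (s : ℝ) (A : Matrix (Fin d) (Fin d) ℝ) (z : EE d) :
    quadForm ((1 - s) • (1 : Matrix (Fin d) (Fin d) ℝ) + s • A) z = (1 - s) * ‖z‖ ^ 2 + s * quadForm A z := by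
  rw [← quadForm_one]
  unfold quadForm
  rw [Finset.mul_sum, Finset.mul_sum, ← Finset.sum_add_distrib]
  refine Finset.sum_congr rfl fun i _ => ?_
  rw [Finset.mul_sum, Finset.mul_sum, ← Finset.sum_add_distrib]
  refine Finset.sum_congr rfl fun j _ => ?_
  simp only [Matrix.add_apply, Matrix.smul_apply, smul_eq_mul]
  ring

theorem LL_mix (s : ℝ) (a : EE d → Matrix (Fin d) (Fin d) ℝ) (x : EE d) (Q : QQ d) :
    LL (mix s a x) Q = LL 1 Q + s * (LL (a x) Q - LL 1 Q) := by
  have : LL (mix s a x) Q = (1 - s) * LL 1 Q + s * LL (a x) Q := by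
    unfold LL mix
    rw [Finset.mul_sum, Finset.mul_sum, ← Finset.sum_add_distrib]
    refine Finset.sum_congr rfl fun i _ => ?_
    rw [Finset.mul_sum, Finset.mul_sum, ← Finset.sum_add_distrib]
    refine Finset.sum_congr rfl fun j _ => ?_
    simp only [Matrix.add_apply, Matrix.smul_apply, smul_eq_mul]
    ring
  rw [this]; ring

theorem Ell_mix {C K s : ℝ} (hC : 1 ≤ C) (K0 : 0 ≤ K) (s0 : 0 ≤ s) (s1 : s ≤ 1)
    {a : EE d → Matrix (Fin d) (Fin d) ℝ} (ha : Ell C K a) : Ell C K (mix s a) := by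
  refine ⟨fun x => ⟨?_, fun z => ?_, fun z => ?_⟩, fun x y i j => ?_⟩
  · unfold mix
    exact (Matrix.isSymm_one.smul _).add ((ha.ell x).symm.smul _)
  · rw [mix, quadForm_mix]
    have h1 := (ha.ell x).lo z
    have h2 : C⁻¹ * ‖z‖ ^ 2 ≤ ‖z‖ ^ 2 := mul_le_of_le_one_left (sq_nonneg _) (inv_le_one_of_one_le₀ hC)
    nlinarith
  · rw [mix, quadForm_mix]
    have h1 := (ha.ell x).hi z
    have h2 : ‖z‖ ^ 2 ≤ C * ‖z‖ ^ 2 := le_mul_of_one_le_left (sq_nonneg _) hC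
    nlinarith
  · have e : mix s a x i j - mix s a y i j = s * (a x i j - a y i j) := by
      simp only [mix, Matrix.add_apply, Matrix.smul_apply, smul_eq_mul]; ring
    rw [e, abs_mul, abs_of_nonneg s0]
    have h1 := ha.lip x y i j
    nlinarith [abs_nonneg (a x i j - a y i j)]

noncomputable def DD (a : EE d → Matrix (Fin d) (Fin d) ℝ) (J : Jet d) (x : EE d) : ℝ :=
  LL (a x) (J.q x) - LL 1 (J.q x)

theorem LL_bd {C : ℝ} (hC : 0 < C) {A : Matrix (Fin d) (Fin d) ℝ} (hA : EllM C A) (Q : QQ d) :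
    |LL A Q| ≤ (d : ℝ) ^ 2 * C * ‖Q‖ := LL_abs_le (fun i j => hA.entry hC i j) Q

theorem LLJ_HB {C K : ℝ} (hC : 0 < C) (K0 : 0 ≤ K) {a : EE d → Matrix (Fin d) (Fin d) ℝ} (ha : Ell C K a)
    {J : Jet d} {A : ℝ} (hJ : GB A J) :
    HB ((d : ℝ) ^ 2 * (3 * C + K) * A) (fun x => LL (a x) (J.q x)) := by
  have A0 := hJ.nn
  have hb : ∀ x, ‖LL (a x) (J.q x)‖ ≤ (d : ℝ) ^ 2 * C * A := fun x =>
    (LL_bd hC (ha.ell x) _).trans (by have := hJ.q x; gcongr)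
  refine ⟨fun x => (hb x).trans ?_, fun x y => (holder_of_lip (g := fun x => LL (a x) (J.q x)) hb (B := (d : ℝ) ^ 2 * (C + K) * A)
    (fun x y hxy => ?_) x y).trans ?_⟩
  · gcongr; linarith
  · have e : LL (a y) (J.q y) - LL (a x) (J.q x) = LL (a y) (J.q y - J.q x) + (LL (a y) (J.q x) - LL (a x) (J.q x)) := by
      rw [LL_sub]; ring
    rw [Real.norm_eq_abs, e]
    have h1 := LL_bd hC (ha.ell y) (J.q y - J.q x)
    have h2 := ha.diff y x (J.q x)
    have h3 := le_sqrt_self' (norm_nonneg (y - x)) hxy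
    calc _ ≤ _ := abs_add_le _ _
      _ ≤ (d : ℝ) ^ 2 * C * (A * √‖y - x‖) + (d : ℝ) ^ 2 * K * √‖y - x‖ * A := by
        refine add_le_add (h1.trans ?_) (h2.trans ?_)
        · have := hJ.h x y; gcongr
        · have := hJ.q x; gcongr
      _ = _ := by ring
  · exact le_of_eq (by ring)

theorem HB.sub {F F' : ℝ} {g g' : EE d → ℝ} (h : HB F g) (h' : HB F' g') : HB (F + F') (fun x => g x - g' x) :=
  ⟨fun x => (abs_sub _ _).trans (add_le_add (h.b x) (h'.b x)), fun x y => by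
    have e : g y - g' y - (g x - g' x) = (g y - g x) - (g' y - g' x) := by ring
    rw [e, add_mul]
    exact (abs_sub _ _).trans (add_le_add (h.h x y) (h'.h x y))⟩

theorem HB.smul {F : ℝ} {g : EE d → ℝ} (h : HB F g) (c : ℝ) : HB (|c| * F) (fun x => c * g x) :=
  ⟨fun x => by rw [abs_mul]; have := h.b x; gcongr, fun x y => by
    rw [← mul_sub, abs_mul, mul_assoc]; have := h.h x y; gcongr⟩

theorem DD_HB {C K : ℝ} (hC : 1 ≤ C) (K0 : 0 ≤ K) {a : EE d → Matrix (Fin d) (Fin d) ℝ} (ha : Ell C K a)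
    {J : Jet d} {A : ℝ} (hJ : GB A J) : HB ((d : ℝ) ^ 2 * (3 * C + K) * A + (d : ℝ) ^ 2 * (3 * C + K) * A) (DD a J) :=
  (LLJ_HB (by linarith) K0 ha hJ).sub (LLJ_HB (a := fun _ => 1) (by linarith) K0 ⟨fun _ => EllM_one hC, by
    intro x y i j; simp; positivity⟩ hJ)

theorem solv_step {C K Λ : ℝ} (hC : 1 ≤ C) (K0 : 0 ≤ K) {a : EE d → Matrix (Fin d) (Fin d) ℝ}
    (ha : Ell C K a) {C0 : ℝ} (C00 : 0 < C0)
    (H : ∀ a : EE d → Matrix (Fin d) (Fin d) ℝ, Ell C K a → ∀ (J : Jet d) (A F : ℝ) (g : EE d → ℝ),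
      GB A J → HB F g → (∀ x, LL (a x) (J.q x) - Λ * J.u x = g x) → GB (C0 * F) J)
    {s s' : ℝ} (s0 : 0 ≤ s) (s1 : s ≤ 1) (hs : C0 * (|s' - s| * ((d : ℝ) ^ 2 * (3 * C + K) + (d : ℝ) ^ 2 * (3 * C + K))) ≤ 1 / 2)
    (hS : Solv Λ (mix s a)) : Solv Λ (mix s' a) := by
  intro F g hg
  have hE := Ell_mix hC K0 s0 s1 ha
  set c := ((d : ℝ) ^ 2 * (3 * C + K) + (d : ℝ) ^ 2 * (3 * C + K)) with hc
  have hN : ∀ J : Jet d, ∃ J' : Jet d, ∀ A, GB A J → GB (A / 2) J' ∧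
      ∀ x, LL (mix s a x) (J'.q x) - Λ * J'.u x = -(s' - s) * DD a J x := by
    intro J
    by_cases hJ : ∃ A, GB A J
    · obtain ⟨A, hA⟩ := hJ
      obtain ⟨J', ⟨A', hA'⟩, he⟩ := hS _ _ ((DD_HB hC K0 ha hA).smul (-(s' - s)))
      refine ⟨J', fun A hA => ⟨?_, he⟩⟩
      have := H _ hE J' _ _ _ hA' ((DD_HB hC K0 ha hA).smul (-(s' - s))) he
      refine this.mono ?_
      have A0 := hA.nn
      rw [abs_neg, ← add_mul, ← hc]
      nlinarith
    · exact ⟨J, fun A hA => absurd ⟨A, hA⟩ hJ⟩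
  choose N hN using hN
  obtain ⟨v0, ⟨A0, hv0⟩, hv0e⟩ := hS F g hg
  have A00 := hv0.nn
  set v : ℕ → Jet d := fun n => N^[n] v0 with hv
  have vs : ∀ n, v (n + 1) = N (v n) := fun n => Function.iterate_succ_apply' _ _ _
  have vB : ∀ n, GB (A0 / 2 ^ n) (v n) := fun n => by
    induction n with
    | zero => simpa [hv] using hv0
    | succ n ih =>
      rw [vs]
      refine (hN _ _ ih).1.mono (le_of_eq ?_)
      rw [pow_succ]; field_simp
  set S : ℕ → Jet d := fun n => Nat.rec v0 (fun n T => T.add (v (n + 1))) n with hS'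
  have Ss : ∀ n, S (n + 1) = (S n).add (v (n + 1)) := fun n => rfl
  have SB : ∀ n, GB (2 * A0 - A0 / 2 ^ n) (S n) := fun n => by
    induction n with
    | zero => exact hv0.mono (by simp; linarith)
    | succ n ih =>
      rw [Ss]
      refine (ih.add (vB (n + 1))).mono (le_of_eq ?_)
      rw [pow_succ]; field_simp; ring
  have Se : ∀ n x, LL (mix s' a x) ((S n).q x) - Λ * (S n).u x = g x + (s' - s) * DD a (v n) x := fun n => by
    induction n with
    | zero =>
      intro x
      have := hv0e x
      change LL (mix s' a x) (v0.q x) - Λ * v0.u x = g x + (s' - s) * DD a v0 x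
      rw [LL_mix] at this ⊢
      unfold DD
      linarith
    | succ n ih =>
      intro x
      have h1 := ih x
      have h2 := (hN _ _ (vB n)).2 x
      rw [← vs] at h2
      rw [Ss]
      rw [LL_mix] at h1 h2 ⊢
      unfold DD at *
      simp only [Jet.add, LL_add]
      linarith
  set 𝒰 : Ultrafilter ℕ := hyperfilter ℕ
  have hle : (𝒰 : Filter ℕ) ≤ atTop := Nat.hyperfilter_le_atTop
  obtain ⟨V, hV, hlim⟩ := GB_lim 𝒰 S (A := 2 * A0) (Eventually.of_forall fun n => (SB n).mono (by
    have : 0 ≤ A0 / 2 ^ n := by positivity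
    linarith))
  refine ⟨V, ⟨_, hV⟩, fun x => ?_⟩
  have l1 : Tendsto (fun k => LL (mix s' a x) ((S k).q x) - Λ * (S k).u x) 𝒰 (𝓝 (LL (mix s' a x) (V.q x) - Λ * V.u x)) :=
    (LL_tendsto1 (hlim x).2.2).sub ((hlim x).1.const_mul _)
  simp only [Se] at l1
  refine tendsto_nhds_unique l1 ?_
  have l2 : Tendsto (fun n => DD a (v n) x) 𝒰 (𝓝 0) := by
    refine squeeze_zero_norm (fun n => (DD_HB hC K0 ha (vB n)).b x) ?_
    have : Tendsto (fun n : ℕ => (1 / 2 : ℝ) ^ n) 𝒰 (𝓝 0) :=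
      (tendsto_pow_atTop_nhds_zero_of_lt_one (by norm_num) (by norm_num)).mono_left hle
    have := this.const_mul (c * A0)
    rw [mul_zero] at this
    refine this.congr fun n => ?_
    rw [hc, one_div, inv_pow]; field_simp
  simpa using (l2.const_mul (s' - s)).const_add (g x)

theorem lin_exist {C K Λ : ℝ} (hC : 1 ≤ C) (K0 : 0 ≤ K) (Λ0 : 0 < Λ) {a : EE d → Matrix (Fin d) (Fin d) ℝ}
    (ha : Ell C K a) : Solv Λ a := by
  obtain ⟨C0, C00, H⟩ := apriori (d := d) (C := C) (K := K) (by linarith) K0 Λ0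
  set c := ((d : ℝ) ^ 2 * (3 * C + K) + (d : ℝ) ^ 2 * (3 * C + K)) with hc
  have c0 : 0 ≤ c := by positivity
  obtain ⟨N, hN⟩ := exists_nat_gt (2 * C0 * c)
  have N0 : (0 : ℝ) < N := lt_of_le_of_lt (by positivity) hN
  have key : ∀ k : ℕ, k ≤ N → Solv Λ (mix ((k : ℝ) / N) a) := fun k => by
    induction k with
    | zero =>
      intro _
      have : mix (((0 : ℕ) : ℝ) / N) a = fun _ => 1 := by ext x; simp [mix]
      rw [this]; exact base_solv Λ0
    | succ k ih =>
      intro hk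
      refine solv_step hC K0 ha C00 H (by positivity) ?_ ?_ (ih (by omega))
      · rw [div_le_one N0]; exact_mod_cast (by omega : k ≤ N)
      · have e : ((k + 1 : ℕ) : ℝ) / N - (k : ℝ) / N = 1 / N := by push_cast; ring
        rw [e, ← hc, abs_of_pos (by positivity)]
        rw [show C0 * (1 / N * c) = (C0 * c) / N by ring, div_le_iff₀ N0]
        linarith
  have := key N le_rfl
  rw [div_self N0.ne'] at this
  have e : mix 1 a = a := by ext x; simp [mix]
  rwa [e] at this

end SL


namespace SL
variable {d : ℕ} {U : Type*} [Nonempty U]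
open Filter Topology
set_option linter.unusedSectionVars false
set_option linter.unusedVariables false

theorem inf_diff {f g : U → ℝ} {δ : ℝ} (hf : BddBelow (range f)) (h : ∀ u, |f u - g u| ≤ δ) :
    |(⨅ u, f u) - ⨅ u, g u| ≤ δ := by
  have hg : BddBelow (range g) := by
    obtain ⟨m, hm⟩ := hf
    refine ⟨m - δ, ?_⟩
    rintro _ ⟨u, rfl⟩
    have h1 := hm ⟨u, rfl⟩
    have h2 := abs_le.1 (h u)
    linarith
  rw [abs_le]
  constructor
  · have : (⨅ u, g u) - δ ≤ ⨅ u, f u := le_ciInf fun u => by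
      have h1 := ciInf_le hg u
      have h2 := abs_le.1 (h u)
      linarith
    linarith
  · have : (⨅ u, f u) - δ ≤ ⨅ u, g u := le_ciInf fun u => by
      have h1 := ciInf_le hf u
      have h2 := abs_le.1 (h u)
      linarith
    linarith

theorem bdd_of_abs {f : U → ℝ} {B : ℝ} (h : ∀ u, |f u| ≤ B) : BddBelow (range f) :=
  ⟨-B, by rintro _ ⟨u, rfl⟩; exact (abs_le.1 (h u)).1⟩

theorem inf_abs {f : U → ℝ} {B : ℝ} (h : ∀ u, |f u| ≤ B) : |⨅ u, f u| ≤ B := by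
  have := inf_diff (g := fun _ : U => (0 : ℝ)) (bdd_of_abs h) (by simpa using h)
  simpa using this

theorem inf_diff_const {f g : U → ℝ} {δ c : ℝ} (hf : BddBelow (range f)) (h : ∀ u, |f u - g u - c| ≤ δ) :
    |(⨅ u, f u) - (⨅ u, g u) - c| ≤ δ := by
  have hg : BddBelow (range g) := by
    obtain ⟨m, hm⟩ := hf
    refine ⟨m - δ - c, ?_⟩
    rintro _ ⟨u, rfl⟩
    have h1 := hm ⟨u, rfl⟩
    have h2 := abs_le.1 (h u)
    linarith
  have e : (⨅ u, g u) + c = ⨅ u, (g u + c) := ciInf_add hg c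
  rw [sub_sub, e]
  exact inf_diff hf fun u => by rw [← sub_sub]; exact h u

structure Co (M K : ℝ) (b : EE d → U → EE d) (r : EE d → U → ℝ) : Prop where
  bb : ∀ x υ, ‖b x υ‖ ≤ M
  rr : ∀ x υ, |r x υ| ≤ M
  neg : ∀ x υ, r x υ ≤ 0
  lb : ∀ x y υ, ‖b y υ - b x υ‖ ≤ K * ‖y - x‖
  lr : ∀ x y υ, |r y υ - r x υ| ≤ K * ‖y - x‖

noncomputable def HH (b : EE d → U → EE d) (r : EE d → U → ℝ) (x : EE d) (p : EE d →L[ℝ] ℝ) (u : ℝ) : ℝ :=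
  ⨅ υ, (p (b x υ) + r x υ * u)

noncomputable def PP (M ε : ℝ) (b : EE d → U → EE d) (r : EE d → U → ℝ) (v : EE d → ℝ) (x : EE d) : ℝ :=
  ⨅ υ, ((M + r x υ) * v x + v (x + ε • b x υ) / ε)

variable {M K ε : ℝ} {b : EE d → U → EE d} {r : EE d → U → ℝ}

theorem Co.M0 (h : Co M K b r) : 0 ≤ M := (norm_nonneg _).trans (h.bb 0 (Classical.arbitrary U))

theorem Co.lin (h : Co M K b r) (x : EE d) (υ : U) (p : EE d →L[ℝ] ℝ) (u : ℝ) :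
    |p (b x υ) + r x υ * u| ≤ M * (‖p‖ + |u|) := by
  have h1 : |p (b x υ)| ≤ ‖p‖ * ‖b x υ‖ := p.le_opNorm _
  have h2 := h.bb x υ
  have h3 := h.rr x υ
  calc _ ≤ |p (b x υ)| + |r x υ * u| := abs_add_le _ _
    _ ≤ ‖p‖ * M + M * |u| := by
      rw [abs_mul]
      refine add_le_add (h1.trans (by gcongr)) (by gcongr)
    _ = _ := by ring

theorem HH_diff (h : Co M K b r) (x : EE d) (p p' : EE d →L[ℝ] ℝ) (u u' : ℝ) :
    |HH b r x p u - HH b r x p' u'| ≤ M * (‖p - p'‖ + |u - u'|) := by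
  refine inf_diff (bdd_of_abs fun υ => h.lin x υ p u) fun υ => ?_
  have := h.lin x υ (p - p') (u - u')
  rw [ContinuousLinearMap.sub_apply] at this
  convert this using 2
  ring

theorem HH_abs (h : Co M K b r) (x : EE d) (p : EE d →L[ℝ] ℝ) (u : ℝ) :
    |HH b r x p u| ≤ M * (‖p‖ + |u|) := inf_abs fun υ => h.lin x υ p u

theorem PP_elem (h : Co M K b r) (hε : 0 < ε) {v : EE d → ℝ} {B : ℝ} (hv : ∀ x, |v x| ≤ B) (x : EE d) (υ : U) :
    |(M + r x υ) * v x + v (x + ε • b x υ) / ε| ≤ (M + 1 / ε) * B := by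
  have h1 := (abs_le.1 (h.rr x υ)).1
  have h2 := h.neg x υ
  have B0 : 0 ≤ B := (abs_nonneg _).trans (hv 0)
  calc _ ≤ |(M + r x υ) * v x| + |v (x + ε • b x υ) / ε| := abs_add_le _ _
    _ = (M + r x υ) * |v x| + |v (x + ε • b x υ)| / ε := by
      rw [abs_mul, abs_div, abs_of_pos hε, abs_of_nonneg (a := M + r x υ) (by linarith)]
    _ ≤ M * B + B / ε := by
      have h3 := hv x
      have h4 := hv (x + ε • b x υ)
      have h5 : 0 ≤ |v x| := abs_nonneg _
      have M0 := h.M0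
      refine add_le_add (mul_le_mul (by linarith) h3 h5 M0) (by gcongr)
    _ = _ := by ring

theorem PP_abs (h : Co M K b r) (hε : 0 < ε) {v : EE d → ℝ} {B : ℝ} (hv : ∀ x, |v x| ≤ B) (x : EE d) :
    |PP M ε b r v x| ≤ (M + 1 / ε) * B := inf_abs fun υ => PP_elem h hε hv x υ

theorem PP_diff (h : Co M K b r) (hε : 0 < ε) {v w : EE d → ℝ} {B B' : ℝ} (hv : ∀ x, |v x| ≤ B)
    (hw : ∀ x, |v x - w x| ≤ B') (x : EE d) :
    |PP M ε b r v x - PP M ε b r w x| ≤ (M + 1 / ε) * B' := by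
  refine inf_diff (bdd_of_abs fun υ => PP_elem h hε hv x υ) fun υ => ?_
  have := PP_elem h hε (v := fun x => v x - w x) hw x υ
  convert this using 2
  ring

theorem PP_HB (h : Co M K b r) (K0 : 0 ≤ K) (hε : 0 < ε) {J : Jet d} {B G : ℝ} (hu : ∀ x, |J.u x| ≤ B)
    (hp : ∀ x, ‖J.p x‖ ≤ G) :
    HB ((4 * M + 4 * (1 / ε) + 3 * K) * (B + G)) (PP M ε b r J.u) := by
  have M0 := h.M0
  have B0 : 0 ≤ B := (abs_nonneg _).trans (hu 0)
  have G0 : 0 ≤ G := (norm_nonneg _).trans (hp 0)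
  have ε' : 0 < 1 / ε := by positivity
  refine ⟨fun x => (PP_abs h hε hu x).trans ?_, fun x y => (holder_of_lip (g := PP M ε b r J.u) (PP_abs h hε hu)
    (B := (M + 1 / ε + 2 * K) * (B + G)) (fun x y hxy => ?_) x y).trans ?_⟩
  · nlinarith [mul_nonneg M0 G0, mul_nonneg M0 B0, mul_nonneg ε'.le B0, mul_nonneg ε'.le G0, mul_nonneg K0 G0, mul_nonneg K0 B0]
  · have lip := J.lip hp
    have s1 := le_sqrt_self' (norm_nonneg (y - x)) hxy
    refine (?_ : _ ≤ (M + 1 / ε + 2 * K) * (B + G) * ‖y - x‖).trans (by gcongr)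
    refine inf_diff (bdd_of_abs fun υ => PP_elem h hε hu y υ) fun υ => ?_
    have e : (M + r y υ) * J.u y + J.u (y + ε • b y υ) / ε - ((M + r x υ) * J.u x + J.u (x + ε • b x υ) / ε)
      = (M + r y υ) * (J.u y - J.u x) + (r y υ - r x υ) * J.u x + (J.u (y + ε • b y υ) - J.u (x + ε • b x υ)) / ε := by ring
    rw [e]
    have h1 := (abs_le.1 (h.rr y υ)).1
    have h2 := h.neg y υ
    have h3 := lip x y
    have h4 := lip (x + ε • b x υ) (y + ε • b y υ)
    have h5 : ‖y + ε • b y υ - (x + ε • b x υ)‖ ≤ (1 + ε * K) * ‖y - x‖ := by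
      have : y + ε • b y υ - (x + ε • b x υ) = (y - x) + ε • (b y υ - b x υ) := by rw [smul_sub]; abel
      rw [this]
      refine (norm_add_le _ _).trans ?_
      rw [norm_smul, Real.norm_eq_abs, abs_of_pos hε]
      have := h.lb x y υ
      nlinarith
    calc _ ≤ |(M + r y υ) * (J.u y - J.u x)| + |(r y υ - r x υ) * J.u x| + |(J.u (y + ε • b y υ) - J.u (x + ε • b x υ)) / ε| :=
          abs_add_three _ _ _
      _ ≤ M * (G * ‖y - x‖) + (K * ‖y - x‖) * B + G * ((1 + ε * K) * ‖y - x‖) / ε := by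
          rw [abs_mul, abs_mul, abs_div, abs_of_pos hε, abs_of_nonneg (a := M + r y υ) (by linarith)]
          have h6 := h.lr x y υ
          have h7 := hu x
          refine add_le_add (add_le_add ?_ ?_) ?_
          · exact mul_le_mul (by linarith) h3 (abs_nonneg _) M0
          · gcongr
          · gcongr
            exact h4.trans (by gcongr)
      _ = (M * G + K * B + G * (1 / ε) + G * K) * ‖y - x‖ := by field_simp; ring
      _ ≤ _ := by
          gcongr
          nlinarith [mul_nonneg M0 G0, mul_nonneg M0 B0, mul_nonneg ε'.le B0, mul_nonneg ε'.le G0, mul_nonneg K0 G0, mul_nonneg K0 B0]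
  · gcongr
    nlinarith [mul_nonneg M0 G0, mul_nonneg M0 B0, mul_nonneg ε'.le B0, mul_nonneg ε'.le G0, mul_nonneg K0 G0, mul_nonneg K0 B0]

set_option maxHeartbeats 1000000 in
theorem semi_eps {C lam F : ℝ} (hC : 1 ≤ C) (K0 : 0 ≤ K) {a : EE d → Matrix (Fin d) (Fin d) ℝ} (ha : Ell C K a)
    (h : Co M K b r) (lam0 : 0 < lam) {f : EE d → ℝ} (hf : HB F f) (hε : 0 < ε) :
    ∃ J : Jet d, (∃ A, GB A J) ∧ (∀ x, |J.u x| ≤ F / lam) ∧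
      ∀ x, LL (a x) (J.q x) - (lam + (M + 1 / ε)) * J.u x = f x - PP M ε b r J.u x := by
  have M0 := h.M0
  have F0 := hf.nn
  set U0 := F / lam with hU0
  have U00 : 0 ≤ U0 := by positivity
  have ε' : 0 < 1 / ε := by positivity
  set Λ := lam + (M + 1 / ε) with hΛ
  have Λ0 : 0 < Λ := by positivity
  have Cp : 0 < C := by linarith
  obtain ⟨C0, C00, H⟩ := apriori (d := d) (C := C) (K := K) Cp K0 Λ0
  set c := (4 * M + 4 * (1 / ε) + 3 * K) with hc
  have c0 : 0 < c := by positivity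
  -- choose σ
  obtain ⟨σ, σ0, σ1, σ2⟩ : ∃ σ : ℝ, 0 < σ ∧ σ ≤ 1 / 2 ∧ C0 * (c * (2 * σ)) ≤ 1 / 2 := by
    refine ⟨min (1 / 2) (1 / (4 * (C0 * c))), by positivity, min_le_left _ _, ?_⟩
    have : min (1 / 2) (1 / (4 * (C0 * c))) ≤ 1 / (4 * (C0 * c)) := min_le_right _ _
    calc _ ≤ C0 * (c * (2 * (1 / (4 * (C0 * c))))) := by gcongr
      _ = 1 / 2 := by field_simp; norm_num
  set D := C0 * (F + c * (U0 + 4 * U0 / σ ^ 4)) with hD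
  have D0 : 0 ≤ D := by positivity
  have hT : ∀ J : Jet d, ∃ J' : Jet d, GB (2 * D) J → (∀ x, |J.u x| ≤ U0) → GB (2 * D) J' ∧ (∀ x, |J'.u x| ≤ U0) ∧
      ∀ x, LL (a x) (J'.q x) - Λ * J'.u x = f x - PP M ε b r J.u x := by
    intro J
    by_cases hJ : GB (2 * D) J ∧ (∀ x, |J.u x| ≤ U0)
    swap
    · exact ⟨J, fun h1 h2 => absurd ⟨h1, h2⟩ hJ⟩
    obtain ⟨hJ, hu⟩ := hJ
    have hp : ∀ x, ‖J.p x‖ ≤ 4 * U0 / σ ^ 4 + 2 * (2 * D) * σ := fun x => by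
      have := (interpW wt_one hJ.nn hJ.W.h (fun x _ => hu x) σ0 σ1 (x := x) one_pos).2
      simpa using this
    have hHB := hf.sub (PP_HB h K0 hε hu hp)
    obtain ⟨J', ⟨A, hA⟩, he⟩ := lin_exist hC K0 Λ0 ha _ _ hHB
    refine ⟨J', fun _ _ => ⟨(H a ha J' A _ _ hA hHB he).mono ?_, fun x => ?_, he⟩⟩
    · have : C0 * (F + c * (U0 + (4 * U0 / σ ^ 4 + 2 * (2 * D) * σ))) = D + (C0 * (c * (2 * σ))) * (2 * D) := by
        rw [hD]; ring
      rw [← hc, this]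
      nlinarith
    · have := lin_sup Cp ha.ell hA Λ0 (F := F + (M + 1 / ε) * U0) (fun x =>
        (abs_sub _ _).trans (add_le_add (hf.b x) (PP_abs h hε hu x))) he x
      refine this.trans (le_of_eq ?_)
      rw [div_eq_iff Λ0.ne', hΛ, hU0]; field_simp
  choose T hT using hT
  set z : Jet d := Jet.smul 0 (Jet.quad 0 0 0 (In d) In_symm) with hz
  have zu : ∀ x, z.u x = 0 := fun x => by simp [hz, Jet.smul]
  have zB : GB (2 * D) z := by
    refine ⟨fun x => ?_, fun x => ?_, fun x => ?_, fun x y => ?_⟩ <;> simp [hz, Jet.smul] <;> positivity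
  set v : ℕ → Jet d := fun n => T^[n] z with hv
  have vs : ∀ n, v (n + 1) = T (v n) := fun n => Function.iterate_succ_apply' _ _ _
  have vB : ∀ n, GB (2 * D) (v n) ∧ ∀ x, |(v n).u x| ≤ U0 := fun n => by
    induction n with
    | zero => exact ⟨zB, fun x => by change |z.u x| ≤ _; rw [zu]; simpa using U00⟩
    | succ n ih => rw [vs]; exact ⟨(hT _ ih.1 ih.2).1, (hT _ ih.1 ih.2).2.1⟩
  have ve : ∀ n x, LL (a x) ((v (n + 1)).q x) - Λ * (v (n + 1)).u x = f x - PP M ε b r (v n).u x := fun n => by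
    rw [vs]; exact (hT _ (vB n).1 (vB n).2).2.2
  set θ := (M + 1 / ε) / Λ with hθ
  have θ0 : 0 ≤ θ := by positivity
  have θ1 : θ < 1 := by rw [hθ, div_lt_one Λ0]; linarith
  have contr : ∀ n x, |(v n).u x - (v (n + 1)).u x| ≤ (2 * U0) * θ ^ n := fun n => by
    induction n with
    | zero =>
      intro x
      have h1 := (vB 1).2 x
      have h2 := (vB 0).2 x
      simp only [zero_add, pow_zero, mul_one]
      exact (abs_sub _ _).trans (by linarith)
    | succ n ih =>
      intro x
      have hd := (((vB (n + 1)).1).add (((vB (n + 1 + 1)).1).smul (-1)))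
      have := lin_sup Cp ha.ell hd Λ0 (F := (M + 1 / ε) * ((2 * U0) * θ ^ n))
        (g := fun x => -(PP M ε b r (v n).u x - PP M ε b r (v (n + 1)).u x)) (fun x => by
          rw [abs_neg]
          exact PP_diff h hε (vB n).2 ih x) (fun x => by
          have e1 := ve n x
          have e2 := ve (n + 1) x
          simp only [Jet.add, Jet.smul, LL_add, LL_smul]
          linarith) x
      simp only [Jet.add, Jet.smul] at this
      calc _ = |(v (n + 1)).u x + -1 * (v (n + 1 + 1)).u x| := by ring_nf
        _ ≤ _ := this
        _ = _ := by rw [pow_succ, hθ]; ring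
  set 𝒰 : Ultrafilter ℕ := hyperfilter ℕ
  have hle : (𝒰 : Filter ℕ) ≤ atTop := Nat.hyperfilter_le_atTop
  obtain ⟨V, hV, hlim⟩ := GB_lim 𝒰 (fun n => v (n + 1)) (Eventually.of_forall fun n => (vB (n + 1)).1)
  have hVat : ∀ x, Tendsto (fun n => (v n).u x) atTop (𝓝 (V.u x)) := fun x => by
    have hcs : CauchySeq fun n => (v n).u x := cauchySeq_of_le_geometric θ (2 * U0) θ1 fun n => by
      rw [Real.dist_eq]; exact contr n x
    obtain ⟨l, hl⟩ := cauchySeq_tendsto_of_complete hcs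
    have h2 : Tendsto (fun n => (v (n + 1)).u x) 𝒰 (𝓝 l) := (hl.comp (tendsto_add_atTop_nat 1)).mono_left hle
    rwa [tendsto_nhds_unique (hlim x).1 h2]
  have hVd : ∀ n x, |(v n).u x - V.u x| ≤ (2 * U0) * θ ^ n / (1 - θ) := fun n x => by
    have := dist_le_of_le_geometric_of_tendsto θ (2 * U0) θ1 (f := fun n => (v n).u x) (fun n => by
      rw [Real.dist_eq]; exact contr n x) (hVat x) n
    rwa [Real.dist_eq] at this
  have hVu : ∀ x, |V.u x| ≤ U0 := fun x => le_of_tendsto (hVat x).norm (Eventually.of_forall fun n => (vB n).2 x)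
  refine ⟨V, ⟨_, hV⟩, hVu, fun x => ?_⟩
  have l1 : Tendsto (fun n => LL (a x) ((v (n + 1)).q x) - Λ * (v (n + 1)).u x) 𝒰 (𝓝 (LL (a x) (V.q x) - Λ * V.u x)) :=
    (LL_tendsto1 (hlim x).2.2).sub ((hlim x).1.const_mul _)
  simp only [ve] at l1
  refine tendsto_nhds_unique l1 (Tendsto.const_sub _ ?_)
  rw [tendsto_iff_norm_sub_tendsto_zero]
  refine squeeze_zero (fun _ => norm_nonneg _) (fun n => PP_diff h hε (vB n).2 (hVd n) x) ?_
  have : Tendsto (fun n : ℕ => θ ^ n) 𝒰 (𝓝 0) := (tendsto_pow_atTop_nhds_zero_of_lt_one θ0 θ1).mono_left hle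
  simpa using ((this.const_mul (2 * U0)).div_const (1 - θ)).const_mul (M + 1 / ε)

end SL


namespace SL
variable {d : ℕ} {U : Type*} [Nonempty U]
open Filter Topology
set_option linter.unusedSectionVars false
set_option linter.unusedVariables false
variable {M K ε : ℝ} {b : EE d → U → EE d} {r : EE d → U → ℝ}

/-- the discrete Hamiltonian is Lipschitz uniformly in ε -/
theorem PP_unif (h : Co M K b r) (K0 : 0 ≤ K) (hε : 0 < ε) {J : Jet d} {m : ℝ} (hu : ∀ x, |J.u x| ≤ m)
    (hp : ∀ x, ‖J.p x‖ ≤ m) (hq : ∀ x, ‖J.q x‖ ≤ m) (x y : EE d) :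
    |PP M ε b r J.u y - PP M ε b r J.u x - (M + 1 / ε) * (J.u y - J.u x)| ≤ 2 * (M + K) * m * ‖y - x‖ := by
  have M0 := h.M0
  have m0 : 0 ≤ m := (abs_nonneg _).trans (hu 0)
  refine inf_diff_const (bdd_of_abs fun υ => PP_elem h hε hu y υ) fun υ => ?_
  set J' : Jet d := (J.shift (ε • b y υ)).sub J with hJ'
  have hnb : ‖ε • b y υ‖ ≤ ε * M := by
    rw [norm_smul, Real.norm_eq_abs, abs_of_pos hε]; have := h.bb y υ; gcongr
  have h1 := J'.lip (G := m * (ε * M)) (fun z => by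
    have := J.lip_p hq z (z + ε • b y υ)
    rw [add_sub_cancel_left] at this
    simp only [hJ', Jet.sub, Jet.shift]
    exact this.trans (by gcongr)) x y
  have h2 := J.lip hp (x + ε • b x υ) (x + ε • b y υ)
  rw [add_sub_add_left_eq_sub, ← smul_sub, norm_smul, Real.norm_eq_abs, abs_of_pos hε] at h2
  have h3 := h.lb x y υ
  have h2' : |J.u (x + ε • b y υ) - J.u (x + ε • b x υ)| ≤ m * (ε * (K * ‖y - x‖)) := h2.trans (by gcongr)
  simp only [hJ', Jet.sub, Jet.shift] at h1
  have h4 := J.lip hp x y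
  have e : (M + r y υ) * J.u y + J.u (y + ε • b y υ) / ε - ((M + r x υ) * J.u x + J.u (x + ε • b x υ) / ε)
      - (M + 1 / ε) * (J.u y - J.u x)
      = r y υ * (J.u y - J.u x) + (r y υ - r x υ) * J.u x +
        ((J.u (y + ε • b y υ) - J.u y - (J.u (x + ε • b y υ) - J.u x)) +
        (J.u (x + ε • b y υ) - J.u (x + ε • b x υ))) / ε := by ring
  rw [e]
  have h5 := h.rr y υ
  have h6 := h.lr x y υ
  have h7 := hu x
  calc _ ≤ _ := abs_add_three _ _ _
    _ ≤ M * (m * ‖y - x‖) + (K * ‖y - x‖) * m + (m * (ε * M) * ‖y - x‖ + m * (ε * (K * ‖y - x‖))) / ε := by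
      rw [abs_mul, abs_mul, abs_div, abs_of_pos hε]
      refine add_le_add (add_le_add (by gcongr) (by gcongr)) ?_
      gcongr
      exact (abs_add_le _ _).trans (add_le_add h1 h2')
    _ = _ := by field_simp; ring

theorem PP_HH (h : Co M K b r) (hε : 0 < ε) {J : Jet d} {m : ℝ} (hu : ∀ x, |J.u x| ≤ m)
    (hq : ∀ x, ‖J.q x‖ ≤ m) (x : EE d) :
    |PP M ε b r J.u x - HH b r x (J.p x) (J.u x) - (M + 1 / ε) * J.u x| ≤ ε * (M ^ 2 * m) := by
  have M0 := h.M0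
  have m0 : 0 ≤ m := (abs_nonneg _).trans (hu 0)
  refine inf_diff_const (bdd_of_abs fun υ => PP_elem h hε hu x υ) fun υ => ?_
  have h1 := J.taylor1 hq x (x + ε • b x υ)
  rw [add_sub_cancel_left, map_smul, norm_smul, Real.norm_eq_abs, abs_of_pos hε, smul_eq_mul] at h1
  have e : (M + r x υ) * J.u x + J.u (x + ε • b x υ) / ε - (J.p x (b x υ) + r x υ * J.u x) - (M + 1 / ε) * J.u x
      = (J.u (x + ε • b x υ) - J.u x - ε * J.p x (b x υ)) / ε := by field_simp; ring
  rw [e, abs_div, abs_of_pos hε, div_le_iff₀ hε]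
  refine h1.trans ?_
  have h2 := h.bb x υ
  calc _ ≤ m * (ε * M) ^ 2 := by gcongr
    _ = _ := by ring

theorem semi_exist {C lam F : ℝ} (hC : 1 ≤ C) (K0 : 0 ≤ K) {a : EE d → Matrix (Fin d) (Fin d) ℝ} (ha : Ell C K a)
    (h : Co M K b r) (lam0 : 0 < lam) {f : EE d → ℝ} (hf : HB F f) :
    ∃ J : Jet d, (∃ A, GB A J) ∧ (∀ x, |J.u x| ≤ F / lam) ∧
      ∀ x, LL (a x) (J.q x) + HH b r x (J.p x) (J.u x) - lam * J.u x = f x := by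
  have M0 := h.M0
  have F0 := hf.nn
  have hk : ∀ k : ℕ, (0 : ℝ) < 1 / (k + 1) := fun k => by positivity
  choose J hJA hJu hJe using fun k : ℕ => semi_eps hC K0 ha h lam0 hf (hk k)
  obtain ⟨C0, C00, H⟩ := lemmaG (d := d) (C := C) (K := K) (B := 1 + lam + 2 * (M + K)) (by linarith) K0 (by positivity)
  set A := 3 * (C0 * (F / lam + F)) with hA
  have hB : ∀ k, GB A (J k) := fun k => by
    obtain ⟨A', hA'⟩ := hJA k
    refine (H a ha (fun _ => 1) wt_one (J k) A' (F / lam) F F0 (by positivity) hA'.W (fun x _ => hJu k x) ?_).GB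
    intro m hm x y _ hxy
    have m0 : 0 ≤ m := (abs_nonneg _).trans (hm x one_pos).1
    have hu : ∀ x, |(J k).u x| ≤ m := fun x => (hm x one_pos).1
    have hp : ∀ x, ‖(J k).p x‖ ≤ m := fun x => by simpa using (hm x one_pos).2.1
    have hq : ∀ x, ‖(J k).q x‖ ≤ m := fun x => by simpa using (hm x one_pos).2.2
    have h1 := (J k).lip hp x y
    have h2 := hf.h x y
    have h3 : ‖y - x‖ ≤ √‖y - x‖ := le_sqrt_self' (norm_nonneg _) (by linarith)
    have h4 := PP_unif h K0 (hk k) hu hp hq x y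
    set ε : ℝ := 1 / ((k : ℝ) + 1) with hε
    have e : LL (a y) ((J k).q y) - LL (a x) ((J k).q x) = (f y - f x) + lam * ((J k).u y - (J k).u x)
        - (PP M ε b r (J k).u y - PP M ε b r (J k).u x - (M + 1 / ε) * ((J k).u y - (J k).u x)) := by
      have e1 := hJe k x
      have e2 := hJe k y
      rw [← hε] at e1 e2
      linarith
    simp only [one_pow, Real.sqrt_one, one_mul]
    rw [e]
    calc _ ≤ |(f y - f x) + lam * ((J k).u y - (J k).u x)| + _ := abs_sub _ _
      _ ≤ (|f y - f x| + |lam * ((J k).u y - (J k).u x)|) + _ := by gcongr; exact abs_add_le _ _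
      _ ≤ (F * √‖y - x‖ + lam * (m * √‖y - x‖)) + 2 * (M + K) * m * √‖y - x‖ := by
        rw [abs_mul, abs_of_pos lam0]
        refine add_le_add (add_le_add h2 ?_) (h4.trans (by gcongr))
        gcongr
        exact h1.trans (by gcongr)
      _ ≤ (1 + lam + 2 * (M + K)) * (m + F) * √‖y - x‖ := by
        have p1 : 0 ≤ m * √‖y - x‖ := by positivity
        have p2 : 0 ≤ lam * F * √‖y - x‖ := by positivity
        have p3 : 0 ≤ M * F * √‖y - x‖ := by positivity
        have p4 : 0 ≤ K * F * √‖y - x‖ := by positivity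
        linarith
  set 𝒰 : Ultrafilter ℕ := hyperfilter ℕ
  have hle : (𝒰 : Filter ℕ) ≤ atTop := Nat.hyperfilter_le_atTop
  obtain ⟨V, hV, hlim⟩ := GB_lim 𝒰 J (Eventually.of_forall hB)
  refine ⟨V, ⟨_, hV⟩, fun x => le_of_tendsto (hlim x).1.norm (Eventually.of_forall fun n => hJu n x), fun x => ?_⟩
  have e0 : Tendsto (fun k : ℕ => (1 : ℝ) / (k + 1)) 𝒰 (𝓝 0) :=
    tendsto_one_div_add_atTop_nhds_zero_nat.mono_left hle
  have lH : Tendsto (fun k => HH b r x ((J k).p x) ((J k).u x)) 𝒰 (𝓝 (HH b r x (V.p x) (V.u x))) := by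
    rw [tendsto_iff_norm_sub_tendsto_zero]
    refine squeeze_zero (fun _ => norm_nonneg _) (fun n => HH_diff h x _ _ _ _) ?_
    have t1 := tendsto_iff_norm_sub_tendsto_zero.1 (hlim x).2.1
    have t2 := tendsto_iff_norm_sub_tendsto_zero.1 (hlim x).1
    simpa using (t1.add t2).const_mul M
  have l1 : Tendsto (fun k => LL (a x) ((J k).q x) + HH b r x ((J k).p x) ((J k).u x) - lam * (J k).u x) 𝒰
      (𝓝 (LL (a x) (V.q x) + HH b r x (V.p x) (V.u x) - lam * V.u x)) :=
    ((LL_tendsto1 (hlim x).2.2).add lH).sub ((hlim x).1.const_mul _)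
  refine tendsto_nhds_unique l1 ?_
  rw [tendsto_iff_norm_sub_tendsto_zero]
  have hz : Tendsto (fun k : ℕ => 1 / ((k : ℝ) + 1) * (M ^ 2 * A)) 𝒰 (𝓝 0) := by
    have := e0.mul_const (M ^ 2 * A)
    rwa [zero_mul] at this
  refine squeeze_zero (fun _ => norm_nonneg _) (fun k => ?_) hz
  have h1 := PP_HH h (hk k) (hB k).u (hB k).q x
  have h2 := hJe k x
  rw [← abs_neg] at h1
  refine le_trans (le_of_eq ?_) h1
  rw [Real.norm_eq_abs]
  congr 1
  linarith

end SL


namespace SL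
variable {d : ℕ}
open Filter Topology

/-- exponential barrier -/
noncomputable def Jet.expb (c : EE d) (P : EE d →L[ℝ] ℝ) (k s γ ρ : ℝ) : Jet d where
  u x := s - k * Real.exp (γ * (P (x - c) - ρ))
  p x := (-(k * γ) * Real.exp (γ * (P (x - c) - ρ))) • P
  q x := ((-(k * γ) * (γ * Real.exp (γ * (P (x - c) - ρ)))) • P).smulRight P
  hu x := by
    have h1 : HasFDerivAt (fun y : EE d => y - c) (ContinuousLinearMap.id ℝ (EE d)) x :=
      (hasFDerivAt_id x).sub_const c
    have h2 := ((((P.hasFDerivAt.comp x h1).sub_const ρ).const_mul γ).exp.const_mul k).const_sub s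
    refine h2.congr_fderiv ?_
    ext v; simp; ring
  hp x := by
    have h1 : HasFDerivAt (fun y : EE d => y - c) (ContinuousLinearMap.id ℝ (EE d)) x :=
      (hasFDerivAt_id x).sub_const c
    have h2 := ((((P.hasFDerivAt.comp x h1).sub_const ρ).const_mul γ).exp.const_mul (-(k * γ))).smul_const P
    refine h2.congr_fderiv ?_
    ext v w; simp; left; ring

theorem barrier2 {C M F ρ σ : ℝ} (hC : 1 ≤ C) (M0 : 0 ≤ M) (F0 : 0 < F) (σ0 : 0 ≤ σ)
    {a : EE d → Matrix (Fin d) (Fin d) ℝ} {c : EE d} (ha : ∀ x ∈ ball c ρ, EllM C (a x))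
    {u : EE d → ℝ} {p : EE d → (EE d →L[ℝ] ℝ)} {q : EE d → QQ d}
    (hc : ContinuousOn u (closedBall c ρ))
    (hu : ∀ x ∈ ball c ρ, HasFDerivAt u (p x) x) (hp : ∀ x ∈ ball c ρ, HasFDerivAt p (q x) x)
    (hb : ∀ x ∈ sphere c ρ, u x ≤ σ)
    (hS : ∀ y ∈ ball c ρ, 0 < u y → -F - M * ‖p y‖ ≤ LL (a y) (q y))
    {e : EE d} (he : ‖e‖ = 1) {x : EE d} (hx : x ∈ ball c ρ) :
    u x ≤ σ + 2 * F * Real.exp (2 * (C * (M + 1)) * ρ) * (ρ - inner ℝ e (x - c)) := by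
  have hC0 : 0 < C := by linarith
  set γ := C * (M + 1) with hγ
  have γ0 : 0 < γ := by positivity
  set k := 2 * F * Real.exp (2 * γ * ρ) / γ with hk
  have k0 : 0 < k := by positivity
  set P : EE d →L[ℝ] ℝ := In d e with hP
  have hPi : ∀ z, P z = inner ℝ e z := fun z => by simp only [hP, In]; rw [innerSL_apply_apply]
  have hPn : ‖P‖ = 1 := by simp only [hP, In]; rw [innerSL_apply_norm, he]
  have hPb : ∀ z ∈ closedBall c ρ, |P (z - c)| ≤ ρ := fun z hz => by
    have := P.le_opNorm (z - c)
    rw [hPn, one_mul, Real.norm_eq_abs] at this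
    rw [mem_closedBall, dist_eq_norm] at hz
    exact this.trans hz
  set Ψ := Jet.expb c P k (σ + k) γ ρ with hΨ
  have hlow : ∀ z ∈ closedBall c ρ, σ ≤ Ψ.u z := fun z hz => by
    have h1 := (abs_le.1 (hPb z hz)).2
    have h2 : Real.exp (γ * (P (z - c) - ρ)) ≤ 1 :=
      Real.exp_le_one_iff.2 (mul_nonpos_of_nonneg_of_nonpos γ0.le (by linarith))
    simp only [hΨ, Jet.expb]
    nlinarith
  have hup : Ψ.u x ≤ σ + 2 * F * Real.exp (2 * γ * ρ) * (ρ - inner ℝ e (x - c)) := by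
    rw [← hPi]
    have h1 := Real.add_one_le_exp (γ * (P (x - c) - ρ))
    have h2 : 2 * F * Real.exp (2 * γ * ρ) = k * γ := by rw [hk]; field_simp
    rw [h2]
    simp only [hΨ, Jet.expb]
    nlinarith
  refine le_trans ?_ hup
  by_contra! hcon
  obtain ⟨y, hy, hy1, hy2, hy3⟩ := ball_max (u := fun z => u z - Ψ.u z) (p := fun z => p z - Ψ.p z)
    (q := fun z => q z - Ψ.q z) (hc.sub Ψ.cont.continuousOn) (fun z hz => (hu z hz).sub (Ψ.hu z))
    (fun z hz => (hp z hz).sub (Ψ.hp z)) hx (fun z hz => by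
      have h1 := hb z hz
      have h2 := hlow z (sphere_subset_closedBall hz)
      linarith)
  have hyc := ball_subset_closedBall hy
  have h1 := hlow y hyc
  have h2 : 0 < u y := by linarith
  have h3 := hS y hy h2
  have h4 := LL_nonpos hC0 (ha y hy) hy3
  rw [LL_sub] at h4
  have h5 : p y = Ψ.p y := sub_eq_zero.1 hy2
  set E := Real.exp (γ * (P (y - c) - ρ)) with hE
  have E0 : 0 < E := Real.exp_pos _
  have h6 : ‖Ψ.p y‖ = k * γ * E := by
    simp only [hΨ, Jet.expb]
    rw [norm_smul, hPn, mul_one, Real.norm_eq_abs, ← hE, neg_mul, abs_neg, abs_of_pos (by positivity)]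
  have h7 : LL (a y) (Ψ.q y) ≤ -(k * γ * E) * (M + 1) := by
    have e1 : Ψ.q y = (-(k * γ) * (γ * E)) • P.smulRight P := by
      simp only [hΨ, Jet.expb]; ext v w; simp [hE]; ring
    have e2 := LL_rank1 hC0 (ha y hy) P
    rw [hPn, one_pow, mul_one] at e2
    rw [e1, LL_smul]
    have e3 : M + 1 = γ * C⁻¹ := by rw [hγ]; field_simp
    rw [e3]
    have : 0 ≤ k * γ * (γ * E) := by positivity
    nlinarith
  have h8 : Real.exp (2 * γ * ρ) * E ≥ 1 := by
    rw [hE, ← Real.exp_add]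
    refine Real.one_le_exp ?_
    have := (abs_le.1 (hPb y hyc)).1
    nlinarith
  have h9 : k * γ * E = 2 * F * (Real.exp (2 * γ * ρ) * E) := by rw [hk]; field_simp
  rw [h5, h6] at h3
  nlinarith

theorem barrier1 {C M F ρ m N : ℝ} (hC : 1 ≤ C) (M0 : 0 ≤ M) (F0 : 0 ≤ F) (ρ0 : 0 < ρ) (m0 : 0 ≤ m) (N0 : 0 < N)
    {a : EE d → Matrix (Fin d) (Fin d) ℝ} {x : EE d} (ha : ∀ x, EllM C (a x)) (J : Jet d)
    (hb : ∀ z, J.u z ≤ m)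
    (hS : ∀ y ∈ ball x ρ, 0 < J.u y → -F - M * ‖J.p y‖ + N * J.u y ≤ LL (a y) (J.q y)) :
    J.u x ≤ (F + 2 * M * m / ρ + 2 * m * (d * C) / ρ ^ 2) / N := by
  have hC0 : 0 < C := by linarith
  rw [le_div_iff₀ N0]
  rcases le_or_gt (J.u x) 0 with h0 | h0
  · have : J.u x * N ≤ 0 := mul_nonpos_of_nonpos_of_nonneg h0 N0.le
    have : 0 ≤ (F + 2 * M * m / ρ + 2 * m * (d * C) / ρ ^ 2) := by positivity
    linarith
  set s := 2 * m / ρ ^ 2 with hs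
  have s0 : 0 ≤ s := by positivity
  set w := Jet.quad x 0 0 (s • In d) (fun v w => by simp [In_symm v w]) with hw
  have hwu : ∀ z, w.u z = s / 2 * ‖z - x‖ ^ 2 := fun z => by
    simp only [hw, Jet.quad, ContinuousLinearMap.zero_apply, zero_add, smul_apply, In_self, smul_eq_mul]; ring
  obtain ⟨y, hy, hy1, hy2, hy3⟩ := (J.sub w).ball_max (c := x) (x0 := x) (ρ := ρ) (mem_ball_self ρ0) (fun z hz => by
    have hz' : ‖z - x‖ = ρ := by rw [← dist_eq_norm]; exact hz
    have e1 : w.u z = m := by rw [hwu, hz', hs]; field_simp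
    have e2 : w.u x = 0 := by rw [hwu]; simp
    have e3 := hb z
    simp only [Jet.sub]
    rw [e1, e2]
    linarith)
  have e2 : w.u x = 0 := by rw [hwu]; simp
  have e3 : 0 ≤ w.u y := by rw [hwu]; positivity
  simp only [Jet.sub] at hy1 hy2 hy3
  have h1 := hS y hy (by linarith)
  have h4 := LL_nonpos hC0 (ha y) hy3
  have h6 : w.q y = s • In d := rfl
  rw [LL_sub, h6, LL_smul] at h4
  have h5 : J.p y = w.p y := sub_eq_zero.1 hy2
  have h7 := LL_In_le hC0 (ha y)
  have hy' : ‖y - x‖ ≤ ρ := by rw [← dist_eq_norm]; exact (mem_ball.1 hy).le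
  have h8 : ‖w.p y‖ ≤ s * ρ := by
    simp only [hw, Jet.quad, zero_add]
    rw [smul_apply, norm_smul, Real.norm_eq_abs, abs_of_nonneg s0]
    gcongr
    simp only [In]; rw [innerSL_apply_norm]; exact hy'
  have h9 : s * ρ = 2 * m / ρ := by rw [hs]; field_simp
  rw [h5] at h1
  have h10 : M * ‖w.p y‖ ≤ M * (2 * m / ρ) := by rw [← h9]; gcongr
  have h11 : s * LL (a y) (In d) ≤ 2 * m * (d * C) / ρ ^ 2 := by
    calc _ ≤ s * (d * C) := by gcongr
      _ = _ := by rw [hs]; ring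
  have h12 : M * (2 * m / ρ) = 2 * M * m / ρ := by ring
  have h13 : J.u x * N ≤ N * J.u y := by rw [mul_comm]; gcongr; linarith
  linarith
end SL


namespace SL
variable {d : ℕ} {U : Type*} [Nonempty U]
open Filter Topology
set_option linter.unusedSectionVars false
set_option linter.unusedVariables false
variable {M K C F R : ℝ} {b : EE d → U → EE d} {r : EE d → U → ℝ}

theorem HH_shift (h : Co M K b r) (k : EE d → ℝ) (x : EE d) (p : EE d →L[ℝ] ℝ) (u : ℝ) :
    HH b (fun x υ => r x υ - k x) x p u = HH b r x p u - k x * u := by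
  have := inf_diff_const (f := fun υ => p (b x υ) + r x υ * u) (g := fun υ => p (b x υ) + (r x υ - k x) * u)
    (δ := 0) (c := k x * u) (bdd_of_abs fun υ => h.lin x υ p u) (fun υ => by
      rw [abs_nonpos_iff]; ring)
  rw [abs_nonpos_iff] at this
  unfold HH
  linarith

theorem HH_le (h : Co M K b r) (x : EE d) (p : EE d →L[ℝ] ℝ) {u : ℝ} (u0 : 0 ≤ u) :
    HH b r x p u ≤ M * ‖p‖ := by
  set υ := Classical.arbitrary U
  refine (ciInf_le (bdd_of_abs fun υ => h.lin x υ p u) υ).trans ?_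
  have h1 := (le_abs_self _).trans (p.le_opNorm (b x υ))
  have h2 := h.bb x υ
  have h3 := mul_nonpos_of_nonpos_of_nonneg (h.neg x υ) u0
  nlinarith [norm_nonneg p]

theorem HH_ge (h : Co M K b r) (x : EE d) (p : EE d →L[ℝ] ℝ) {u : ℝ} (u0 : u ≤ 0) :
    -(M * ‖p‖) ≤ HH b r x p u := by
  refine le_ciInf fun υ => ?_
  have h1 := (neg_le_abs _).trans (p.le_opNorm (b x υ))
  have h2 := h.bb x υ
  have h3 := mul_nonneg_of_nonpos_of_nonpos (h.neg x υ) u0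
  nlinarith [norm_nonneg p]

theorem exists_unit (hd : 1 ≤ d) (z : EE d) : ∃ e : EE d, ‖e‖ = 1 ∧ inner ℝ e z = ‖z‖ := by
  rcases eq_or_ne z 0 with rfl | hz
  · exact ⟨EuclideanSpace.single ⟨0, hd⟩ 1, by simp, by simp⟩
  · have := norm_pos_iff.2 hz
    refine ⟨‖z‖⁻¹ • z, by rw [norm_smul, norm_inv, norm_norm]; field_simp, ?_⟩
    rw [real_inner_smul_left, real_inner_self_eq_norm_sq]; field_simp

noncomputable def chi (c : EE d) (R : ℝ) (x : EE d) : ℝ := min 1 (max 0 (‖x - c‖ - R))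

theorem chi_nn (c : EE d) (R : ℝ) (x : EE d) : 0 ≤ chi c R x := le_min zero_le_one (le_max_left _ _)
theorem chi_le (c : EE d) (R : ℝ) (x : EE d) : chi c R x ≤ 1 := min_le_left _ _
theorem clamp_lip (s t : ℝ) : |min 1 (max 0 s) - min 1 (max 0 t)| ≤ |s - t| := by
  refine (abs_min_sub_min_le_max _ _ _ _).trans ?_
  rw [sub_self, abs_zero, max_eq_right (abs_nonneg _)]
  refine (abs_max_sub_max_le_max _ _ _ _).trans ?_
  rw [sub_self, abs_zero, max_eq_right (abs_nonneg _)]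
theorem chi_lip (c : EE d) (R : ℝ) (x y : EE d) : |chi c R y - chi c R x| ≤ ‖y - x‖ := by
  refine (clamp_lip _ _).trans ?_
  rw [sub_sub_sub_cancel_right]
  refine (abs_norm_sub_norm_le _ _).trans ?_
  rw [sub_sub_sub_cancel_right]

theorem pen_step (hd : 1 ≤ d) (hC : 1 ≤ C) (K0 : 0 ≤ K) {a : EE d → Matrix (Fin d) (Fin d) ℝ} (ha : Ell C K a)
    (h : Co M K b r) {f : EE d → ℝ} (hf : HB F f) (F0 : 0 < F) (c : EE d) (hR : 0 < R) {N : ℝ} (hN : 1 ≤ N) :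
    ∃ J : Jet d, (∃ A, GB A J) ∧
      (∀ x ∈ ball c R, LL (a x) (J.q x) + HH b r x (J.p x) (J.u x) - 1 / N * J.u x = f x) ∧
      ∀ κ : ℝ, 0 < κ → κ ≤ 1 → ∀ x ∈ ball c (R + κ), |J.u x| ≤
        (F + 2 * M * F / (κ / 2) + 2 * F * (d * C) / (κ / 2) ^ 2) / (κ / 2) / N +
        2 * F * Real.exp (2 * (C * (M + 1)) * (R + 1)) * (R + κ - ‖x - c‖) := by
  have M0 := h.M0
  have N0 : 0 < N := by linarith
  set k : EE d → ℝ := fun x => N ^ 2 * chi c R x with hk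
  have k0 : ∀ x, 0 ≤ k x := fun x => mul_nonneg (by positivity) (chi_nn _ _ _)
  have h' : Co (M + N ^ 2) (K + N ^ 2) b (fun x υ => r x υ - k x) := by
    refine ⟨fun x υ => (h.bb x υ).trans (by linarith [sq_nonneg N]), fun x υ => ?_, fun x υ => ?_, fun x y υ => ?_, fun x y υ => ?_⟩
    · have h1 := h.rr x υ
      have h2 : k x ≤ N ^ 2 := mul_le_of_le_one_right (by positivity) (chi_le _ _ _)
      have h3 := k0 x
      rw [abs_le] at *
      constructor <;> linarith
    · linarith [h.neg x υ, k0 x]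
    · refine (h.lb x y υ).trans ?_
      have := norm_nonneg (y - x)
      gcongr
      linarith [sq_nonneg N]
    · have h1 := h.lr x y υ
      have h2 : |k y - k x| ≤ N ^ 2 * ‖y - x‖ := by
        simp only [hk]; rw [← mul_sub, abs_mul, abs_of_nonneg (by positivity : 0 ≤ N ^ 2)]
        have := chi_lip c R x y
        gcongr
      have : r y υ - k y - (r x υ - k x) = (r y υ - r x υ) - (k y - k x) := by ring
      rw [this, add_mul]
      exact (abs_sub _ _).trans (add_le_add h1 h2)
  have ha' : Ell C (K + N ^ 2) a := ⟨ha.ell, fun x y i j => (ha.lip x y i j).trans (by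
    have := norm_nonneg (x - y)
    gcongr
    linarith [sq_nonneg N])⟩
  obtain ⟨J, hA, hu, he⟩ := semi_exist hC (by positivity) ha' h' (lam := 1 / N) (by positivity) hf
  have he' : ∀ x, LL (a x) (J.q x) + HH b r x (J.p x) (J.u x) - k x * J.u x - 1 / N * J.u x = f x := fun x => by
    rw [← he x, HH_shift h]; ring
  have hu' : ∀ x, |J.u x| ≤ N * F := fun x => (hu x).trans (le_of_eq (by field_simp))
  have chi0 : ∀ x ∈ ball c R, chi c R x = 0 := fun x hx => by
    rw [mem_ball, dist_eq_norm] at hx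
    simp only [chi]
    rw [max_eq_left (by linarith)]; simp
  refine ⟨J, hA, fun x hx => by rw [← he' x]; simp [hk, chi0 x hx], fun κ κ0 κ1 x hx => ?_⟩
  set D := (F + 2 * M * F / (κ / 2) + 2 * F * (d * C) / (κ / 2) ^ 2) / (κ / 2) with hD
  -- both signs
  have key : ∀ V : Jet d, (∀ z, V.u z ≤ N * F) →
      (∀ y, 0 < V.u y → -F - M * ‖V.p y‖ + k y * V.u y ≤ LL (a y) (V.q y)) →
      V.u x ≤ D / N + 2 * F * Real.exp (2 * (C * (M + 1)) * (R + 1)) * (R + κ - ‖x - c‖) := by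
    intro V hV hS
    obtain ⟨e, e1, e2⟩ := exists_unit hd (x - c)
    have D0 : 0 ≤ D / N := by positivity
    have hsp : ∀ z ∈ sphere c (R + κ), V.u z ≤ D / N := by
      intro z hz
      have hz' : ‖z - c‖ = R + κ := by rw [← dist_eq_norm]; exact hz
      have := barrier1 (x := z) (N := N ^ 2 * (κ / 2)) hC M0 F0.le (half_pos κ0) (by positivity : 0 ≤ N * F) (by positivity) ha.ell V hV
        (fun y hy h0 => by
          refine le_trans ?_ (hS y h0)
          have h1 : κ / 2 ≤ chi c R y := by
            have : ‖y - z‖ < κ / 2 := by rw [← dist_eq_norm]; exact hy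
            have h2 := norm_sub_norm_le (z - c) (z - y)
            have h3 : z - c - (z - y) = y - c := by abel
            rw [h3, norm_sub_rev z y, hz'] at h2
            exact le_min (by linarith) ((by linarith : κ / 2 ≤ ‖y - c‖ - R).trans (le_max_right _ _))
          simp only [hk]
          gcongr)
      refine this.trans ?_
      rw [div_le_div_iff₀ (by positivity) N0, hD]
      have p1 : 0 ≤ F * (N - 1) := mul_nonneg F0.le (by linarith)
      calc (F + 2 * M * (N * F) / (κ / 2) + 2 * (N * F) * (d * C) / (κ / 2) ^ 2) * N
          ≤ (N * F + 2 * M * (N * F) / (κ / 2) + 2 * (N * F) * (d * C) / (κ / 2) ^ 2) * N := by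
            gcongr; linarith
        _ = _ := by field_simp
    have := barrier2 hC M0 F0 D0 (fun y _ => ha.ell y) V.cont.continuousOn (fun y _ => V.hu y) (fun y _ => V.hp y) hsp
      (fun y _ h0 => le_trans (by nlinarith [k0 y]) (hS y h0)) e1 hx
    rw [e2] at this
    refine this.trans ?_
    have h1 : 0 ≤ R + κ - ‖x - c‖ := by
      rw [mem_ball, dist_eq_norm] at hx; linarith
    gcongr
  rw [abs_le']
  constructor
  · refine key J (fun z => (le_abs_self _).trans (hu' z)) fun y hy => ?_
    have h1 := he' y
    have h2 := HH_le h y (J.p y) hy.le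
    have h3 := (abs_le.1 (hf.b y)).1
    have h4 : 0 ≤ 1 / N * J.u y := by positivity
    linarith
  · have := key (J.smul (-1)) (fun z => ?_) fun y hy => ?_
    · simpa [Jet.smul] using this
    · simp only [Jet.smul]
      rw [neg_one_mul]
      exact (neg_le_abs _).trans (hu' z)
    · simp only [Jet.smul, neg_one_mul, LL_smul, norm_smul, norm_neg, norm_one, one_mul] at hy ⊢
      have h1 := he' y
      have h2 := HH_ge h y (J.p y) (by linarith : J.u y ≤ 0)
      have h3 := (abs_le.1 (hf.b y)).2
      have h4 : 0 ≤ 1 / N * (-J.u y) := by positivity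
      linarith

end SL


namespace SL
variable {d : ℕ} {U : Type*} [Nonempty U]
open Filter Topology
set_option linter.unusedSectionVars false
set_option linter.unusedVariables false
variable {M K C F R : ℝ} {b : EE d → U → EE d} {r : EE d → U → ℝ}

theorem HH_xdiff (h : Co M K b r) (x y : EE d) (p p' : EE d →L[ℝ] ℝ) (u u' : ℝ) :
    |HH b r y p u - HH b r x p' u'| ≤ M * (‖p - p'‖ + |u - u'|) + K * ‖y - x‖ * (‖p'‖ + |u'|) := by
  refine inf_diff (bdd_of_abs fun υ => h.lin y υ p u) fun υ => ?_
  have h1 := h.lin y υ (p - p') (u - u')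
  have h2 : |p' (b y υ - b x υ)| ≤ K * ‖y - x‖ * ‖p'‖ := by
    refine (p'.le_opNorm _).trans ?_
    rw [mul_comm]
    have := h.lb x y υ
    gcongr
  have h3 : |(r y υ - r x υ) * u'| ≤ K * ‖y - x‖ * |u'| := by
    rw [abs_mul]
    have := h.lr x y υ
    gcongr
  have e : p (b y υ) + r y υ * u - (p' (b x υ) + r x υ * u') =
      ((p - p') (b y υ) + r y υ * (u - u')) + p' (b y υ - b x υ) + (r y υ - r x υ) * u' := by
    rw [ContinuousLinearMap.sub_apply, map_sub]; ring
  rw [e]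
  refine (abs_add_three _ _ _).trans ?_
  rw [mul_add]
  linarith

noncomputable def del (c : EE d) (R : ℝ) (x : EE d) : ℝ := min 1 (max 0 (R - ‖x - c‖))

theorem del_wt (c : EE d) (R : ℝ) : Wt (del c R) := by
  refine ⟨fun x y => (clamp_lip _ _).trans ?_, fun x => le_min zero_le_one (le_max_left _ _), fun x => min_le_left _ _⟩
  rw [sub_sub_sub_cancel_left]
  refine (abs_norm_sub_norm_le _ _).trans ?_
  rw [sub_sub_sub_cancel_right, norm_sub_rev]

theorem del_pos (c : EE d) (R : ℝ) (x : EE d) : 0 < del c R x ↔ x ∈ ball c R := by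
  rw [mem_ball, dist_eq_norm, del]; simp

theorem interior_est (hC : 1 ≤ C) (K0 : 0 ≤ K) (M0 : 0 ≤ M) :
    ∃ C0 > 0, ∀ (a : EE d → Matrix (Fin d) (Fin d) ℝ) (b : EE d → U → EE d) (r : EE d → U → ℝ) (f : EE d → ℝ)
      (F : ℝ) (c : EE d) (R lam : ℝ) (J : Jet d) (A U0 : ℝ),
      Ell C K a → Co M K b r → HB F f → 0 ≤ lam → lam ≤ 1 → GB A J → 0 ≤ U0 →
      (∀ x ∈ ball c R, |J.u x| ≤ U0) →
      (∀ x ∈ ball c R, LL (a x) (J.q x) + HH b r x (J.p x) (J.u x) - lam * J.u x = f x) →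
      W (del c R) (C0 * (U0 + F)) J := by
  obtain ⟨C0, C00, H⟩ := lemmaG (d := d) (C := C) (K := K) (B := 3 + 6 * M + 2 * K) (by linarith) K0 (by positivity)
  refine ⟨C0, C00, fun a b r f F c R lam J A U0 ha h hf l0 l1 hA U00 hU he => ?_⟩
  have hδ := del_wt c R
  have A0 := hA.nn
  have F0 := hf.nn
  refine H a ha (del c R) hδ J A U0 F hf.nn U00 ?_ (fun x hx => hU x ((del_pos _ _ _).1 hx)) ?_
  · refine ⟨fun x _ => hA.u x, fun x _ => ?_, fun x _ => ?_, fun x y _ _ => ?_⟩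
    · have h1 := hA.p x
      have h2 := hδ.le x
      have h3 := hδ.nn x
      calc _ ≤ 1 * A := by gcongr
        _ = _ := one_mul _
    · have h1 := hA.q x
      have h2 : del c R x ^ 2 ≤ 1 := pow_le_one₀ (hδ.nn x) (hδ.le x)
      calc _ ≤ 1 * A := by gcongr
        _ = _ := one_mul _
    · have h1 := hA.h x y
      have h2 : del c R x ^ 2 * √(del c R x) ≤ 1 :=
        mul_le_one₀ (pow_le_one₀ (hδ.nn x) (hδ.le x)) (Real.sqrt_nonneg _) (Real.sqrt_le_one.2 (hδ.le x))
      calc _ ≤ 1 * (A * √‖y - x‖) := by gcongr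
        _ = _ := one_mul _
  · intro m hm x y hx hxy
    set D := del c R x with hD
    have D1 : D ≤ 1 := hδ.le x
    have m0 : 0 ≤ m := (abs_nonneg _).trans (hm x hx).1
    have hz : ∀ z ∈ closedBall x (D / 2), D / 2 ≤ del c R z := fun z hz => by
      rw [mem_closedBall, dist_eq_norm] at hz
      exact hδ.half hz
    have hp : ∀ z ∈ closedBall x (D / 2), ‖J.p z‖ ≤ 2 * m / D := fun z hz' => by
      have h1 := hz z hz'
      have h2 := (hm z (by linarith)).2.1
      rw [le_div_iff₀ hx]
      nlinarith [norm_nonneg (J.p z)]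
    have hq : ∀ z ∈ closedBall x (D / 2), ‖J.q z‖ ≤ 4 * m / D ^ 2 := fun z hz' => by
      have h1 := hz z hz'
      have h2 := (hm z (by linarith)).2.2
      rw [le_div_iff₀ (by positivity)]
      have h3 : (D / 2) ^ 2 ≤ del c R z ^ 2 := by gcongr
      nlinarith [norm_nonneg (J.q z)]
    have hxm : x ∈ closedBall x (D / 2) := mem_closedBall_self (by positivity)
    have hym : y ∈ closedBall x (D / 2) := by rw [mem_closedBall, dist_eq_norm]; exact hxy
    have lu : |J.u y - J.u x| ≤ 2 * m / D * ‖y - x‖ :=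
      Convex.norm_image_sub_le_of_norm_hasFDerivWithin_le (𝕜 := ℝ) (fun z _ => (J.hu z).hasFDerivWithinAt) hp
        (convex_closedBall x _) hxm hym
    have lp : ‖J.p y - J.p x‖ ≤ 4 * m / D ^ 2 * ‖y - x‖ :=
      Convex.norm_image_sub_le_of_norm_hasFDerivWithin_le (𝕜 := ℝ) (fun z _ => (J.hp z).hasFDerivWithinAt) hq
        (convex_closedBall x _) hxm hym
    have hyb : y ∈ ball c R := (del_pos _ _ _).1 (by have := hz y hym; linarith)
    have hxb : x ∈ ball c R := (del_pos _ _ _).1 hx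
    set t := ‖y - x‖ with ht
    have t0 : 0 ≤ t := norm_nonneg _
    have ts : t ≤ √t := le_sqrt_self' t0 (by linarith)
    have h1 := HH_xdiff h x y (J.p y) (J.p x) (J.u y) (J.u x)
    have h2 := hf.h x y
    have h3 : ‖J.p x‖ ≤ m / D := by
      rw [le_div_iff₀ hx, mul_comm]; exact (hm x hx).2.1
    have h4 := (hm x hx).1
    have e : LL (a y) (J.q y) - LL (a x) (J.q x) = (f y - f x) - (HH b r y (J.p y) (J.u y) - HH b r x (J.p x) (J.u x))
        + lam * (J.u y - J.u x) := by
      rw [← he x hxb, ← he y hyb]; ring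
    have h5 : |LL (a y) (J.q y) - LL (a x) (J.q x)| ≤ F * √t + (M * (4 * m / D ^ 2 * t + 2 * m / D * t) + K * t * (m / D + m))
        + 1 * (2 * m / D * t) := by
      rw [e]
      refine (abs_add_le _ _).trans (add_le_add ((abs_sub _ _).trans (add_le_add h2 (h1.trans ?_))) ?_)
      · gcongr
      · rw [abs_mul, abs_of_nonneg l0]; gcongr
    have h6 : √D ≤ 1 := Real.sqrt_le_one.2 D1
    calc D ^ 2 * √D * |LL (a y) (J.q y) - LL (a x) (J.q x)|
        ≤ D ^ 2 * 1 * (F * √t + (M * (4 * m / D ^ 2 * t + 2 * m / D * t) + K * t * (m / D + m)) + 1 * (2 * m / D * t)) := by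
          gcongr
      _ = D ^ 2 * (F * √t) + (M * (4 * m + 2 * m * D) + K * (m * D + m * D ^ 2) + 2 * m * D) * t := by
          field_simp; ring
      _ ≤ 1 ^ 2 * (F * √t) + (M * (4 * m + 2 * m * 1) + K * (m * 1 + m * 1 ^ 2) + 2 * m * 1) * √t := by
          gcongr
      _ ≤ (3 + 6 * M + 2 * K) * (m + F) * √t := by
          have p1 : 0 ≤ m * √t := by positivity
          have p2 : 0 ≤ F * √t := by positivity
          have p3 : 0 ≤ M * F * √t := by positivity
          have p4 : 0 ≤ K * F * √t := by positivity
          linarith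

theorem pen_exist (hd : 1 ≤ d) (hC : 1 ≤ C) (K0 : 0 ≤ K) {a : EE d → Matrix (Fin d) (Fin d) ℝ} (ha : Ell C K a)
    (h : Co M K b r) {f : EE d → ℝ} (hf : HB F f) (F0 : 0 < F) (c : EE d) (hR : 0 < R) :
    ∃ (u : EE d → ℝ) (p : EE d → (EE d →L[ℝ] ℝ)) (q : EE d → QQ d), ∃ Q : ℝ, ContinuousOn q (ball c R) ∧
      ∀ x ∈ ball c R, HasFDerivAt u (p x) x ∧ HasFDerivAt p (q x) x ∧
      LL (a x) (q x) + HH b r x (p x) (u x) = f x ∧ |u x| ≤ Q * (R - ‖x - c‖) := by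
  have M0 := h.M0
  have hN : ∀ n : ℕ, (1 : ℝ) ≤ n + 1 := fun n => by have : (0 : ℝ) ≤ n := n.cast_nonneg; linarith
  choose J hA he hs using fun n : ℕ => pen_step hd hC K0 ha h hf F0 c hR (hN n)
  set Q := 2 * F * Real.exp (2 * (C * (M + 1)) * (R + 1)) with hQ
  have Q0 : 0 ≤ Q := by positivity
  set Dk : ℝ → ℝ := fun κ => (F + 2 * M * F / (κ / 2) + 2 * F * (d * C) / (κ / 2) ^ 2) / (κ / 2) with hDk
  set U0 := Dk 1 + Q * (R + 1) with hU0
  have D10 : 0 ≤ Dk 1 := by simp only [hDk]; positivity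
  have U00 : 0 ≤ U0 := by positivity
  have hJU : ∀ n, ∀ x ∈ ball c R, |(J n).u x| ≤ U0 := fun n x hx => by
    refine (hs n 1 one_pos le_rfl x (ball_subset_ball (by linarith) hx)).trans ?_
    refine add_le_add (div_le_self D10 (hN n)) ?_
    gcongr
    linarith [norm_nonneg (x - c)]
  obtain ⟨C0, C00, H⟩ := interior_est (d := d) (U := U) hC K0 M0
  set A := C0 * (U0 + F) with hAd
  have A0 : 0 ≤ A := by positivity
  have hW : ∀ n, W (del c R) A (J n) := fun n => by
    obtain ⟨A', hA'⟩ := hA n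
    exact H a b r f F c R (1 / (n + 1)) (J n) A' U0 ha h hf (by have := hN n; positivity)
      ((div_le_one (by have := hN n; positivity)).2 (hN n)) hA' U00 (hJU n) (he n)
  have hδ := del_wt c R
  have hloc : ∀ x ∈ ball c R, ∀ n, |(J n).u x| ≤ A / (del c R x ^ 2 * √(del c R x)) ∧
      ‖(J n).p x‖ ≤ A / (del c R x ^ 2 * √(del c R x)) ∧ ‖(J n).q x‖ ≤ A / (del c R x ^ 2 * √(del c R x)) ∧
      ∀ y, ‖y - x‖ ≤ del c R x / 2 → ‖(J n).q y - (J n).q x‖ ≤ A / (del c R x ^ 2 * √(del c R x)) * √‖y - x‖ := by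
    intro x hx n
    have h0 := (del_pos c R x).2 hx
    have h1 := hδ.le x
    set D := del c R x
    have s0 := Real.sqrt_pos.2 h0
    have s1 : √D ≤ 1 := Real.sqrt_le_one.2 h1
    have d2 : D ^ 2 * √D ≤ D ^ 2 := mul_le_of_le_one_right (by positivity) s1
    have d1 : D ^ 2 ≤ D := by nlinarith
    refine ⟨?_, ?_, ?_, fun y hy => ?_⟩
    · rw [le_div_iff₀ (by positivity)]
      have := (hW n).u x h0
      nlinarith [abs_nonneg ((J n).u x)]
    · rw [le_div_iff₀ (by positivity)]
      have := (hW n).p x h0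
      nlinarith [norm_nonneg ((J n).p x)]
    · rw [le_div_iff₀ (by positivity)]
      have := (hW n).q x h0
      nlinarith [norm_nonneg ((J n).q x)]
    · rw [div_mul_eq_mul_div, le_div_iff₀ (by positivity), mul_comm]
      exact (hW n).h x y h0 hy
  set 𝒰 : Ultrafilter ℕ := hyperfilter ℕ
  have hle : (𝒰 : Filter ℕ) ≤ atTop := Nat.hyperfilter_le_atTop
  obtain ⟨u, p, q, hlim⟩ := compact_lim 𝒰 J (ball c R) isOpen_ball (fun x hx =>
    ⟨del c R x / 2, half_pos ((del_pos c R x).2 hx), _, Eventually.of_forall (hloc x hx)⟩)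
  have e0 : Tendsto (fun k : ℕ => (1 : ℝ) / (k + 1)) 𝒰 (𝓝 0) :=
    tendsto_one_div_add_atTop_nhds_zero_nat.mono_left hle
  refine ⟨u, p, q, Q, fun x hx => ContinuousAt.continuousWithinAt ?_, fun x hx => ⟨(hlim x hx).1, (hlim x hx).2.1, ?_, ?_⟩⟩
  · have h0 := half_pos ((del_pos c R x).2 hx)
    rw [ContinuousAt, tendsto_iff_norm_sub_tendsto_zero]
    have l : Tendsto (fun y => A / (del c R x ^ 2 * √(del c R x)) * √‖y - x‖) (𝓝 x) (𝓝 0) := by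
      have : Continuous fun y : EE d => A / (del c R x ^ 2 * √(del c R x)) * √‖y - x‖ := by fun_prop
      simpa using this.tendsto x
    refine squeeze_zero' (Eventually.of_forall fun _ => norm_nonneg _) ?_ l
    filter_upwards [closedBall_mem_nhds x h0, isOpen_ball.mem_nhds hx] with y hy hyb
    rw [mem_closedBall, dist_eq_norm] at hy
    exact le_of_tendsto ((hlim y hyb).2.2.2.2.sub (hlim x hx).2.2.2.2).norm
      (Eventually.of_forall fun n => (hloc x hx n).2.2.2 y hy)
  · obtain ⟨-, -, lu, lp, lq⟩ := hlim x hx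
    have lH : Tendsto (fun k => HH b r x ((J k).p x) ((J k).u x)) 𝒰 (𝓝 (HH b r x (p x) (u x))) := by
      rw [tendsto_iff_norm_sub_tendsto_zero]
      refine squeeze_zero (fun _ => norm_nonneg _) (fun n => HH_diff h x _ _ _ _) ?_
      have t1 := tendsto_iff_norm_sub_tendsto_zero.1 lp
      have t2 := tendsto_iff_norm_sub_tendsto_zero.1 lu
      simpa using (t1.add t2).const_mul M
    have l1 := ((LL_tendsto1 (A := a x) lq).add lH).sub (e0.mul lu)
    simp only [zero_mul, sub_zero] at l1
    refine tendsto_nhds_unique l1 ?_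
    refine tendsto_const_nhds.congr fun n => (he n x hx).symm
  · obtain ⟨-, -, lu, lp, lq⟩ := hlim x hx
    have hκ : ∀ κ : ℝ, 0 < κ → κ ≤ 1 → |u x| ≤ Q * (R + κ - ‖x - c‖) := fun κ κ0 κ1 => by
      have l : Tendsto (fun n : ℕ => Dk κ * (1 / ((n : ℝ) + 1)) + Q * (R + κ - ‖x - c‖)) 𝒰 (𝓝 (Q * (R + κ - ‖x - c‖))) := by
        simpa using (e0.const_mul (Dk κ)).add_const (Q * (R + κ - ‖x - c‖))
      refine le_of_tendsto_of_tendsto lu.norm l (Eventually.of_forall fun n => ?_)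
      have := hs n κ κ0 κ1 x (ball_subset_ball (by linarith) hx)
      simp only [Real.norm_eq_abs, mul_one_div]
      exact this
    have l : Tendsto (fun κ : ℝ => Q * (R + κ - ‖x - c‖)) (𝓝[>] 0) (𝓝 (Q * (R - ‖x - c‖))) := by
      have : Continuous fun κ : ℝ => Q * (R + κ - ‖x - c‖) := by fun_prop
      simpa using (this.tendsto 0).mono_left nhdsWithin_le_nhds
    refine ge_of_tendsto l ?_
    filter_upwards [Ioc_mem_nhdsGT (one_pos (α := ℝ))] with κ hk
    exact hκ κ hk.1 hk.2
end SL


namespace SL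
variable {d : ℕ} {U : Type*} [Nonempty U]
open Filter Topology
set_option linter.unusedSectionVars false
set_option linter.unusedVariables false
variable {M K C F R : ℝ} {b : EE d → U → EE d} {r : EE d → U → ℝ}

theorem Gop_eq {a : EE d → Matrix (Fin d) (Fin d) ℝ} {φ : EE d → ℝ} {p : EE d → (EE d →L[ℝ] ℝ)} {Q : QQ d}
    {Ω : Set (EE d)} (hΩ : IsOpen Ω) {x : EE d} (hx : x ∈ Ω) (hu : ∀ z ∈ Ω, HasFDerivAt φ (p z) z)
    (hp : HasFDerivAt p Q x) : Gop a b r φ x = LL (a x) Q + HH b r x (p x) (φ x) := by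
  have h1 : ∀ i j, sdv φ x i j = Q (EuclideanSpace.single i 1) (EuclideanSpace.single j 1) := by
    intro i j
    have e : (fun y => fderiv ℝ φ y (EuclideanSpace.single j 1)) =ᶠ[𝓝 x] fun y => p y (EuclideanSpace.single j 1) := by
      filter_upwards [hΩ.mem_nhds hx] with z hz
      rw [(hu z hz).fderiv]
    have h2 : HasFDerivAt (fun y => p y (EuclideanSpace.single j 1))
        ((ContinuousLinearMap.apply ℝ ℝ (EuclideanSpace.single j (1 : ℝ))).comp Q) x :=
      (ContinuousLinearMap.apply ℝ ℝ (EuclideanSpace.single j (1 : ℝ))).hasFDerivAt.comp x hp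
    unfold sdv
    rw [e.fderiv_eq, h2.fderiv]
    simp
  have h3 : ∀ v : EE d, inner ℝ v (gradient φ x) = p x v := fun v => by
    rw [gradient, real_inner_comm, InnerProductSpace.toDual_symm_apply, (hu x hx).fderiv]
  simp only [Gop, LL, HH, h1, h3]

theorem C2_of {φ : EE d → ℝ} {p : EE d → (EE d →L[ℝ] ℝ)} {q : EE d → QQ d} {Ω : Set (EE d)} (hΩ : IsOpen Ω)
    (hu : ∀ z ∈ Ω, HasFDerivAt φ (p z) z) (hp : ∀ z ∈ Ω, HasFDerivAt p (q z) z) (hq : ContinuousOn q Ω) :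
    ContDiffOn ℝ 2 φ Ω := by
  have hp1 : ContDiffOn ℝ 1 p Ω := by
    rw [show (1 : WithTop ℕ∞) = 0 + 1 by simp, contDiffOn_succ_iff_fderiv_of_isOpen hΩ]
    refine ⟨fun z hz => (hp z hz).differentiableAt.differentiableWithinAt, by simp, ?_⟩
    rw [contDiffOn_zero]
    exact hq.congr fun z hz => (hp z hz).fderiv
  rw [show (2 : WithTop ℕ∞) = 1 + 1 by norm_num, contDiffOn_succ_iff_fderiv_of_isOpen hΩ]
  refine ⟨fun z hz => (hu z hz).differentiableAt.differentiableWithinAt, by simp, ?_⟩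
  exact hp1.congr fun z hz => (hu z hz).fderiv

theorem C2_to {φ : EE d → ℝ} {Ω : Set (EE d)} (hΩ : IsOpen Ω) (h : ContDiffOn ℝ 2 φ Ω) :
    (∀ z ∈ Ω, HasFDerivAt φ (fderiv ℝ φ z) z) ∧ ∀ z ∈ Ω, HasFDerivAt (fderiv ℝ φ) (fderiv ℝ (fderiv ℝ φ) z) z := by
  have h1 := h.fderiv_of_isOpen hΩ (m := 1) (by norm_num)
  exact ⟨fun z hz => ((h.differentiableOn (by norm_num)).differentiableAt (hΩ.mem_nhds hz)).hasFDerivAt,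
    fun z hz => ((h1.differentiableOn (by norm_num)).differentiableAt (hΩ.mem_nhds hz)).hasFDerivAt⟩

theorem compare (hd : 1 ≤ d) (hC : 1 ≤ C) {a : EE d → Matrix (Fin d) (Fin d) ℝ} (ha : ∀ x, EllM C (a x))
    (h : Co M K b r) {f : EE d → ℝ} {c : EE d} (hR : 0 < R) {u v : EE d → ℝ}
    (u2 : ContDiffOn ℝ 2 u (ball c R)) (uc : ContinuousOn u (closedBall c R))
    (ue : ∀ x ∈ ball c R, Gop a b r u x = f x) (ub : ∀ x ∈ sphere c R, u x = 0)
    (v2 : ContDiffOn ℝ 2 v (ball c R)) (vc : ContinuousOn v (closedBall c R))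
    (ve : ∀ x ∈ ball c R, Gop a b r v x = f x) (vb : ∀ x ∈ sphere c R, v x = 0) {x : EE d} (hx : x ∈ ball c R) :
    u x ≤ v x := by
  obtain ⟨u1, u3⟩ := C2_to isOpen_ball u2
  obtain ⟨v1, v3⟩ := C2_to isOpen_ball v2
  obtain ⟨e, e1, e2⟩ := exists_unit hd (x - c)
  have key : ∀ F : ℝ, 0 < F → u x - v x ≤ 0 + 2 * F * Real.exp (2 * (C * (M + 1)) * R) * (R - inner ℝ e (x - c)) := by
    intro F F0
    refine barrier2 (a := a) (u := fun z => u z - v z) (p := fun z => fderiv ℝ u z - fderiv ℝ v z)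
      (q := fun z => fderiv ℝ (fderiv ℝ u) z - fderiv ℝ (fderiv ℝ v) z) hC h.M0 F0 le_rfl (fun z _ => ha z)
      (uc.sub vc) (fun z hz => (u1 z hz).sub (v1 z hz)) (fun z hz => (u3 z hz).sub (v3 z hz))
      (fun z hz => by simp [ub z hz, vb z hz]) (fun y hy hpos => ?_) e1 hx
    have q1 := ue y hy
    have q2 := ve y hy
    rw [Gop_eq isOpen_ball hy u1 (u3 y hy)] at q1
    rw [Gop_eq isOpen_ball hy v1 (v3 y hy)] at q2
    rw [LL_sub]
    set P := fderiv ℝ u y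
    set P' := fderiv ℝ v y
    have q3 : HH b r y P (u y) - M * ‖P - P'‖ ≤ HH b r y P' (v y) := by
      refine le_ciInf fun υ => ?_
      have s1 : HH b r y P (u y) ≤ P (b y υ) + r y υ * u y := ciInf_le (bdd_of_abs fun υ => h.lin y υ P (u y)) υ
      have s2 := (le_abs_self _).trans ((P - P').le_opNorm (b y υ))
      have s3 := h.bb y υ
      have s4 := mul_nonpos_of_nonpos_of_nonneg (h.neg y υ) hpos.le
      rw [ContinuousLinearMap.sub_apply] at s2
      nlinarith [norm_nonneg (P - P')]
    linarith
  by_contra! hc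
  set E := 2 * Real.exp (2 * (C * (M + 1)) * R) * (R - inner ℝ e (x - c)) with hE
  have E0 : 0 < E := by
    have : 0 < R - inner ℝ e (x - c) := by
      rw [e2]; rw [mem_ball, dist_eq_norm] at hx; linarith
    positivity
  have := key ((u x - v x) / (2 * E)) (div_pos (by linarith) (by positivity))
  have e3 : 2 * ((u x - v x) / (2 * E)) * Real.exp (2 * (C * (M + 1)) * R) * (R - inner ℝ e (x - c))
      = (u x - v x) / (2 * E) * E := by rw [hE]; ring
  have e4 : (u x - v x) / (2 * E) * E = (u x - v x) / 2 := by field_simp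
  rw [e3, e4] at this
  linarith

noncomputable def ret (c : EE d) (R : ℝ) (x : EE d) : EE d := c + (R / max R ‖x - c‖) • (x - c)

theorem ret_mem (c : EE d) (hR : 0 < R) (x : EE d) : ret c R x ∈ closedBall c R := by
  have h1 : 0 < max R ‖x - c‖ := hR.trans_le (le_max_left _ _)
  rw [mem_closedBall, dist_eq_norm, ret, add_sub_cancel_left, norm_smul, Real.norm_eq_abs,
    abs_of_pos (by positivity), div_mul_eq_mul_div, div_le_iff₀ h1]
  gcongr
  exact le_max_right _ _

theorem ret_self {c : EE d} (hR : 0 < R) {x : EE d} (hx : x ∈ closedBall c R) : ret c R x = x := by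
  rw [mem_closedBall, dist_eq_norm] at hx
  rw [ret, max_eq_left hx, div_self hR.ne', one_smul, add_sub_cancel]

theorem ret_lip (c : EE d) (hR : 0 < R) (x y : EE d) : ‖ret c R y - ret c R x‖ ≤ 2 * ‖y - x‖ := by
  set m := max R ‖x - c‖ with hm
  set n := max R ‖y - c‖ with hn
  have m0 : 0 < m := hR.trans_le (le_max_left _ _)
  have n0 : 0 < n := hR.trans_le (le_max_left _ _)
  have e : ret c R y - ret c R x = (R / n) • (y - x) + (R / n - R / m) • (x - c) := by
    simp only [ret, ← hm, ← hn, sub_smul, smul_sub]; abel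
  have h1 : R / n ≤ 1 := (div_le_one n0).2 (le_max_left _ _)
  have h2 : |m - n| ≤ ‖y - x‖ := by
    refine (abs_max_sub_max_le_max _ _ _ _).trans ?_
    rw [sub_self, abs_zero, max_eq_right (abs_nonneg _)]
    refine (abs_norm_sub_norm_le _ _).trans ?_
    rw [sub_sub_sub_cancel_right, norm_sub_rev]
  have h3 : |R / n - R / m| * ‖x - c‖ ≤ ‖y - x‖ := by
    have e2 : R / n - R / m = R / n * (m - n) / m := by field_simp
    rw [e2, abs_div, abs_mul, abs_of_pos m0, abs_of_pos (by positivity : 0 < R / n), div_mul_eq_mul_div, div_le_iff₀ m0]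
    have h4 : ‖x - c‖ ≤ m := le_max_right _ _
    calc _ ≤ 1 * ‖y - x‖ * m := by gcongr
      _ = _ := by rw [one_mul]
  rw [e]
  refine (norm_add_le _ _).trans ?_
  rw [norm_smul, norm_smul, Real.norm_eq_abs, Real.norm_eq_abs, abs_of_pos (by positivity : 0 < R / n)]
  have : R / n * ‖y - x‖ ≤ ‖y - x‖ := mul_le_of_le_one_left (norm_nonneg _) h1
  linarith

theorem ret_comp (c : EE d) (hR : 0 < R) {F : Type*} [NormedAddCommGroup F] {g : EE d → F} {k : NNReal} {K : ℝ} (hk : 2 * (k : ℝ) ≤ K)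
    (hg : LipschitzOnWith k g (closedBall c R)) (x y : EE d) :
    ‖g (ret c R y) - g (ret c R x)‖ ≤ K * ‖y - x‖ := by
  have h1 := hg.dist_le_mul _ (ret_mem c hR y) _ (ret_mem c hR x)
  rw [dist_eq_norm, dist_eq_norm] at h1
  have h2 := ret_lip c hR x y
  calc _ ≤ _ := h1
    _ ≤ (k : ℝ) * (2 * ‖y - x‖) := by gcongr
    _ = 2 * (k : ℝ) * ‖y - x‖ := by ring
    _ ≤ _ := by gcongr

theorem main_aux (hd : 1 ≤ d) (hC : 1 ≤ C) (K0 : 0 ≤ K) {a : EE d → Matrix (Fin d) (Fin d) ℝ} (ha : Ell C K a)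
    (h : Co M K b r) {f : EE d → ℝ} (hf : HB F f) (F0 : 0 < F) (c : EE d) (hR : 0 < R) :
    ∃ φ : EE d → ℝ, (ContDiffOn ℝ 2 φ (ball c R) ∧ ContinuousOn φ (closedBall c R) ∧
        (∀ x ∈ ball c R, Gop a b r φ x = f x) ∧ (∀ x ∈ sphere c R, φ x = 0)) ∧
      ∀ φ' : EE d → ℝ,
        (ContDiffOn ℝ 2 φ' (ball c R) ∧ ContinuousOn φ' (closedBall c R) ∧
          (∀ x ∈ ball c R, Gop a b r φ' x = f x) ∧ (∀ x ∈ sphere c R, φ' x = 0)) →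
        ∀ x ∈ closedBall c R, φ' x = φ x := by
  classical
  obtain ⟨u, p, q, Q, qc, H⟩ := pen_exist hd hC K0 ha h hf F0 c hR
  set φ : EE d → ℝ := fun x => if x ∈ ball c R then u x else 0 with hφ
  have φu : ∀ x ∈ ball c R, φ x = u x := fun x hx => by simp only [hφ, if_pos hx]
  have φs : ∀ x ∈ sphere c R, φ x = 0 := fun x hx => by
    have : x ∉ ball c R := by rw [mem_sphere] at hx; rw [mem_ball]; linarith
    simp only [hφ, if_neg this]
  have hu : ∀ x ∈ ball c R, HasFDerivAt φ (p x) x := fun x hx =>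
    (H x hx).1.congr_of_eventuallyEq (by filter_upwards [isOpen_ball.mem_nhds hx] with z hz using φu z hz)
  have hp : ∀ x ∈ ball c R, HasFDerivAt p (q x) x := fun x hx => (H x hx).2.1
  have φ2 : ContDiffOn ℝ 2 φ (ball c R) := C2_of isOpen_ball hu hp qc
  have φc : ContinuousOn φ (closedBall c R) := fun x hx => by
    rcases (mem_closedBall.1 hx).lt_or_eq with hlt | heq
    · exact (hu x hlt).continuousAt.continuousWithinAt
    · rw [ContinuousWithinAt, φs x heq]
      have l : Tendsto (fun z => Q * (R - ‖z - c‖)) (𝓝[closedBall c R] x) (𝓝 0) := by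
        have : Continuous fun z : EE d => Q * (R - ‖z - c‖) := by fun_prop
        have l := (this.tendsto x).mono_left (nhdsWithin_le_nhds (s := closedBall c R))
        rwa [← dist_eq_norm, heq, sub_self, mul_zero] at l
      refine squeeze_zero_norm' ?_ l
      filter_upwards [self_mem_nhdsWithin] with z hz
      rcases (mem_closedBall.1 hz).lt_or_eq with hzl | hze
      · rw [φu z hzl, Real.norm_eq_abs]; exact (H z hzl).2.2.2
      · rw [φs z hze, ← dist_eq_norm, hze]; simp
  have φe : ∀ x ∈ ball c R, Gop a b r φ x = f x := fun x hx => by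
    rw [Gop_eq isOpen_ball hx hu (hp x hx), φu x hx]
    exact (H x hx).2.2.1
  refine ⟨φ, ⟨φ2, φc, φe, φs⟩, ?_⟩
  rintro ψ ⟨ψ2, ψc, ψe, ψs⟩ x hx
  rcases (mem_closedBall.1 hx).lt_or_eq with hlt | heq
  · exact le_antisymm (compare hd hC ha.ell h hR ψ2 ψc ψe ψs φ2 φc φe φs hlt)
      (compare hd hC ha.ell h hR φ2 φc φe φs ψ2 ψc ψe ψs hlt)
  · rw [φs x heq, ψs x heq]

end SL

theorem semilinear_dirichlet_problem_solvable
    {d : ℕ} (hd : 1 ≤ d) {U : Type*} [MetricSpace U] [CompactSpace U] [Nonempty U]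
    (c : EuclideanSpace ℝ (Fin d)) (R : ℝ) (hR : 0 < R)
    (a : EuclideanSpace ℝ (Fin d) → Matrix (Fin d) (Fin d) ℝ)
    (b : EuclideanSpace ℝ (Fin d) → U → EuclideanSpace ℝ (Fin d))
    (r : EuclideanSpace ℝ (Fin d) → U → ℝ)
    (ha_lip : ∃ K : NNReal, ∀ i j, LipschitzOnWith K (fun x => a x i j) (closedBall c R))
    (ha_symm : ∀ x ∈ closedBall c R, (a x).IsSymm)
    (ha_ell : ∃ C : ℝ, 1 ≤ C ∧ ∀ x ∈ closedBall c R, ∀ z : EuclideanSpace ℝ (Fin d),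
      C⁻¹ * ‖z‖ ^ 2 ≤ quadForm (a x) z ∧ quadForm (a x) z ≤ C * ‖z‖ ^ 2)
    (hb_cont : ContinuousOn (fun p : EuclideanSpace ℝ (Fin d) × U => b p.1 p.2)
      (closedBall c R ×ˢ univ))
    (hr_cont : ContinuousOn (fun p : EuclideanSpace ℝ (Fin d) × U => r p.1 p.2)
      (closedBall c R ×ˢ univ))
    (hb_lip : ∃ K : NNReal, ∀ u : U, LipschitzOnWith K (fun x => b x u) (closedBall c R))
    (hr_lip : ∃ K : NNReal, ∀ u : U, LipschitzOnWith K (fun x => r x u) (closedBall c R))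
    -- the running cost is nonpositive
    (hr_nonpos : ∀ x ∈ closedBall c R, ∀ u : U, r x u ≤ 0)
    -- the Lipschitz right-hand side
    (f : EuclideanSpace ℝ (Fin d) → ℝ)
    (hf_lip : ∃ K : NNReal, LipschitzOnWith K f (closedBall c R)) :
    ∃ φ : EuclideanSpace ℝ (Fin d) → ℝ,
      (ContDiffOn ℝ 2 φ (ball c R) ∧ ContinuousOn φ (closedBall c R) ∧
        (∀ x ∈ ball c R, Gop a b r φ x = f x) ∧ (∀ x ∈ sphere c R, φ x = 0)) ∧
      ∀ φ' : EuclideanSpace ℝ (Fin d) → ℝ,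
        (ContDiffOn ℝ 2 φ' (ball c R) ∧ ContinuousOn φ' (closedBall c R) ∧
          (∀ x ∈ ball c R, Gop a b r φ' x = f x) ∧ (∀ x ∈ sphere c R, φ' x = 0)) →
        ∀ x ∈ closedBall c R, φ' x = φ x := by
  obtain ⟨ka, hka⟩ := ha_lip
  obtain ⟨C, hC, hell⟩ := ha_ell
  obtain ⟨kb, hkb⟩ := hb_lip
  obtain ⟨kr, hkr⟩ := hr_lip
  obtain ⟨kf, hkf⟩ := hf_lip
  have hcomp : IsCompact (closedBall c R ×ˢ (univ : Set U)) := (isCompact_closedBall c R).prod isCompact_univ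
  obtain ⟨Mb, hMb⟩ := hcomp.exists_bound_of_continuousOn hb_cont
  obtain ⟨Mr, hMr⟩ := hcomp.exists_bound_of_continuousOn hr_cont
  obtain ⟨Mf, hMf⟩ := (isCompact_closedBall c R).exists_bound_of_continuousOn hkf.continuousOn
  have na := ka.coe_nonneg
  have nb := kb.coe_nonneg
  have nr := kr.coe_nonneg
  have nf := kf.coe_nonneg
  set K : ℝ := 2 * (ka + kb + kr + kf) with hK
  have K0 : 0 ≤ K := by positivity
  have rm := SL.ret_mem (d := d) c hR
  set π := SL.ret c R with hπ
  have ha : SL.Ell C K (fun x => a (π x)) := by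
    refine ⟨fun x => ⟨ha_symm _ (rm x), fun z => (hell _ (rm x) z).1, fun z => (hell _ (rm x) z).2⟩, fun x y i j => ?_⟩
    exact SL.ret_comp c hR (g := fun x => a x i j) (by linarith) (hka i j) y x
  have h : SL.Co (max Mb Mr) K (fun x υ => b (π x) υ) (fun x υ => r (π x) υ) := by
    refine ⟨fun x υ => (hMb (π x, υ) ⟨rm x, trivial⟩).trans (le_max_left _ _),
      fun x υ => (hMr (π x, υ) ⟨rm x, trivial⟩).trans (le_max_right _ _), fun x υ => hr_nonpos _ (rm x) υ,
      fun x y υ => ?_, fun x y υ => ?_⟩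
    · exact SL.ret_comp c hR (g := fun x => b x υ) (by linarith) (hkb υ) x y
    · exact SL.ret_comp c hR (g := fun x => r x υ) (by linarith) (hkr υ) x y
  have Mf0 : 0 ≤ Mf := (norm_nonneg _).trans (hMf _ (rm c))
  have hf : SL.HB (K + 2 * Mf + 1) (fun x => f (π x)) := by
    have hb : ∀ x, ‖f (π x)‖ ≤ Mf := fun x => hMf _ (rm x)
    refine ⟨fun x => (hb x).trans (by linarith), fun x y => ?_⟩
    refine (SL.holder_of_lip (g := fun x => f (π x)) hb (B := K) (fun x y hxy => ?_) x y).trans ?_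
    · refine (SL.ret_comp c hR (g := f) (K := K) (by linarith) hkf x y).trans ?_
      have := SL.le_sqrt_self' (norm_nonneg (y - x)) hxy
      gcongr
    · exact mul_le_mul_of_nonneg_right (by linarith) (Real.sqrt_nonneg ‖y - x‖)
  have main := SL.main_aux hd hC K0 ha h hf (by linarith) c hR
  have e1 : ∀ φ : EuclideanSpace ℝ (Fin d) → ℝ, (∀ x ∈ ball c R, Gop (fun x => a (π x)) (fun x υ => b (π x) υ)
      (fun x υ => r (π x) υ) φ x = f (π x)) ↔ ∀ x ∈ ball c R, Gop a b r φ x = f x := fun φ => by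
    refine forall₂_congr fun x hx => ?_
    simp only [Gop, hπ, SL.ret_self hR (ball_subset_closedBall hx)]
  simpa only [e1] using main
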